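/- arXiv:2205.09941 — 6 statements merged into one kernel-verified Lean document; each statement's English description precedes it below -/
import Mathlib

section
/- In a length space X, for any two distinct points x and y, the distance d(x,y) equals the infimum of lengths of rectifiable arcs with endpoints x and y. -/
open Set Metric
open scoped ENNReal

/-- A curve from `x` to `y` parameterized on `[0,1]`. -/
def IsCurveOn {X : Type*} [PseudoEMetricSpace X] (γ : ℝ → X) (x y : X) : Prop :=
  ContinuousOn γ (Set.Icc 0 1) ∧ γ 0 = x ∧ γ 1 = y

/-- The set of lengths of curves from `x` to `y`. -/
def curveLengths {X : Type*} [PseudoEMetricSpace X] (x y : X) : Set ℝ≥0∞ :=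
  {ℓ | ∃ γ : ℝ → X, IsCurveOn γ x y ∧ eVariationOn γ (Set.Icc 0 1) = ℓ}

/-- `X` is a length space if the distance between any two points equals the infimum
of lengths of curves connecting them. -/
def IsLengthSpace (X : Type*) [PseudoEMetricSpace X] : Prop :=
  ∀ x y : X, edist x y = sInf (curveLengths x y)

open Filter Topology in
theorem exists_lipschitz_reparam {X : Type*} [MetricSpace X] {x y : X} {γ : ℝ → X}
    (hγ : IsCurveOn γ x y) (hfin : eVariationOn γ (Set.Icc 0 1) ≠ ⊤) :
    ∃ g : ℝ → X, (∀ u, g u ∈ γ '' Set.Icc 0 1) ∧ g 0 = x ∧ g 1 = y ∧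
      ∀ u v, dist (g u) (g v) ≤ (eVariationOn γ (Set.Icc 0 1)).toReal * |u - v| := by
  obtain ⟨hc, h0, h1⟩ := hγ
  set s : Set ℝ := Set.Icc 0 1 with hs
  have hb : BoundedVariationOn γ s := hfin
  have hl : LocallyBoundedVariationOn γ s := hb.locallyBoundedVariationOn
  have m0 : (0 : ℝ) ∈ s := by simp [hs]
  have m1 : (1 : ℝ) ∈ s := by simp [hs]
  set V : ℝ → ℝ := variationOnFromTo γ s 0 with hV
  set L := (eVariationOn γ s).toReal with hL
  have hL0 : 0 ≤ L := ENNReal.toReal_nonneg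
  have V0 : V 0 = 0 := variationOnFromTo.self γ s 0
  have V1 : V 1 = L := by
    rw [hV, variationOnFromTo.eq_of_le γ s zero_le_one, hL, hs, Set.inter_self]
  have key : ∀ a ∈ s, ∀ b ∈ s, dist (γ a) (γ b) ≤ |V a - V b| := by
    have aux : ∀ a ∈ s, ∀ b ∈ s, a ≤ b → dist (γ a) (γ b) ≤ |V a - V b| := by
      intro a ha b hb' hab
      have e : V b - V a = variationOnFromTo γ s a b :=
        variationOnFromTo.sub_right hl m0 hb' ha
      rw [abs_sub_comm, e, variationOnFromTo.eq_of_le γ s hab, ENNReal.abs_toReal]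
      rw [dist_edist]
      exact ENNReal.toReal_mono (hl a b ha hb')
        (eVariationOn.edist_le γ ⟨ha, le_rfl, hab⟩ ⟨hb', hab, le_rfl⟩)
    intro a ha b hb'
    rcases le_total a b with h | h
    · exact aux a ha b hb' h
    · rw [dist_comm, abs_sub_comm]; exact aux b hb' a ha h
  have Vc : ContinuousOn V s := by
    intro b hb'
    have hcb : Tendsto γ (𝓝[s] b) (𝓝 (γ b)) := hc b hb'
    have l := variationOnFromTo.tendsto_left m0 hb' hl
      (hcb.mono_left (nhdsWithin_mono _ Set.inter_subset_left))
    have r := variationOnFromTo.tendsto_right m0 hb' hl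
      (hcb.mono_left (nhdsWithin_mono _ Set.inter_subset_left))
    rw [dist_self, sub_zero] at l
    rw [dist_self, add_zero] at r
    have l' : ContinuousWithinAt V (s ∩ Set.Iio b) b := l
    have r' : ContinuousWithinAt V (s ∩ Set.Ioi b) b := r
    have h3 := (l'.union r').insert
    refine h3.mono ?_
    intro z hz
    rcases lt_trichotomy z b with h | h | h
    · exact Or.inr (Or.inl ⟨hz, h⟩)
    · exact Or.inl h
    · exact Or.inr (Or.inr ⟨hz, h⟩)
  have ivt : ∀ w ∈ Set.Icc 0 L, ∃ t ∈ s, V t = w := by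
    intro w hw
    have := intermediate_value_Icc zero_le_one Vc
    rw [V0, V1] at this
    exact this hw
  have hp : ∀ u : ℝ, L * (Set.projIcc (0 : ℝ) 1 zero_le_one u : ℝ) ∈ Set.Icc 0 L := by
    intro u
    have := (Set.projIcc (0 : ℝ) 1 zero_le_one u).2
    exact ⟨mul_nonneg hL0 this.1, mul_le_of_le_one_right hL0 this.2⟩
  choose φ hφ hφV using fun u => ivt _ (hp u)
  refine ⟨fun u => γ (φ u), fun u => ⟨φ u, hφ u, rfl⟩, ?_, ?_, ?_⟩
  · have := key _ (hφ 0) _ m0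
    rw [hφV, V0, h0] at this
    simpa using this
  · have := key _ (hφ 1) _ m1
    rw [hφV, V1, h1] at this
    simpa using this
  · intro u v
    refine (key _ (hφ u) _ (hφ v)).trans ?_
    rw [hφV, hφV, ← mul_sub, abs_mul, abs_of_nonneg hL0]
    exact mul_le_mul_of_nonneg_left (Set.abs_projIcc_sub_projIcc zero_le_one) hL0

/-- Lipschitz curves with values in a compact set, with the Lipschitz constant attached. -/
def lipCurves {X : Type*} [MetricSpace X] (x y : X) (K : Set X) (L : ℝ) : Set (ℝ × (ℝ → X)) :=
  {p | p.1 ∈ Set.Icc 0 L ∧ (∀ u, p.2 u ∈ K) ∧ p.2 0 = x ∧ p.2 1 = y ∧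
    ∀ u ∈ Set.Icc (0 : ℝ) 1, ∀ v ∈ Set.Icc (0 : ℝ) 1, dist (p.2 u) (p.2 v) ≤ p.1 * |u - v|}

theorem isCompact_lipCurves {X : Type*} [MetricSpace X] (x y : X) {K : Set X} (hK : IsCompact K)
    (L : ℝ) : IsCompact (lipCurves x y K L) := by
  have hc : IsCompact ((Set.Icc 0 L) ×ˢ (Set.univ.pi fun _ : ℝ => K)) :=
    isCompact_Icc.prod (isCompact_univ_pi fun _ => hK)
  have hcl : IsClosed {p : ℝ × (ℝ → X) | p.2 0 = x ∧ p.2 1 = y ∧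
      ∀ u ∈ Set.Icc (0 : ℝ) 1, ∀ v ∈ Set.Icc (0 : ℝ) 1,
        dist (p.2 u) (p.2 v) ≤ p.1 * |u - v|} := by
    have h3 : IsClosed {p : ℝ × (ℝ → X) | ∀ u ∈ Set.Icc (0 : ℝ) 1, ∀ v ∈ Set.Icc (0 : ℝ) 1,
        dist (p.2 u) (p.2 v) ≤ p.1 * |u - v|} := by
      simp only [Set.ofPred_forall]
      exact isClosed_iInter fun u => isClosed_iInter fun _ => isClosed_iInter fun v =>
        isClosed_iInter fun _ => isClosed_le (by fun_prop) (by fun_prop)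
    exact (isClosed_eq (by fun_prop) (by fun_prop)).inter
      ((isClosed_eq (by fun_prop) (by fun_prop)).inter h3)
  have := hc.inter_right hcl
  convert this using 1
  ext p
  simp [lipCurves, and_assoc]

theorem cut_loop {X : Type*} [MetricSpace X] {x y : X} {K : Set X} {L c : ℝ}
    {h : ℝ → X} (hp : (c, h) ∈ lipCurves x y K L) {s t : ℝ} (hs : 0 ≤ s) (hst : s < t)
    (ht : t ≤ 1) (he : h s = h t) :
    ∃ h', (c * (1 - (t - s)), h') ∈ lipCurves x y K L := by
  obtain ⟨⟨hc0, hcL⟩, hK, h0, h1, hlip⟩ := hp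
  dsimp only at hc0 hcL hK h0 h1 hlip
  set a := 1 - (t - s) with ha
  have ha0 : 0 ≤ a := by linarith
  refine ⟨fun u => h (if a * u ≤ s then a * u else a * u + (t - s)), ⟨?_, ?_⟩, ?_, ?_, ?_, ?_⟩
  · exact mul_nonneg hc0 ha0
  · exact (mul_le_of_le_one_right hc0 (by linarith)).trans hcL
  · intro u; exact hK _
  · simp [hs, h0]
  · show h _ = y
    split_ifs with h2
    · have : t = 1 := by linarith
      have e : a * 1 = s := by rw [ha, this]; ring
      rw [e, he, this, h1]
    · rw [← h1]; congr 1; rw [ha]; ring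
  · have aux : ∀ u ∈ Set.Icc (0 : ℝ) 1, ∀ v ∈ Set.Icc (0 : ℝ) 1, u ≤ v →
        dist (h (if a * u ≤ s then a * u else a * u + (t - s)))
          (h (if a * v ≤ s then a * v else a * v + (t - s))) ≤ c * a * |u - v| := by
      intro u hu v hv huv
      have hau : 0 ≤ a * u := mul_nonneg ha0 hu.1
      have hauv : a * u ≤ a * v := mul_le_mul_of_nonneg_left huv ha0
      have hav : a * v ≤ a := mul_le_of_le_one_right ha0 hv.2
      have hr : c * a * |u - v| = c * (a * v - a * u) := by
        rw [abs_sub_comm, abs_of_nonneg (by linarith)]; ring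
      rw [hr]
      split_ifs with h2 h3 h3
      · refine (hlip _ ⟨by linarith, by linarith⟩ _ ⟨by linarith, by linarith⟩).trans ?_
        rw [abs_sub_comm, abs_of_nonneg (by linarith)]
      · have d1 := hlip (a * u) ⟨by linarith, by linarith⟩ s ⟨by linarith, by linarith⟩
        have d2 := hlip t ⟨by linarith, by linarith⟩ (a * v + (t - s))
          ⟨by linarith, by linarith⟩
        rw [abs_sub_comm, abs_of_nonneg (by linarith)] at d1 d2
        have d3 := dist_triangle (h (a * u)) (h s) (h (a * v + (t - s)))
        rw [← he] at d2
        have : c * (s - a * u) + c * (a * v + (t - s) - t) = c * (a * v - a * u) := by ring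
        linarith
      · linarith
      · refine (hlip _ ⟨by linarith, by linarith⟩ _ ⟨by linarith, by linarith⟩).trans ?_
        rw [abs_sub_comm, abs_of_nonneg (by linarith)]
        apply le_of_eq; ring
    intro u hu v hv
    rcases le_total u v with h2 | h2
    · exact aux u hu v hv h2
    · show dist _ _ ≤ c * a * |u - v|
      rw [dist_comm, abs_sub_comm]; exact aux v hv u hu h2

theorem exists_arc_le {X : Type*} [MetricSpace X] {x y : X} (hxy : x ≠ y) {γ : ℝ → X}
    (hγ : IsCurveOn γ x y) (hfin : eVariationOn γ (Set.Icc 0 1) ≠ ⊤) :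
    ∃ h : ℝ → X, IsCurveOn h x y ∧ Set.InjOn h (Set.Icc 0 1) ∧
      eVariationOn h (Set.Icc 0 1) ≤ eVariationOn γ (Set.Icc 0 1) := by
  obtain ⟨g, gK, g0, g1, glip⟩ := exists_lipschitz_reparam hγ hfin
  set K := γ '' Set.Icc 0 1
  have hK : IsCompact K := isCompact_Icc.image_of_continuousOn hγ.1
  set L := (eVariationOn γ (Set.Icc 0 1)).toReal with hL
  have hne : (lipCurves x y K L).Nonempty :=
    ⟨(L, g), ⟨ENNReal.toReal_nonneg, le_rfl⟩, gK, g0, g1, fun u _ v _ => glip u v⟩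
  obtain ⟨⟨c, h⟩, hp, hmin⟩ := (isCompact_lipCurves x y hK L).exists_isMinOn hne
    (continuous_fst.continuousOn)
  have hmin' : ∀ c' h', (c', h') ∈ lipCurves x y K L → c ≤ c' := fun c' h' hh => hmin hh
  obtain ⟨⟨hc0, hcL⟩, -, h0, h1, hlip⟩ := id hp
  dsimp only at hc0 hcL h0 h1 hlip
  have hcpos : 0 < c := by
    have := hlip 0 (by simp) 1 (by simp)
    rw [h0, h1] at this
    have h2 := dist_pos.2 hxy
    norm_num at this
    linarith
  have hL' : LipschitzOnWith c.toNNReal h (Set.Icc 0 1) := by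
    refine LipschitzOnWith.of_dist_le_mul fun u hu v hv => ?_
    rw [Real.coe_toNNReal _ hc0, Real.dist_eq]
    exact hlip u hu v hv
  have nocut : ∀ s ∈ Set.Icc (0 : ℝ) 1, ∀ t ∈ Set.Icc (0 : ℝ) 1, s < t → h s ≠ h t := by
    intro s hs t ht hst he
    obtain ⟨h', hh'⟩ := cut_loop hp hs.1 hst ht.2 he
    have := hmin' _ _ hh'
    nlinarith [mul_pos hcpos (sub_pos.2 hst)]
  refine ⟨h, ⟨hL'.continuousOn, h0, h1⟩, ?_, ?_⟩
  · intro s hs t ht he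
    rcases lt_trichotomy s t with h2 | h2 | h2
    · exact (nocut s hs t ht h2 he).elim
    · exact h2
    · exact (nocut t ht s hs h2 he.symm).elim
  · have := hL'.comp_eVariationOn_le (g := id) (s := Set.Icc (0 : ℝ) 1) (Set.mapsTo_id _)
    rw [eVariationOn_id_Icc] at this
    refine le_trans this ?_
    rw [sub_zero, ENNReal.ofReal_one, mul_one, ← ENNReal.ofReal_toReal hfin]
    exact ENNReal.ofReal_le_ofReal hcL

/-- In a length space, for distinct points `x, y`, the distance `d(x,y)` equals the
infimum of lengths of rectifiable arcs (injective rectifiable curves) with endpoints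
`x` and `y`. -/
theorem dist_eq_sInf_arc_lengths {X : Type*} [MetricSpace X] (hX : IsLengthSpace X)
    (x y : X) (hxy : x ≠ y) :
    edist x y = sInf {ℓ : ℝ≥0∞ | ∃ γ : ℝ → X, IsCurveOn γ x y ∧
      Set.InjOn γ (Set.Icc 0 1) ∧ eVariationOn γ (Set.Icc 0 1) = ℓ ∧ ℓ ≠ ⊤} := by
  apply le_antisymm
  · refine le_sInf ?_
    rintro ℓ ⟨γ, ⟨_, h0, h1⟩, -, rfl, -⟩
    rw [← h0, ← h1]
    exact eVariationOn.edist_le γ (by simp) (by simp)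
  · refine le_of_forall_gt fun b hb => ?_
    rw [hX x y] at hb
    obtain ⟨ℓ, ⟨γ, hγ, rfl⟩, hlt⟩ := sInf_lt_iff.1 hb
    obtain ⟨h, hc, hi, hle⟩ := exists_arc_le hxy hγ hlt.ne_top
    exact lt_of_le_of_lt (sInf_le ⟨h, hc, hi, rfl, (hle.trans_lt hlt).ne_top⟩)
      (hle.trans_lt hlt)
end

section
/- Let X be a metric space, α:Sⁿ→X a continuous map, and x₀∈Sⁿ a point such that α is injective on a neighborhood of x₀ and α⁻¹(α(x₀))={x₀}. Then there exists a Lipschitz map π:X→ℝⁿ⁺¹ such that (π∘α)(Sⁿ)=Sⁿ⊂ℝⁿ⁺¹ and π∘α:Sⁿ→Sⁿ is homotopic to the identity map of Sⁿ. -/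
open Set Metric
open scoped NNReal

section NoRetraction

open MeasureTheory

/-- A Lipschitz function on a closed ball vanishing on the sphere, extended by zero, is Lipschitz. -/
lemma lipschitz_indicator_ball {E : Type*} [NormedAddCommGroup E] [NormedSpace ℝ E]
    {v : E → E} {K : ℝ≥0} {R : ℝ}
    (hv : LipschitzOnWith K v (closedBall 0 R)) (h0 : ∀ x, ‖x‖ = R → v x = 0) :
    LipschitzWith K ((closedBall (0 : E) R).indicator v) := by
  have key : ∀ x y : E, ‖x‖ ≤ R → R < ‖y‖ → ‖v x‖ ≤ K * ‖x - y‖ := by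
    intro x y hx hy
    have hc : ContinuousOn (fun t : ℝ => ‖AffineMap.lineMap x y t‖) (Icc (0:ℝ) 1) := by
      apply Continuous.continuousOn
      exact (AffineMap.lineMap_continuous).norm
    have := intermediate_value_Icc (zero_le_one) hc
    obtain ⟨t, ht, htR⟩ := this (show R ∈ Icc _ _ by simpa using ⟨hx, hy.le⟩)
    simp only at htR
    have h1 := hv.dist_le_mul x (by simpa using hx) (AffineMap.lineMap x y t)
      (by simp [htR])
    rw [h0 _ htR, dist_zero_right, dist_left_lineMap, dist_eq_norm] at h1
    refine h1.trans ?_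
    gcongr
    rw [Real.norm_of_nonneg ht.1]
    exact mul_le_of_le_one_left (norm_nonneg _) ht.2
  apply LipschitzWith.of_dist_le_mul
  intro x y
  by_cases hx : ‖x‖ ≤ R <;> by_cases hy : ‖y‖ ≤ R
  · rw [indicator_of_mem (by simpa using hx), indicator_of_mem (by simpa using hy)]
    exact hv.dist_le_mul x (by simpa using hx) y (by simpa using hy)
  · rw [indicator_of_mem (by simpa using hx), indicator_of_notMem (by simpa using hy),
      dist_zero_right, dist_eq_norm]
    exact key x y hx (not_le.1 hy)
  · rw [indicator_of_notMem (by simpa using hx), indicator_of_mem (by simpa using hy),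
      dist_zero_left, dist_comm, dist_eq_norm]
    exact key y x hy (not_le.1 hx)
  · rw [indicator_of_notMem (by simpa using hx), indicator_of_notMem (by simpa using hy)]
    rw [dist_self]
    positivity

variable {n : ℕ}

local notation "𝔼" => EuclideanSpace ℝ (Fin (n + 1))

lemma exists_det_poly (A : 𝔼 →L[ℝ] 𝔼) : ∃ p : Polynomial ℝ, p.natDegree ≤ n + 1 ∧
    ∀ t : ℝ, p.eval t = (1 + t • A).det := by
  let b := (EuclideanSpace.basisFun (Fin (n+1)) ℝ).toBasis
  let M := LinearMap.toMatrix b b (A : 𝔼 →ₗ[ℝ] 𝔼)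
  refine ⟨Matrix.det ((Polynomial.X : Polynomial ℝ) • M.map Polynomial.C +
    (1 : Matrix (Fin (n+1)) (Fin (n+1)) ℝ).map Polynomial.C), ?_, ?_⟩
  · simpa using Polynomial.natDegree_det_X_add_C_le M 1
  · intro t
    have : (1 + t • A).det = LinearMap.det (1 + t • (A : 𝔼 →ₗ[ℝ] 𝔼)) := rfl
    rw [this, ← LinearMap.det_toMatrix b, ← Polynomial.coe_evalRingHom, RingHom.map_det]
    congr 1
    ext i j
    simp [M, LinearMap.toMatrix_one, Matrix.one_apply]
    split_ifs <;> simp <;> ring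

lemma det_pos_of_small (A : 𝔼 →L[ℝ] 𝔼) (t : ℝ) (ht : 0 ≤ t) (h : t * ‖A‖ < 1) :
    0 < (1 + t • A).det := by
  have hne : ∀ s ∈ Icc (0:ℝ) 1, (1 + (s * t) • A).det ≠ 0 := by
    intro s hs h0
    have h0' : LinearMap.det ((1 + (s * t) • A : 𝔼 →L[ℝ] 𝔼) : 𝔼 →ₗ[ℝ] 𝔼) = 0 := h0
    obtain ⟨y, hy, hy0⟩ := (Submodule.ne_bot_iff _).1
      (bot_lt_iff_ne_bot.1 (LinearMap.bot_lt_ker_of_det_eq_zero h0'))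
    have h1 : y + (s * t) • A y = 0 := by simpa using hy
    have h2 : ‖y‖ = ‖(s * t) • A y‖ := by
      rw [eq_neg_of_add_eq_zero_left h1, norm_neg, ← eq_neg_of_add_eq_zero_left h1]
    rw [norm_smul, Real.norm_of_nonneg (mul_nonneg hs.1 ht)] at h2
    have h3 := A.le_opNorm y
    have hpos : 0 < ‖y‖ := norm_pos_iff.2 hy0
    have h4 : s * t * ‖A y‖ ≤ t * (‖A‖ * ‖y‖) := by
      apply mul_le_mul (mul_le_of_le_one_left ht hs.2) h3 (norm_nonneg _) ht
    nlinarith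
  by_contra hcon
  have hc : ContinuousOn (fun s : ℝ => (1 + (s * t) • A).det) (Icc 0 1) := by
    apply Continuous.continuousOn
    apply ContinuousLinearMap.continuous_det.comp
    fun_prop
  have := intermediate_value_Icc' (zero_le_one) hc
  obtain ⟨s, hs, hs0⟩ := this (show (0:ℝ) ∈ Icc _ _ by
    constructor
    · simpa using not_lt.1 hcon
    · simp [ContinuousLinearMap.det])
  exact hne s hs hs0

lemma det_fderiv_eq_zero {f : 𝔼 → 𝔼} {R : ℝ} (hR : 0 < R) (hf : Differentiable ℝ f)
    (hn : ∀ x, ‖f x‖ = R) (x : 𝔼) : (fderiv ℝ f x).det = 0 := by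
  by_contra hne
  have hu : IsUnit (LinearMap.det (fderiv ℝ f x : 𝔼 →ₗ[ℝ] 𝔼)) := isUnit_iff_ne_zero.2 hne
  have hsurj : Function.Surjective (fderiv ℝ f x) :=
    (LinearEquiv.ofIsUnitDet (f := (fderiv ℝ f x : 𝔼 →ₗ[ℝ] 𝔼)) (v := (EuclideanSpace.basisFun (Fin (n+1)) ℝ).toBasis) (v' := (EuclideanSpace.basisFun (Fin (n+1)) ℝ).toBasis) (by simpa using hu)).surjective
  obtain ⟨y, hy⟩ := hsurj (f x)
  have h1 := ((hf x).hasFDerivAt.norm_sq)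
  have h2 : (fun x => ‖f x‖ ^ 2) = fun _ => R ^ 2 := by ext; simp [hn]
  rw [h2] at h1
  have h3 := congrArg (fun L => L y) (h1.unique (hasFDerivAt_const _ _))
  simp [hy, hn] at h3
  exact hR.ne' h3

lemma integral_det_of_small {v : 𝔼 → 𝔼} {R : ℝ} {K : ℝ≥0}
    (hv : ContDiff ℝ 1 v) (hK : LipschitzOnWith K v (closedBall 0 R))
    (h0 : ∀ x, ‖x‖ = R → v x = 0) (t : ℝ) (ht : 0 ≤ t) (htK : t * K < 1) :
    ∫ x in ball (0 : 𝔼) R, (1 + t • fderiv ℝ v x).det = (volume (ball (0 : 𝔼) R)).toReal := by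
  have hL := lipschitz_indicator_ball hK h0
  set w := (closedBall (0 : 𝔼) R).indicator v with hw
  have hwv : ∀ x, ‖x‖ < R → w x = v x := fun x hx => indicator_of_mem (by simpa using hx.le) _
  have hw0 : ∀ x, R ≤ ‖x‖ → w x = 0 := by
    intro x hx
    rcases hx.eq_or_lt with h | h
    · rw [hw, indicator_of_mem (by simp [h]), h0 x h.symm]
    · exact indicator_of_notMem (by simpa using h) _
  let F : 𝔼 → 𝔼 := fun x => x + t • w x
  let t' : ℝ≥0 := ⟨t, ht⟩
  have hap : ApproximatesLinearOn F ((ContinuousLinearEquiv.refl ℝ 𝔼 : 𝔼 ≃L[ℝ] 𝔼) : 𝔼 →L[ℝ] 𝔼)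
      univ (t' * K) := by
    intro x _ y _
    have h1 := hL.dist_le_mul x y
    rw [dist_eq_norm, dist_eq_norm] at h1
    have : F x - F y - (x - y) = t • (w x - w y) := by simp only [F]; module
    simp only [ContinuousLinearEquiv.coe_refl, ContinuousLinearMap.id_apply, this]
    rw [norm_smul, Real.norm_of_nonneg ht]
    push_cast
    rw [mul_assoc]
    exact mul_le_mul_of_nonneg_left h1 ht
  have hc : Subsingleton 𝔼 ∨ t' * K < ‖((ContinuousLinearEquiv.refl ℝ 𝔼).symm : 𝔼 →L[ℝ] 𝔼)‖₊⁻¹ := by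
    right
    have : ‖((ContinuousLinearEquiv.refl ℝ 𝔼).symm : 𝔼 →L[ℝ] 𝔼)‖₊ = 1 := by
      ext; simp
    rw [this, inv_one]
    exact_mod_cast htK
  have hinj : InjOn F univ := hap.injOn hc
  have hsurj : Function.Surjective F := hap.surjective hc
  have hout : ∀ x, R ≤ ‖x‖ → F x = x := fun x hx => by simp [F, hw0 x hx]
  have himg : F '' ball 0 R = ball 0 R := by
    ext y
    constructor
    · rintro ⟨x, hx, rfl⟩
      by_contra hcon
      have h1 : R ≤ ‖F x‖ := by simpa using hcon
      have := hinj (mem_univ _) (mem_univ _) (hout _ h1)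
      rw [this] at hcon
      exact hcon hx
    · intro hy
      obtain ⟨x, rfl⟩ := hsurj y
      refine ⟨x, ?_, rfl⟩
      by_contra hcon
      have h1 : R ≤ ‖x‖ := by simpa using hcon
      rw [hout _ h1] at hy
      exact hcon hy
  have hder : ∀ x ∈ ball (0 : 𝔼) R,
      HasFDerivWithinAt F (1 + t • fderiv ℝ v x) (ball 0 R) x := by
    intro x hx
    have h1 : HasFDerivAt (fun x => x + t • v x) (1 + t • fderiv ℝ v x) x :=
      (hasFDerivAt_id x).add (((hv.differentiable (by norm_num)) x).hasFDerivAt.const_smul t)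
    refine HasFDerivWithinAt.congr h1.hasFDerivWithinAt ?_ ?_
    on_goal 2 => simp only [F]; rw [hwv x (by simpa using hx)]
    intro y hy
    simp only [F]
    rw [hwv y (by simpa using hy)]
  have hcv := integral_image_eq_integral_abs_det_fderiv_smul volume measurableSet_ball hder
    (hinj.mono (subset_univ _)) (fun _ => (1:ℝ))
  rw [himg] at hcv
  simp only [integral_const, smul_eq_mul, mul_one] at hcv
  rw [Measure.real, Measure.restrict_apply_univ] at hcv
  rw [hcv]
  refine setIntegral_congr_fun measurableSet_ball ?_
  intro x hx
  refine (abs_of_pos (det_pos_of_small _ t ht (lt_of_le_of_lt ?_ htK))).symm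
  gcongr
  refine norm_fderiv_le_of_lipschitzOn ℝ (s := closedBall 0 R) ?_ hK
  exact Filter.mem_of_superset (isOpen_ball.mem_nhds hx) ball_subset_closedBall

theorem no_smooth_retraction {f : 𝔼 → 𝔼} {R : ℝ} (hR : 0 < R) (hf : ContDiff ℝ 1 f)
    (hn : ∀ x, ‖f x‖ = R) (hid : ∀ x, ‖x‖ = R → f x = x) : False := by
  let v : 𝔼 → 𝔼 := fun x => f x - x
  have hv : ContDiff ℝ 1 v := hf.sub contDiff_id
  have hfv : ∀ x, fderiv ℝ f x = 1 + (1:ℝ) • fderiv ℝ v x := by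
    intro x
    have : fderiv ℝ v x = fderiv ℝ f x - 1 := by
      refine HasFDerivAt.fderiv ?_
      exact (hf.differentiable (by norm_num) x).hasFDerivAt.sub (hasFDerivAt_id x)
    rw [this]; simp
  obtain ⟨K, hK⟩ := (hv.contDiffOn (s := closedBall (0:𝔼) R)).exists_lipschitzOnWith (by norm_num)
    (convex_closedBall _ _) (isCompact_closedBall _ _)
  let δ : ℝ := 1 / ((n + 2) * (K + 1))
  have hδ : 0 < δ := by positivity
  let s : Finset ℕ := Finset.range (n + 2)
  let τ : ℕ → ℝ := fun i => i * δ
  have hτ : InjOn τ (s : Set ℕ) := by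
    intro i _ j _ hij
    simpa [τ, hδ.ne'] using hij
  let c : ℕ → ℝ := fun i => (Lagrange.basis s τ i).eval 1
  have hsum : ∑ i ∈ s, c i = 1 := by
    have := congrArg (Polynomial.eval (1:ℝ)) (Lagrange.sum_basis hτ ⟨0, by simp [s]⟩)
    simpa [Polynomial.eval_finsetSum] using this
  have hdet : ∀ x, ∑ i ∈ s, c i * (1 + τ i • fderiv ℝ v x).det = 0 := by
    intro x
    obtain ⟨p, hp, hpe⟩ := exists_det_poly (fderiv ℝ v x)
    have h1 := Lagrange.eq_interpolate (f := p) hτ (by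
      refine lt_of_le_of_lt Polynomial.degree_le_natDegree ?_
      simp only [s, Finset.card_range]
      exact_mod_cast Nat.lt_succ_of_le hp)
    have h2 := congrArg (Polynomial.eval (1:ℝ)) h1
    rw [hpe, ← hfv, det_fderiv_eq_zero hR (hf.differentiable (by norm_num)) hn] at h2
    rw [Lagrange.interpolate_apply, Polynomial.eval_finsetSum] at h2
    rw [h2]
    refine Finset.sum_congr rfl fun i _ => ?_
    simp [c, hpe, mul_comm]
  have hintegrable : ∀ i, IntegrableOn (fun x => (1 + τ i • fderiv ℝ v x).det) (ball (0:𝔼) R) := by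
    intro i
    have hcont : Continuous (fun x => (1 + τ i • fderiv ℝ v x).det) := by
      apply ContinuousLinearMap.continuous_det.comp
      have := hv.continuous_fderiv (by norm_num)
      fun_prop
    exact (hcont.continuousOn.integrableOn_compact (isCompact_closedBall 0 R)).mono_set
      ball_subset_closedBall
  have hfin : ∫ x in ball (0:𝔼) R, ∑ i ∈ s, c i * (1 + τ i • fderiv ℝ v x).det = 0 := by
    simp [hdet]
  rw [integral_finsetSum _ (fun i _ => (hintegrable i).const_mul _)] at hfin
  have hvol : ∀ i ∈ s, ∫ x in ball (0:𝔼) R, c i * (1 + τ i • fderiv ℝ v x).det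
      = c i * (volume (ball (0 : 𝔼) R)).toReal := by
    intro i hi
    rw [integral_const_mul, integral_det_of_small hv hK (fun x hx => by simp [v, hid x hx])]
    · positivity
    · have hi' : (i:ℝ) < n + 2 := by exact_mod_cast Finset.mem_range.1 hi
      have hK0 : (0:ℝ) ≤ K := K.2
      simp only [τ, δ]
      rw [mul_one_div, div_mul_eq_mul_div, div_lt_one (by positivity)]
      nlinarith [Nat.cast_nonneg (α := ℝ) i]
  rw [Finset.sum_congr rfl hvol, ← Finset.sum_mul, hsum, one_mul] at hfin
  have := (ENNReal.toReal_pos (measure_ball_pos volume (0:𝔼) hR).ne' measure_ball_lt_top.ne)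
  exact this.ne' hfin


local notation "𝕊" => Set.Elem (Metric.sphere (0 : EuclideanSpace ℝ (Fin (n + 1))) 1)

lemma norm_inv_smul_mem {x : 𝔼} (hx : x ≠ 0) : ‖x‖⁻¹ • x ∈ Metric.sphere (0 : 𝔼) 1 := by
  simp [norm_smul, norm_ne_zero_iff.2 hx]

/-- Two maps to the sphere obtained by normalising maps joined by a nonvanishing segment are
homotopic. -/
lemma homotopic_of_segment {Y : Type*} [TopologicalSpace Y] {A B : Y → 𝔼} (hA : Continuous A)
    (hB : Continuous B) (g₀ g₁ : C(Y, 𝕊))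
    (h₀ : ∀ y, (g₀ y : 𝔼) = ‖A y‖⁻¹ • A y) (h₁ : ∀ y, (g₁ y : 𝔼) = ‖B y‖⁻¹ • B y)
    (h : ∀ y, ∀ s ∈ Icc (0:ℝ) 1, (1 - s) • A y + s • B y ≠ 0) : g₀.Homotopic g₁ := by
  have hc : Continuous (fun p : unitInterval × Y => (1 - (p.1 : ℝ)) • A p.2 + (p.1 : ℝ) • B p.2) := by
    fun_prop
  refine ⟨⟨⟨fun p => ⟨_, norm_inv_smul_mem (h p.2 p.1 p.1.2)⟩, ?_⟩, ?_, ?_⟩⟩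
  · refine Continuous.subtype_mk ?_ _
    exact (hc.norm.inv₀ fun p => norm_ne_zero_iff.2 (h p.2 p.1 p.1.2)).smul hc
  · intro y
    ext1
    simp [h₀]
  · intro y
    ext1
    simp [h₁]

theorem sphere_id_not_nullhomotopic (c : 𝕊)
    (hH : (ContinuousMap.id 𝕊).Homotopic (ContinuousMap.const 𝕊 c)) : False := by
  classical
  obtain ⟨H⟩ := hH
  let nrm : 𝔼 → 𝕊 := fun x => if hx : x ≠ 0 then ⟨_, norm_inv_smul_mem hx⟩ else c
  have hnrm : ∀ x : 𝔼, x ≠ 0 → (nrm x : 𝔼) = ‖x‖⁻¹ • x := fun x hx => by simp [nrm, hx]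
  let τ : 𝔼 → unitInterval := fun x => Set.projIcc 0 1 zero_le_one (2 - 2 * ‖x‖)
  have hτ : Continuous τ := continuous_projIcc.comp (by fun_prop)
  have hnc : ∀ x : 𝔼, x ≠ 0 → ContinuousAt nrm x := by
    intro x hx
    rw [Topology.IsInducing.subtypeVal.continuousAt_iff]
    have h1 : ContinuousAt (fun x : 𝔼 => ‖x‖⁻¹ • x) x :=
      (continuousAt_id.norm.inv₀ (norm_ne_zero_iff.2 hx)).smul continuousAt_id
    refine h1.congr ?_
    filter_upwards [isOpen_ne.mem_nhds hx] with y hy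
    exact (hnrm y hy).symm
  let F : 𝔼 → 𝔼 := fun x => (H (τ x, nrm x) : 𝔼)
  have hF1 : ∀ x, ‖F x‖ = 1 := fun x => mem_sphere_zero_iff_norm.1 (H (τ x, nrm x)).2
  have hFc : Continuous F := by
    rw [continuous_iff_continuousAt]
    intro x
    by_cases hx : x = 0
    · subst hx
      refine (continuousAt_const (y := (c : 𝔼))).congr ?_
      filter_upwards [ball_mem_nhds (0:𝔼) (show (0:ℝ) < 1/2 by norm_num)] with y hy
      have hy' : ‖y‖ < 1/2 := by simpa using hy
      have : τ y = 1 := Set.projIcc_of_right_le _ (by linarith)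
      simp [F, this]
    · exact continuous_subtype_val.continuousAt.comp
        (H.continuous.continuousAt.comp (hτ.continuousAt.prodMk (hnc x hx)))
  have hFo : ∀ x, 1 < ‖x‖ → F x = ‖x‖⁻¹ • x := by
    intro x hx
    have : τ x = 0 := Set.projIcc_of_le_left _ (by linarith)
    have hx0 : x ≠ 0 := norm_pos_iff.1 (by linarith)
    simp [F, this, hnrm x hx0]
  have hU : {x : 𝔼 | 1 < ‖x‖} ∈ nhdsSet {x : 𝔼 | 2 ≤ ‖x‖} := by
    refine (isOpen_lt continuous_const continuous_norm).mem_nhdsSet.2 ?_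
    intro x hx
    simp only [mem_ofPred_eq] at hx ⊢
    linarith
  have hFU : ContDiffOn ℝ ((1 : ℕ∞) : WithTop ℕ∞) F {x : 𝔼 | 1 < ‖x‖} := by
    have h1 : ContDiffOn ℝ ((1 : ℕ∞) : WithTop ℕ∞) (fun x : 𝔼 => ‖x‖⁻¹ • x) {x : 𝔼 | 1 < ‖x‖} := by
      intro x hx
      have hx0 : x ≠ 0 := norm_pos_iff.1 (lt_trans one_pos hx)
      exact (((contDiffAt_norm ℝ hx0).inv (norm_ne_zero_iff.2 hx0)).smul
        contDiffAt_id).contDiffWithinAt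
    exact h1.congr fun x hx => hFo x hx
  obtain ⟨h, hh, hd, heq, -⟩ := hFc.exists_contDiff_approx_and_eqOn 1
    (ε := fun _ => 1/2) continuous_const (fun _ => by norm_num)
    (isClosed_le continuous_const continuous_norm) hU hFU
  have hne : ∀ x, h x ≠ 0 := by
    intro x hx
    have := hd x
    rw [hx, dist_zero_left, hF1] at this
    norm_num at this
  refine no_smooth_retraction (n := n) (f := fun x => (2:ℝ) • (‖h x‖⁻¹ • h x)) (R := 2) two_pos ?_ ?_ ?_
  · have h1 : ContDiff ℝ 1 (fun x => ‖h x‖⁻¹) :=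
      ContDiff.inv (ContDiff.norm ℝ hh hne) fun x => norm_ne_zero_iff.2 (hne x)
    have h2 : ContDiff ℝ 1 (fun x => ‖h x‖⁻¹ • h x) := h1.smul hh
    exact h2.const_smul (2:ℝ)
  · intro x
    simp [norm_smul, norm_ne_zero_iff.2 (hne x)]
  · intro x hx
    have h1 : h x = ‖x‖⁻¹ • x := by
      rw [heq (show x ∈ {x : 𝔼 | 2 ≤ ‖x‖} from hx.ge), hFo x (by rw [hx]; norm_num)]
    have h2 : ‖h x‖ = 1 := by
      rw [h1, norm_smul, hx]; norm_num
    simp only [h2]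
    rw [h1, hx]
    simp [smul_smul]

theorem surjective_of_homotopic_id (g : C(𝕊, 𝕊)) (hg : g.Homotopic (ContinuousMap.id _)) :
    Function.Surjective g := by
  intro p
  by_contra hcon
  push Not at hcon
  refine sphere_id_not_nullhomotopic (n := n) (-p) (hg.symm.trans ?_)
  refine homotopic_of_segment (A := fun z => (g z : 𝔼)) (B := fun _ => (-p : 𝔼)) (by fun_prop)
    (by fun_prop) _ _ (fun y => by simp) (fun y => by simp) ?_
  intro y s hs h0
  have h1 : (1 - s) • (g y : 𝔼) = s • (p : 𝔼) := by
    rw [smul_neg, ← sub_eq_add_neg, sub_eq_zero] at h0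
    exact h0
  have h2 := congrArg norm h1
  rw [norm_smul, norm_smul, Real.norm_of_nonneg (by linarith [hs.2]), Real.norm_of_nonneg hs.1] at h2
  simp at h2
  have hs2 : s = 1/2 := by linarith
  subst hs2
  apply hcon y
  ext1
  norm_num at h1
  exact h1

end NoRetraction

section Main

variable {n : ℕ}

local notation "𝔼" => EuclideanSpace ℝ (Fin (n + 1))
local notation "𝕊" => Set.Elem (Metric.sphere (0 : EuclideanSpace ℝ (Fin (n + 1))) 1)

/-- A bounded function on `Y` which is uniformly continuous with respect to `α : Y → X` is, up to
`ε`, the composition of `α` with a Lipschitz function on `X`. -/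
lemma exists_lipschitz_approx {X Y : Type*} [PseudoMetricSpace X] [Nonempty Y] (α : Y → X)
    (T : Y → ℝ) (M : ℝ) (hM : ∀ y, |T y| ≤ M) (ε δ : ℝ) (hδ : 0 < δ)
    (h : ∀ w z, dist (α w) (α z) < δ → |T w - T z| ≤ ε) :
    ∃ (K : ℝ≥0) (G : X → ℝ), LipschitzWith K G ∧ ∀ z, |G (α z) - T z| ≤ ε := by
  have hM0 : 0 ≤ M := (abs_nonneg _).trans (hM (Classical.arbitrary Y))
  have hε : 0 ≤ ε := by
    have z := Classical.arbitrary Y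
    exact (abs_nonneg _).trans (h z z (by simpa using hδ))
  let k : ℝ≥0 := ⟨2 * M / δ, by positivity⟩
  have hkδ : (k : ℝ) * δ = 2 * M := by
    change 2 * M / δ * δ = 2 * M
    field_simp
  let G : X → ℝ := fun x => ⨅ z, (T z + k * dist x (α z))
  have hbdd : ∀ x, BddBelow (range fun z => T z + k * dist x (α z)) := by
    intro x
    refine ⟨-M, ?_⟩
    rintro _ ⟨z, rfl⟩
    have := (abs_le.1 (hM z)).1
    have h2 : 0 ≤ (k : ℝ) * dist x (α z) := by positivity
    simp only
    linarith
  refine ⟨k, G, LipschitzWith.of_le_add_mul k ?_, ?_⟩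
  · intro x y
    rw [← sub_le_iff_le_add]
    refine le_ciInf fun z => ?_
    rw [sub_le_iff_le_add]
    refine (ciInf_le (hbdd x) z).trans ?_
    have := mul_le_mul_of_nonneg_left (dist_triangle x y (α z)) k.2
    change (k : ℝ) * _ ≤ (k : ℝ) * _ at this
    linarith
  · intro w
    rw [abs_le]
    constructor
    · have : T w - ε ≤ G (α w) := by
        refine le_ciInf fun z => ?_
        have h2 : 0 ≤ (k : ℝ) * dist (α w) (α z) := by positivity
        by_cases hz : dist (α w) (α z) < δ
        · have := (abs_le.1 (h w z hz)).2
          linarith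
        · have h3 : (k : ℝ) * δ ≤ k * dist (α w) (α z) :=
            mul_le_mul_of_nonneg_left (not_lt.1 hz) k.2
          have := (abs_le.1 (hM z)).1
          have := (abs_le.1 (hM w)).2
          linarith
      linarith
    · have : G (α w) ≤ T w + k * dist (α w) (α w) := ciInf_le (hbdd (α w)) w
      rw [dist_self] at this
      linarith

lemma lipschitzOn_normalize {X : Type*} [PseudoMetricSpace X] {G : X → 𝔼} {K : ℝ≥0}
    (hG : LipschitzWith K G) {c : ℝ} (hc : 0 < c) :
    ∃ K' : ℝ≥0, LipschitzOnWith K' (fun x => ‖G x‖⁻¹ • G x) {x | c ≤ ‖G x‖} := by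
  refine ⟨⟨2 * K / c, by positivity⟩, LipschitzOnWith.of_dist_le_mul ?_⟩
  intro x hx y hy
  have hx' : 0 < ‖G x‖ := hc.trans_le hx
  have hy' : 0 < ‖G y‖ := hc.trans_le hy
  have h1 := hG.dist_le_mul x y
  rw [dist_eq_norm] at h1 ⊢
  have e : ‖G x‖⁻¹ • G x - ‖G y‖⁻¹ • G y =
      ‖G x‖⁻¹ • ((G x - G y) + ((‖G y‖ - ‖G x‖) * ‖G y‖⁻¹) • G y) := by
    rw [smul_add, smul_sub, smul_smul]
    have : ‖G x‖⁻¹ * ((‖G y‖ - ‖G x‖) * ‖G y‖⁻¹) = ‖G x‖⁻¹ - ‖G y‖⁻¹ := by field_simp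
    rw [this]
    module
  have h2 : ‖(G x - G y) + ((‖G y‖ - ‖G x‖) * ‖G y‖⁻¹) • G y‖ ≤ 2 * ‖G x - G y‖ := by
    refine (norm_add_le _ _).trans ?_
    rw [norm_smul, norm_mul, norm_inv, norm_norm, mul_assoc, inv_mul_cancel₀ hy'.ne', mul_one]
    have := abs_norm_sub_norm_le (G y) (G x)
    rw [norm_sub_rev (G y)] at this
    rw [Real.norm_eq_abs]
    linarith
  rw [e, norm_smul, norm_inv, norm_norm]
  calc ‖G x‖⁻¹ * _ ≤ c⁻¹ * (2 * ‖G x - G y‖) := by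
        gcongr
        exact hx
    _ ≤ c⁻¹ * (2 * (K * dist x y)) := by gcongr
    _ = (2 * K / c) * dist x y := by ring

end Main

theorem exists_lipschitz_projection_sphere {n : ℕ} {X : Type*} [MetricSpace X]
    (α : ↥(Metric.sphere (0 : EuclideanSpace ℝ (Fin (n + 1))) 1) → X)
    (hα : Continuous α)
    (x₀ : ↥(Metric.sphere (0 : EuclideanSpace ℝ (Fin (n + 1))) 1))
    (hinj : ∃ U ∈ nhds x₀, Set.InjOn α U)
    (hpre : α ⁻¹' {α x₀} = {x₀}) :
    ∃ (K : ℝ≥0) (π : X → EuclideanSpace ℝ (Fin (n + 1))), LipschitzWith K π ∧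
      (∀ z, π (α z) ∈ Metric.sphere (0 : EuclideanSpace ℝ (Fin (n + 1))) 1) ∧
      ∃ g : C(↥(Metric.sphere (0 : EuclideanSpace ℝ (Fin (n + 1))) 1),
             ↥(Metric.sphere (0 : EuclideanSpace ℝ (Fin (n + 1))) 1)),
        (∀ z, (g z : EuclideanSpace ℝ (Fin (n + 1))) = π (α z)) ∧
        Function.Surjective g ∧
        g.Homotopic (ContinuousMap.id _) := by
  obtain ⟨U, hU, hinj⟩ := hinj
  have hfib : ∀ z, α z = α x₀ → z = x₀ := by
    intro z hz
    have : z ∈ α ⁻¹' {α x₀} := hz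
    rw [hpre] at this
    exact this
  -- a radius such that points mapped near `α x₀` lie in `U`
  obtain ⟨r, hr, hrU⟩ : ∃ r : ℝ, 0 < r ∧ ∀ z, dist (α z) (α x₀) < r → z ∈ U := by
    have hcomp : IsCompact (interior U)ᶜ := isOpen_interior.isClosed_compl.isCompact
    obtain ⟨r, hr, h⟩ := hcomp.exists_forall_le' (f := fun z => dist (α z) (α x₀)) (a := 0)
      (by fun_prop) (fun z hz => by
        refine dist_pos.2 fun h => hz ?_
        rw [hfib z h]
        exact mem_interior_iff_mem_nhds.2 hU)
    refine ⟨r, hr, fun z hz => ?_⟩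
    by_contra hcon
    exact absurd (h z fun h' => hcon (interior_subset h')) (not_le.2 hz)
  -- the cut-off function and the model map
  let m : ↥(Metric.sphere (0 : EuclideanSpace ℝ (Fin (n + 1))) 1) → ℝ :=
    fun z => max 0 (1 - dist (α z) (α x₀) / r)
  have hmc : Continuous m := by
    simp only [m]
    fun_prop
  have hm0 : ∀ z, 0 ≤ m z := fun z => le_max_left _ _
  have hm1 : ∀ z, m z ≤ 1 := fun z => max_le zero_le_one (by
    have : 0 ≤ dist (α z) (α x₀) / r := by positivity
    linarith)
  have hmx : m x₀ = 1 := by simp [m]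
  let T : ↥(Metric.sphere (0 : EuclideanSpace ℝ (Fin (n + 1))) 1) →
      EuclideanSpace ℝ (Fin (n + 1)) := fun z => m z • (z : EuclideanSpace ℝ (Fin (n + 1))) -
        (1 - m z) • (x₀ : EuclideanSpace ℝ (Fin (n + 1)))
  have hTc : Continuous T := by
    simp only [T]
    fun_prop
  -- nonvanishing
  have hnv : ∀ z : ↥(Metric.sphere (0 : EuclideanSpace ℝ (Fin (n + 1))) 1), ∀ a : ℝ, 0 ≤ a →
      a ≤ 1 → (z = x₀ → a = 1) → a • (z : EuclideanSpace ℝ (Fin (n + 1))) -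
        (1 - a) • (x₀ : EuclideanSpace ℝ (Fin (n + 1))) ≠ 0 := by
    intro z a ha0 ha1 hax h0
    rw [sub_eq_zero] at h0
    have h2 := congrArg norm h0
    rw [norm_smul, norm_smul, Real.norm_of_nonneg ha0, Real.norm_of_nonneg (by linarith)] at h2
    simp at h2
    have ha : a = 1/2 := by linarith
    have hzx : z = x₀ := by
      subst ha
      ext1
      norm_num at h0
      exact h0
    have := hax hzx
    linarith
  have hT0 : ∀ z, T z ≠ 0 := fun z => hnv z (m z) (hm0 z) (hm1 z) (by rintro rfl; exact hmx)
  have hTfib : ∀ w z, α w = α z → T w = T z := by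
    intro w z hwz
    have hmm : m w = m z := by simp only [m, hwz]
    by_cases hd : dist (α z) (α x₀) < r
    · rw [hinj (hrU w (by rwa [hwz])) (hrU z hd) hwz]
    · have : m z = 0 := max_eq_left (by
        have : 1 ≤ dist (α z) (α x₀) / r := (one_le_div hr).2 (not_lt.1 hd)
        linarith)
      simp only [T, hmm, this]
      simp
  have : Nonempty ↥(Metric.sphere (0 : EuclideanSpace ℝ (Fin (n + 1))) 1) := ⟨x₀⟩
  obtain ⟨c, hc, hcT⟩ : ∃ c : ℝ, 0 < c ∧ ∀ z, c ≤ ‖T z‖ := by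
    obtain ⟨c, hc, h⟩ := isCompact_univ.exists_forall_le' (f := fun z => ‖T z‖) (a := 0)
      (by fun_prop) (fun z _ => norm_pos_iff.2 (hT0 z))
    exact ⟨c, hc, fun z => h z (mem_univ _)⟩
  have hTb : ∀ z, ‖T z‖ ≤ 2 := by
    intro z
    refine (norm_sub_le _ _).trans ?_
    rw [norm_smul, norm_smul, Real.norm_of_nonneg (hm0 z),
      Real.norm_of_nonneg (by linarith [hm1 z])]
    simp
  let ε : ℝ := c / (2 * (n + 1))
  have hε : 0 < ε := by positivity
  obtain ⟨δ, hδ, hδT⟩ : ∃ δ : ℝ, 0 < δ ∧ ∀ w z, dist (α w) (α z) < δ → ‖T w - T z‖ ≤ ε := by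
    have hcomp : IsCompact {p : ↥(Metric.sphere (0 : EuclideanSpace ℝ (Fin (n + 1))) 1) ×
        ↥(Metric.sphere (0 : EuclideanSpace ℝ (Fin (n + 1))) 1) | ε ≤ ‖T p.1 - T p.2‖} :=
      (isClosed_le continuous_const (by fun_prop)).isCompact
    obtain ⟨δ, hδ, h⟩ := hcomp.exists_forall_le' (f := fun p => dist (α p.1) (α p.2)) (a := 0)
      (by fun_prop) (fun p hp => by
        refine dist_pos.2 fun h => ?_
        have hp' : ε ≤ ‖T p.1 - T p.2‖ := hp
        rw [hTfib _ _ h, sub_self, norm_zero] at hp'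
        linarith)
    refine ⟨δ, hδ, fun w z hwz => ?_⟩
    by_contra hcon
    exact absurd (h (w, z) (not_le.1 hcon).le) (not_le.2 hwz)
  have hco : ∀ (x : EuclideanSpace ℝ (Fin (n + 1))) i, |x i| ≤ ‖x‖ := fun x i => by
    simpa using PiLp.norm_apply_le x i
  have happ : ∀ i : Fin (n + 1), ∃ (K : ℝ≥0) (G : X → ℝ), LipschitzWith K G ∧
      ∀ z, |G (α z) - T z i| ≤ ε := fun i =>
    exists_lipschitz_approx α (fun z => T z i) 2 (fun z => (hco _ i).trans (hTb z)) ε δ hδ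
      (fun w z hwz => (hco (T w - T z) i).trans (hδT w z hwz))
  choose K G hGL hGT using happ
  let Γ : X → EuclideanSpace ℝ (Fin (n + 1)) := fun x => WithLp.toLp 2 (fun i => G i x)
  obtain ⟨K₁, hΓ⟩ : ∃ K₁ : ℝ≥0, LipschitzWith K₁ Γ := by
    have h1 : LipschitzWith (∑ i, K i) (fun x => fun i => G i x) :=
      LipschitzWith.of_dist_le_mul fun x y => by
        rw [dist_pi_le_iff (by positivity)]
        intro i
        refine ((hGL i).dist_le_mul x y).trans ?_
        gcongr
        exact_mod_cast Finset.single_le_sum (f := K) (fun _ _ => zero_le) (Finset.mem_univ i)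
    exact ⟨_, (PiLp.lipschitzWith_toLp 2 (fun _ : Fin (n + 1) => ℝ)).comp h1⟩
  have hΓT : ∀ z, ‖Γ (α z) - T z‖ ≤ c / 2 := by
    intro z
    have h1 : ‖Γ (α z) - T z‖ ≤ ∑ i, ‖(Γ (α z) - T z) i‖ := by
      rw [EuclideanSpace.norm_eq]
      exact Real.sqrt_le_iff.2 ⟨by positivity, Finset.sum_sq_le_sq_sum_of_nonneg fun i _ => norm_nonneg _⟩
    refine h1.trans ?_
    calc ∑ i, ‖(Γ (α z) - T z) i‖ ≤ ∑ i : Fin (n + 1), ε := Finset.sum_le_sum fun i _ => hGT i z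
      _ = c / 2 := by
        simp only [Finset.sum_const, Finset.card_univ, Fintype.card_fin, nsmul_eq_mul, ε]
        push_cast
        field_simp
  have hΓc : ∀ z, c / 2 ≤ ‖Γ (α z)‖ := by
    intro z
    have h1 := norm_sub_norm_le (T z) (Γ (α z))
    rw [norm_sub_rev (T z)] at h1
    linarith [hΓT z, hcT z]
  have hΓ0 : ∀ z, Γ (α z) ≠ 0 := fun z => norm_pos_iff.1 (by linarith [hΓc z])
  obtain ⟨K₂, hK₂⟩ := lipschitzOn_normalize hΓ (show 0 < c / 2 by linarith)
  obtain ⟨π, hπL, hπ⟩ := hK₂.extend_finite_dimension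
  have hπα : ∀ z, π (α z) = ‖Γ (α z)‖⁻¹ • Γ (α z) := fun z => (hπ (hΓc z)).symm
  have hmem : ∀ z, π (α z) ∈ Metric.sphere (0 : EuclideanSpace ℝ (Fin (n + 1))) 1 := fun z => by
    rw [hπα]; exact norm_inv_smul_mem (hΓ0 z)
  let g : C(↥(Metric.sphere (0 : EuclideanSpace ℝ (Fin (n + 1))) 1),
      ↥(Metric.sphere (0 : EuclideanSpace ℝ (Fin (n + 1))) 1)) :=
    ⟨fun z => ⟨π (α z), hmem z⟩, (hπL.continuous.comp hα).subtype_mk _⟩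
  let gT : C(↥(Metric.sphere (0 : EuclideanSpace ℝ (Fin (n + 1))) 1),
      ↥(Metric.sphere (0 : EuclideanSpace ℝ (Fin (n + 1))) 1)) :=
    ⟨fun z => ⟨‖T z‖⁻¹ • T z, norm_inv_smul_mem (hT0 z)⟩,
      ((hTc.norm.inv₀ fun z => norm_ne_zero_iff.2 (hT0 z)).smul hTc).subtype_mk _⟩
  have hom1 : g.Homotopic gT := by
    refine homotopic_of_segment (hΓ.continuous.comp hα) hTc g gT hπα (fun _ => rfl) ?_
    intro z s hs h0
    have h1 : T z = -((1 - s) • (Γ (α z) - T z)) := by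
      simp only [Function.comp] at h0
      rw [eq_neg_iff_add_eq_zero, ← h0]
      module
    have h2 := congrArg norm h1
    rw [norm_neg, norm_smul, Real.norm_of_nonneg (by linarith [hs.2])] at h2
    have h3 := hcT z
    have h4 := hΓT z
    have h5 : (1 - s) * ‖Γ (α z) - T z‖ ≤ ‖Γ (α z) - T z‖ :=
      mul_le_of_le_one_left (norm_nonneg _) (by linarith [hs.1])
    linarith
  have hom2 : gT.Homotopic (ContinuousMap.id _) := by
    refine homotopic_of_segment hTc continuous_subtype_val gT _ (fun _ => rfl)
      (fun z => by simp) ?_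
    intro z s hs
    have := hnv z (1 - (1 - s) * (1 - m z)) ?_ ?_ ?_
    · convert this using 1
      simp only [T]
      module
    · nlinarith [hs.1, hs.2, hm0 z, hm1 z]
    · nlinarith [hs.1, hs.2, hm0 z, hm1 z]
    · rintro rfl
      rw [hmx]; ring
  have hom := hom1.trans hom2
  exact ⟨_, π, hπL, hmem, g, fun _ => rfl, surjective_of_homotopic_id g hom, hom⟩
end

section
/- Let X be a contractible metric space with zero (n+1)-dimensional Hausdorff measure. If D₁ and D₂ are two subsets of X, each homeomorphic to the closed n-dimensional ball, having the same boundary (image of Sⁿ⁻¹ under the respective homeomorphisms), then D₁=D₂. -/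
open Set Metric MeasureTheory
open scoped NNReal ENNReal

/-- Evaluation at `1` is a fixed combination of evaluations at given nodes. -/
lemma aux_weights (m : ℕ) (v : ℕ → ℝ) (hv : Function.Injective v) :
    ∃ w : ℕ → ℝ, ∀ P : Polynomial ℝ, P.natDegree ≤ m →
      P.eval 1 = ∑ i ∈ Finset.range (m + 1), w i * P.eval (v i) := by
  refine ⟨fun i => (Lagrange.basis (Finset.range (m + 1)) v i).eval 1, fun P hP => ?_⟩
  have h := Lagrange.eq_interpolate (s := Finset.range (m + 1)) (v := v) (f := P) hv.injOn
    (by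
      rw [Finset.card_range]
      exact lt_of_le_of_lt Polynomial.degree_le_natDegree (by exact_mod_cast Nat.lt_succ_of_le hP))
  conv_lhs => rw [h]
  rw [Lagrange.interpolate_apply, Polynomial.eval_finsetSum]
  refine Finset.sum_congr rfl fun i _ => ?_
  rw [Polynomial.eval_mul, Polynomial.eval_C, mul_comm]

lemma aux_det_poly {E : Type*} [NormedAddCommGroup E] [NormedSpace ℝ E] [FiniteDimensional ℝ E]
    (A : E →L[ℝ] E) : ∃ P : Polynomial ℝ, P.natDegree ≤ Module.finrank ℝ E ∧
      ∀ t : ℝ, P.eval t = (ContinuousLinearMap.id ℝ E + t • A).det := by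
  let b := Module.finBasis ℝ E
  let M := LinearMap.toMatrix b b (A : E →ₗ[ℝ] E)
  refine ⟨Matrix.det ((Polynomial.X : Polynomial ℝ) • M.map Polynomial.C
    + (1 : Matrix _ _ ℝ).map Polynomial.C), ?_, fun t => ?_⟩
  · simpa using Polynomial.natDegree_det_X_add_C_le M 1
  · have h1 : (ContinuousLinearMap.id ℝ E + t • A).det
        = LinearMap.det ((LinearMap.id : E →ₗ[ℝ] E) + t • (A : E →ₗ[ℝ] E)) := rfl
    rw [h1, ← LinearMap.det_toMatrix b, map_add, map_smul, LinearMap.toMatrix_id]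
    rw [← Polynomial.coe_evalRingHom, RingHom.map_det]
    congr 1
    ext i j
    simp [M, Matrix.one_apply, add_comm]
    split_ifs <;> simp [mul_comm]

lemma aux_det_pos {E : Type*} [NormedAddCommGroup E] [NormedSpace ℝ E] [FiniteDimensional ℝ E]
    (A : E →L[ℝ] E) (K t : ℝ) (hA : ‖A‖ ≤ K) (ht : 0 ≤ t) (htK : t * K < 1) :
    0 < (ContinuousLinearMap.id ℝ E + t • A).det := by
  obtain ⟨P, -, hP⟩ := aux_det_poly A
  have hne : ∀ s ∈ Icc (0 : ℝ) t, P.eval s ≠ 0 := by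
    intro s hs h0
    rw [hP] at h0
    have hK : 0 ≤ K := (norm_nonneg _).trans hA
    have h1 : LinearMap.det ((ContinuousLinearMap.id ℝ E + s • A : E →L[ℝ] E) : E →ₗ[ℝ] E) = 0 := h0
    obtain ⟨v, hv, hv0⟩ := Submodule.exists_mem_ne_zero_of_ne_bot
      (LinearMap.bot_lt_ker_of_det_eq_zero h1).ne'
    have h2 : v + s • A v = 0 := by simpa using hv
    have h3 : ‖v‖ = s * ‖A v‖ := by
      have h3' := congrArg norm (eq_neg_of_add_eq_zero_left h2)
      rwa [norm_neg, norm_smul, Real.norm_of_nonneg hs.1] at h3'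
    have h4 : ‖A v‖ ≤ K * ‖v‖ := A.le_of_opNorm_le hA v
    have h5 : 0 < ‖v‖ := norm_pos_iff.2 hv0
    have h6 : s * K < 1 := lt_of_le_of_lt (mul_le_mul_of_nonneg_right hs.2 hK) htK
    have h7 := mul_le_mul_of_nonneg_left h4 hs.1
    nlinarith
  rw [← hP]
  by_contra hcon
  push Not at hcon
  have h0 : P.eval 0 = 1 := by
    rw [hP]; simp [ContinuousLinearMap.det]
  obtain ⟨s, hs, hs0⟩ := intermediate_value_Icc' ht (P.continuous.continuousOn)
    (show (0 : ℝ) ∈ Icc (P.eval t) (P.eval 0) from ⟨hcon, by rw [h0]; norm_num⟩)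
  exact hne s hs hs0

lemma aux_bij {E : Type*} [NormedAddCommGroup E] [NormedSpace ℝ E] [CompleteSpace E]
    (h : E → E) (K : ℝ≥0) (hK : LipschitzWith K h) (R : ℝ)
    (hR : ∀ x, R < ‖x‖ → h x = 0) (t : ℝ) (ht : 0 ≤ t) (htK : t * K < 1) :
    Function.Injective (fun x => x + t • h x) ∧
      (fun x => x + t • h x) '' closedBall 0 R = closedBall 0 R := by
  have hlip : ∀ y, LipschitzWith (Real.toNNReal t * K) (fun x => y - t • h x) := by
    intro y
    refine LipschitzWith.of_dist_le_mul fun a b => ?_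
    have := hK.dist_le_mul a b
    rw [dist_sub_left, dist_eq_norm, ← smul_sub, norm_smul, Real.norm_of_nonneg ht,
      ← dist_eq_norm]
    push_cast
    rw [Real.coe_toNNReal t ht, mul_assoc]
    gcongr
  have hcon : ∀ y, ContractingWith (Real.toNNReal t * K) (fun x => y - t • h x) := by
    intro y
    refine ⟨?_, hlip y⟩
    rw [← NNReal.coe_lt_coe]
    push_cast
    rwa [Real.coe_toNNReal t ht]
  have hinj : Function.Injective (fun x => x + t • h x) := by
    intro a b hab
    have hab' : a + t • h a = b + t • h b := hab
    refine (hcon (a + t • h a)).fixedPoint_unique' ?_ ?_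
    · simp [Function.IsFixedPt]
    · rw [hab']; simp [Function.IsFixedPt]
  refine ⟨hinj, ?_⟩
  have key : ∀ x, x ∈ closedBall (0 : E) R ↔ x + t • h x ∈ closedBall (0 : E) R := by
    have hout : ∀ x, R < ‖x‖ → x + t • h x = x := fun x hx => by simp [hR x hx]
    intro x
    simp only [mem_closedBall, dist_zero_right]
    constructor
    · intro hx
      by_contra hc
      push Not at hc
      have h1 := hout _ hc
      have := hinj (a₁ := x + t • h x) (a₂ := x) h1
      rw [this] at hc
      linarith
    · intro hx
      by_contra hc
      push Not at hc
      rw [hout x hc] at hx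
      linarith
  ext y
  constructor
  · rintro ⟨x, hx, rfl⟩
    exact (key x).1 hx
  · intro hy
    have hfix := (hcon y).fixedPoint_isFixedPt
    set x := ContractingWith.fixedPoint _ (hcon y)
    have hxy : x + t • h x = y := by
      have : y - t • h x = x := hfix
      exact (sub_eq_iff_eq_add.1 this).symm
    exact ⟨x, (key x).2 (hxy ▸ hy), hxy⟩

lemma aux_smooth {E : Type*} [NormedAddCommGroup E] [InnerProductSpace ℝ E]
    [FiniteDimensional ℝ E] (h : E → E) (hc : HasCompactSupport h) (hs : ContDiff ℝ 1 h)
    (q : E) (η : ℝ) (hη : 0 < η) : ∃ x, ‖x + h x - q‖ < η := by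
  borelize E
  by_contra hcon
  push Not at hcon
  obtain ⟨K, hK⟩ := ContDiff.lipschitzWith_of_hasCompactSupport hc hs (by simp)
  obtain ⟨R0, hR0⟩ := hc.isCompact.isBounded.subset_closedBall (0 : E)
  set R : ℝ := max R0 (‖q‖ + η) with hRdef
  have hR : ∀ x, R < ‖x‖ → h x = 0 := by
    intro x hx
    by_contra hne
    have := hR0 (subset_tsupport _ hne)
    simp only [mem_closedBall, dist_zero_right] at this
    linarith [le_max_left R0 (‖q‖ + η)]
  set B : Set E := closedBall 0 R with hB
  have hBc : IsCompact B := isCompact_closedBall _ _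
  have hBm : MeasurableSet B := hBc.measurableSet
  have hcontA : Continuous (fderiv ℝ h) := hs.continuous_fderiv (by simp)
  have hdet : ∀ t : ℝ, Continuous fun x => (ContinuousLinearMap.id ℝ E + t • fderiv ℝ h x).det := by
    intro t
    exact ContinuousLinearMap.continuous_det.comp (by fun_prop)
  have hhc : Continuous h := hs.continuous
  have hnorm : ∀ x, ‖fderiv ℝ h x‖ ≤ K := fun x => norm_fderiv_le_of_lipschitz ℝ hK
  -- change of variables for small t
  have hcv : ∀ (t : ℝ), 0 ≤ t → t * K < 1 → ∀ ω : E → ℝ,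
      ∫ x in B, ω x = ∫ x in B, (ContinuousLinearMap.id ℝ E + t • fderiv ℝ h x).det
        * ω (x + t • h x) := by
    intro t ht htK ω
    obtain ⟨hinj, himg⟩ := aux_bij h K hK R hR t ht htK
    have := integral_image_eq_integral_abs_det_fderiv_smul (volume : Measure E) (s := B)
      (f := fun x => x + t • h x)
      (f' := fun x => ContinuousLinearMap.id ℝ E + t • fderiv ℝ h x) hBm
      (fun x _ => ((hasFDerivAt_id x).add
        ((hs.differentiable (by simp) x).hasFDerivAt.const_smul t)).hasFDerivWithinAt)
      hinj.injOn ω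
    rw [himg] at this
    rw [this]
    refine setIntegral_congr_fun hBm fun x _ => ?_
    simp only [smul_eq_mul]
    rw [abs_of_pos (aux_det_pos _ K t (hnorm x) ht htK)]
  -- bound
  obtain ⟨M, hM0, hMB, hMf⟩ : ∃ M : ℝ, 0 < M ∧ (∀ x ∈ B, ‖x - q‖ ≤ M) ∧
      (∀ x ∈ B, ‖x + h x - q‖ ≤ M) := by
    obtain ⟨M1, h1⟩ := hBc.exists_bound_of_continuousOn (f := fun x => x - q) (by fun_prop)
    obtain ⟨M2, h2⟩ := hBc.exists_bound_of_continuousOn (f := fun x => x + h x - q) (by fun_prop)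
    exact ⟨max 1 (max M1 M2), by positivity, fun x hx => (h1 x hx).trans (by simp),
      fun x hx => (h2 x hx).trans (by simp)⟩
  let ω : ℕ → E → ℝ := fun N y => (1 - ‖y - q‖ ^ 2 / M ^ 2) ^ N
  have hωc : ∀ N, Continuous (ω N) := fun N => by fun_prop
  have hmain : ∀ N : ℕ, ∫ x in B, ω N x
      = ∫ x in B, (ContinuousLinearMap.id ℝ E + (1 : ℝ) • fderiv ℝ h x).det
        * ω N (x + (1 : ℝ) • h x) := by
    intro N
    set m := Module.finrank ℝ E + 2 * N with hm
    let v : ℕ → ℝ := fun i => (i : ℝ) / ((m + 1) * (K + 1))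
    have hKp : (0 : ℝ) ≤ K := K.2
    have hv : Function.Injective v := by
      intro i j hij
      have hpos : (0 : ℝ) < (m + 1) * (K + 1) := by positivity
      have : (i : ℝ) = j := by
        simpa [v, div_left_inj' hpos.ne'] using hij
      exact_mod_cast this
    obtain ⟨w, hw⟩ := aux_weights m v hv
    have hw1 : ∑ i ∈ Finset.range (m + 1), w i = 1 := by
      have := hw 1 (by simp)
      simpa using this.symm
    have hpt : ∀ x, (ContinuousLinearMap.id ℝ E + (1 : ℝ) • fderiv ℝ h x).det
        * ω N (x + (1 : ℝ) • h x) = ∑ i ∈ Finset.range (m + 1), w i *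
        ((ContinuousLinearMap.id ℝ E + (v i) • fderiv ℝ h x).det * ω N (x + (v i) • h x)) := by
      intro x
      obtain ⟨P, hPd, hP⟩ := aux_det_poly (fderiv ℝ h x)
      let Q : Polynomial ℝ := Polynomial.C (-(‖h x‖ ^ 2 / M ^ 2)) * Polynomial.X ^ 2
        + Polynomial.C (-(2 * inner ℝ (x - q) (h x) / M ^ 2)) * Polynomial.X
        + Polynomial.C (1 - ‖x - q‖ ^ 2 / M ^ 2)
      have hQ : Q.natDegree ≤ 2 := Polynomial.natDegree_quadratic_le
      have hQe : ∀ t : ℝ, Q.eval t = 1 - ‖x + t • h x - q‖ ^ 2 / M ^ 2 := by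
        intro t
        have : x + t • h x - q = (x - q) + t • h x := by abel
        rw [this, norm_add_sq_real, norm_smul, inner_smul_right, mul_pow, Real.norm_eq_abs, sq_abs]
        simp [Q]
        ring
      have hPQ : ∀ t : ℝ, (P * Q ^ N).eval t
          = (ContinuousLinearMap.id ℝ E + t • fderiv ℝ h x).det * ω N (x + t • h x) := by
        intro t
        rw [Polynomial.eval_mul, Polynomial.eval_pow, hP, hQe]
      have hd : (P * Q ^ N).natDegree ≤ m := by
        refine Polynomial.natDegree_mul_le.trans ?_
        have h1 : (Q ^ N).natDegree ≤ N * 2 :=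
          Polynomial.natDegree_pow_le.trans (Nat.mul_le_mul_left N hQ)
        omega
      have := hw _ hd
      simpa only [hPQ] using this
    have hvi : ∀ i ∈ Finset.range (m + 1), 0 ≤ v i ∧ v i * K < 1 := by
      intro i hi
      refine ⟨by positivity, ?_⟩
      have hi' : (i : ℝ) < m + 1 := by exact_mod_cast Finset.mem_range.1 hi
      have hpos : (0 : ℝ) < (m + 1) * (K + 1) := by positivity
      simp only [v]
      rw [div_mul_eq_mul_div, div_lt_one hpos]
      nlinarith
    simp_rw [hpt]
    rw [integral_finsetSum]
    · calc ∫ x in B, ω N x = (∑ i ∈ Finset.range (m + 1), w i) * ∫ x in B, ω N x := by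
            rw [hw1, one_mul]
        _ = _ := by
          rw [Finset.sum_mul]
          refine Finset.sum_congr rfl fun i hi => ?_
          rw [integral_const_mul, ← hcv (v i) (hvi i hi).1 (hvi i hi).2]
    · intro i _
      refine (Continuous.continuousOn ?_).integrableOn_compact hBc
      exact continuous_const.mul ((hdet _).mul ((hωc N).comp (by fun_prop)))
  -- estimates
  set C : ℝ := ∫ x in B, |(ContinuousLinearMap.id ℝ E + (1 : ℝ) • fderiv ℝ h x).det| with hC
  set a : ℝ := 1 - η ^ 2 / M ^ 2 with ha
  set b : ℝ := 1 - (η / 2) ^ 2 / M ^ 2 with hb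
  have hqB : closedBall q (η / 2) ⊆ B := by
    intro x hx
    simp only [mem_closedBall, hB, dist_zero_right] at hx ⊢
    rw [dist_eq_norm] at hx
    have := norm_le_norm_add_norm_sub' x q
    linarith [le_max_right R0 (‖q‖ + η)]
  have hq : q ∈ B := hqB (mem_closedBall_self (by positivity))
  have hηM : η ≤ M := (hcon q).trans (hMf q hq)
  have ha0 : 0 ≤ a := by
    rw [ha, sub_nonneg, div_le_one (by positivity)]
    gcongr
  have hab : a < b := by
    rw [ha, hb]
    have : (η / 2) ^ 2 < η ^ 2 := by nlinarith
    gcongr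
  have hb0 : 0 < b := ha0.trans_lt hab
  set V : ℝ := volume.real (closedBall q (η / 2)) with hV
  have hVpos : 0 < V := by
    rw [hV, measureReal_def]
    exact ENNReal.toReal_pos (measure_closedBall_pos _ _ (by positivity)).ne'
      (isCompact_closedBall _ _).measure_lt_top.ne
  have hω0 : ∀ N, ∀ x ∈ B, 0 ≤ ω N x := by
    intro N x hx
    refine pow_nonneg ?_ _
    rw [sub_nonneg, div_le_one (by positivity)]
    have := hMB x hx
    gcongr
  have hupper : ∀ N, ∫ x in B, ω N x ≤ a ^ N * C := by
    intro N
    rw [hmain N, hC, ← integral_const_mul]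
    refine setIntegral_mono_on ?_ ?_ hBm fun x hx => ?_
    · exact ((hdet _).mul ((hωc N).comp (by fun_prop))).continuousOn.integrableOn_compact hBc
    · exact (continuous_const.mul (hdet _).abs).continuousOn.integrableOn_compact hBc
    · have h1 : 0 ≤ ω N (x + (1 : ℝ) • h x) := by
        refine pow_nonneg ?_ _
        rw [sub_nonneg, div_le_one (by positivity)]
        have := hMf x hx
        rw [one_smul]
        gcongr
      have h2 : ω N (x + (1 : ℝ) • h x) ≤ a ^ N := by
        refine pow_le_pow_left₀ ?_ ?_ _
        · rw [sub_nonneg, div_le_one (by positivity)]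
          have := hMf x hx
          rw [one_smul]
          gcongr
        · rw [one_smul]
          have := hcon x
          rw [ha]
          gcongr
      calc _ ≤ |(ContinuousLinearMap.id ℝ E + (1 : ℝ) • fderiv ℝ h x).det|
            * ω N (x + (1 : ℝ) • h x) := by gcongr; exact le_abs_self _
        _ ≤ |(ContinuousLinearMap.id ℝ E + (1 : ℝ) • fderiv ℝ h x).det| * a ^ N := by gcongr
        _ = _ := mul_comm _ _
  have hlower : ∀ N, b ^ N * V ≤ ∫ x in B, ω N x := by
    intro N
    calc b ^ N * V = ∫ x in closedBall q (η / 2), b ^ N := by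
          rw [setIntegral_const, smul_eq_mul, mul_comm]
      _ ≤ ∫ x in closedBall q (η / 2), ω N x := by
          refine setIntegral_mono_on ?_ ?_ measurableSet_closedBall fun x hx => ?_
          · exact continuousOn_const.integrableOn_compact (isCompact_closedBall _ _)
          · exact (hωc N).continuousOn.integrableOn_compact (isCompact_closedBall _ _)
          · refine pow_le_pow_left₀ hb0.le ?_ _
            rw [mem_closedBall, dist_eq_norm] at hx
            rw [hb]
            gcongr
      _ ≤ _ := by
          refine setIntegral_mono_set ((hωc N).continuousOn.integrableOn_compact hBc) ?_
            hqB.eventuallyLE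
          exact (ae_restrict_iff' hBm).2 (Filter.Eventually.of_forall fun x hx => hω0 N x hx)
  have hle : ∀ N, V ≤ C * (a / b) ^ N := by
    intro N
    have := (hlower N).trans (hupper N)
    rw [div_pow, mul_div_assoc', le_div_iff₀ (by positivity)]
    linarith
  have hlim : Filter.Tendsto (fun N : ℕ => C * (a / b) ^ N) Filter.atTop (nhds (C * 0)) :=
    (tendsto_pow_atTop_nhds_zero_of_lt_one (by positivity)
      ((div_lt_one hb0).2 hab)).const_mul C
  have := ge_of_tendsto' hlim hle
  linarith

lemma aux_surj_inner {E : Type*} [NormedAddCommGroup E] [InnerProductSpace ℝ E]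
    [FiniteDimensional ℝ E] (f : E → E) (hf : Continuous f) (K : Set E) (hK : IsCompact K)
    (hid : ∀ x ∉ K, f x = x) : Function.Surjective f := by
  intro q
  by_contra hq
  push Not at hq
  have hh : HasCompactSupport (fun x => f x - x) :=
    HasCompactSupport.intro hK fun x hx => by simp [hid x hx]
  obtain ⟨η, hη, hball⟩ : ∃ η > 0, ∀ x, η ≤ ‖f x - q‖ := by
    have h1 : Continuous fun x => ‖f x - q‖ := by fun_prop
    by_cases hqK : q ∈ K
    · have hpr : Filter.Tendsto (fun x => ‖f x - q‖) (Filter.cocompact E) Filter.atTop := by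
        have h2 : Filter.Tendsto (fun x : E => ‖x - q‖) (Filter.cocompact E) Filter.atTop := by
          have := tendsto_norm_cocompact_atTop (E := E)
          refine Filter.tendsto_atTop_mono (fun x => ?_)
            (Filter.tendsto_atTop_add_const_right _ (-‖q‖) this)
          have := norm_sub_norm_le x q
          linarith
        refine h2.congr' ?_
        filter_upwards [hK.compl_mem_cocompact] with x hx
        rw [hid x hx]
      obtain ⟨x0, hx0⟩ := h1.exists_forall_le hpr
      exact ⟨_, norm_pos_iff.2 (sub_ne_zero.2 (hq x0)), hx0⟩
    · exact absurd (hid q hqK) (hq q)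
  obtain ⟨g, hg, hgd, hgs⟩ := Continuous.exists_contDiff_approx (f := fun x => f x - x)
    (ε := fun _ => η / 2) 1 (by fun_prop) (by fun_prop) (fun _ => by positivity)
  have hgc : HasCompactSupport g := hh.mono hgs
  obtain ⟨x, hx⟩ := aux_smooth g hgc hg q (η / 2) (by positivity)
  have h1 := hgd x
  rw [dist_eq_norm] at h1
  have h2 := hball x
  have h3 : f x - q = (x + g x - q) - (g x - (f x - x)) := by abel
  rw [h3] at h2
  have := norm_sub_le (x + g x - q) (g x - (f x - x))
  linarith

/-- A continuous self-map of a finite-dimensional space which is the identity off a compact set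
is surjective. -/
lemma aux_surj {E : Type*} [NormedAddCommGroup E] [NormedSpace ℝ E]
    [FiniteDimensional ℝ E] (f : E → E) (hf : Continuous f) (K : Set E) (hK : IsCompact K)
    (hid : ∀ x ∉ K, f x = x) : Function.Surjective f := by
  let e := toEuclidean (E := E)
  have := aux_surj_inner (fun y => e (f (e.symm y))) (by fun_prop) (e '' K)
    (hK.image e.continuous) (fun y hy => by
      rw [hid, e.apply_symm_apply]
      intro hmem
      exact hy ⟨_, hmem, e.apply_symm_apply y⟩)
  intro q
  obtain ⟨y, hy⟩ := this (e q)
  exact ⟨_, e.injective hy⟩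

lemma aux_lip {D X : Type*} [TopologicalSpace D] [CompactSpace D] [MetricSpace X]
    (f : D → X) (hf : Continuous f) (hi : Function.Injective f) (c : C(D, ℝ)) (ε : ℝ)
    (hε : 0 < ε) : ∃ (g : X → ℝ) (K : ℝ≥0), LipschitzWith K g ∧ ∀ x, |g (f x) - c x| < ε := by
  let A : Subalgebra ℝ C(D, ℝ) :=
    { carrier := {φ | ∃ (g : X → ℝ) (K M : ℝ), 0 ≤ M ∧ (∀ x y, |g x - g y| ≤ K * dist x y) ∧
        (∀ x, |g x| ≤ M) ∧ ∀ x, g (f x) = φ x}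
      mul_mem' := by
        rintro φ ψ ⟨g, K, M, hM, hK, hb, he⟩ ⟨g', K', M', hM', hK', hb', he'⟩
        refine ⟨fun x => g x * g' x, K * M' + M * K', M * M', by positivity, ?_, ?_, ?_⟩
        · intro x y
          have h1 : g x * g' x - g y * g' y = (g x - g y) * g' x + g y * (g' x - g' y) := by ring
          rw [h1]
          calc _ ≤ |(g x - g y) * g' x| + |g y * (g' x - g' y)| := abs_add_le _ _
            _ = |g x - g y| * |g' x| + |g y| * |g' x - g' y| := by rw [abs_mul, abs_mul]
            _ ≤ (K * dist x y) * M' + M * (K' * dist x y) := by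
              have h2 := hK x y
              have h3 := hK' x y
              have h4 := hb' x
              have h5 := hb y
              have h6 := (abs_nonneg _).trans h2
              gcongr
            _ = _ := by ring
        · intro x
          rw [abs_mul]
          exact mul_le_mul (hb x) (hb' x) (abs_nonneg _) hM
        · intro x; simp [he, he']
      add_mem' := by
        rintro φ ψ ⟨g, K, M, hM, hK, hb, he⟩ ⟨g', K', M', hM', hK', hb', he'⟩
        refine ⟨fun x => g x + g' x, K + K', M + M', by positivity, ?_, ?_, ?_⟩
        · intro x y
          have h1 : g x + g' x - (g y + g' y) = (g x - g y) + (g' x - g' y) := by ring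
          rw [h1]
          refine (abs_add_le _ _).trans ?_
          linarith [hK x y, hK' x y]
        · intro x
          exact (abs_add_le _ _).trans (add_le_add (hb x) (hb' x))
        · intro x; simp [he, he']
      algebraMap_mem' := by
        intro r
        exact ⟨fun _ => r, 0, |r|, abs_nonneg _, by simp, by simp, by simp⟩ }
  have hsep : A.SeparatesPoints := by
    intro x y hxy
    have hne : f x ≠ f y := fun h => hxy (hi h)
    refine ⟨fun z => min (dist (f z) (f y)) 1, ⟨⟨fun z => min (dist (f z) (f y)) 1, by fun_prop⟩,
      ⟨fun z => min (dist z (f y)) 1, 1, 1, zero_le_one, ?_, ?_, fun _ => rfl⟩, rfl⟩, ?_⟩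
    · intro a b
      refine (abs_min_sub_min_le_max _ _ _ _).trans ?_
      simp only [sub_self, abs_zero, one_mul]
      exact max_le (abs_dist_sub_le _ _ _) dist_nonneg
    · intro a
      rw [abs_of_nonneg (le_min dist_nonneg zero_le_one)]
      exact min_le_right _ _
    · simp only [dist_self]
      have := dist_pos.2 hne
      have h2 : 0 < min (dist (f x) (f y)) 1 := lt_min this one_pos
      have h3 : min (0 : ℝ) 1 = 0 := by simp
      rw [h3]
      exact h2.ne'
  obtain ⟨⟨φ, g, K, M, hM, hK, hb, he⟩, hφ⟩ :=
    ContinuousMap.exists_mem_subalgebra_near_continuousMap_of_separatesPoints A hsep c ε hε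
  refine ⟨g, Real.toNNReal K, LipschitzWith.of_dist_le_mul fun x y => ?_, fun x => ?_⟩
  · rw [Real.dist_eq]
    refine (hK x y).trans ?_
    gcongr
    exact Real.le_coe_toNNReal K
  · rw [he]
    have := (φ - c).norm_coe_le_norm x
    exact lt_of_le_of_lt this hφ

lemma aux_lip_vec {n : ℕ} {D X : Type*} [TopologicalSpace D] [CompactSpace D] [MetricSpace X]
    (f : D → X) (hf : Continuous f) (hi : Function.Injective f)
    (c : D → EuclideanSpace ℝ (Fin n)) (hc : Continuous c) (ε : ℝ) (hε : 0 < ε) :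
    ∃ (g : X → EuclideanSpace ℝ (Fin n)) (K : ℝ≥0), LipschitzWith K g ∧
      ∀ x, ‖g (f x) - c x‖ < ε := by
  let e := EuclideanSpace.equiv (Fin n) ℝ
  let T : (Fin n → ℝ) →L[ℝ] EuclideanSpace ℝ (Fin n) := e.symm
  set ε' : ℝ := ε / (‖T‖ + 1) with hε'
  have hε'0 : 0 < ε' := by positivity
  have h : ∀ i, ∃ (g : X → ℝ) (K : ℝ≥0), LipschitzWith K g ∧ ∀ x, |g (f x) - e (c x) i| < ε' :=
    fun i => aux_lip f hf hi ⟨fun x => e (c x) i, by fun_prop⟩ ε' hε'0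
  choose g K hK hg using h
  have hL : LipschitzWith (∑ i, K i) (fun x i => g i x) := by
    refine LipschitzWith.of_dist_le_mul fun x y => ?_
    rw [dist_pi_le_iff (by positivity)]
    intro i
    refine ((hK i).dist_le_mul x y).trans ?_
    gcongr
    exact Finset.single_le_sum (f := K) (fun _ _ => zero_le) (Finset.mem_univ i)
  refine ⟨fun x => T (fun i => g i x), _, T.lipschitz.comp hL, fun x => ?_⟩
  have h1 : c x = T (e (c x)) := (e.symm_apply_apply (c x)).symm
  have h2 : ‖T (fun i => g i (f x)) - T (e (c x))‖ ≤ ‖T‖ * ε' := by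
    rw [← map_sub]
    refine T.le_opNorm_of_le ?_
    rw [pi_norm_le_iff_of_nonneg hε'0.le]
    intro i
    exact (hg i x).le
  rw [← h1] at h2
  refine lt_of_le_of_lt h2 ?_
  have h3 : (‖T‖ + 1) * ε' = ε := by rw [hε']; field_simp
  nlinarith

/-- Radial projection onto the closed unit ball. -/
lemma aux_proj (n : ℕ) : ∃ p : EuclideanSpace ℝ (Fin n) →
    ↥(Metric.closedBall (0 : EuclideanSpace ℝ (Fin n)) 1), Continuous p ∧
    (∀ x, (p x : EuclideanSpace ℝ (Fin n)) = (max 1 ‖x‖)⁻¹ • x) := by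
  have hmem : ∀ x : EuclideanSpace ℝ (Fin n), (max 1 ‖x‖)⁻¹ • x ∈
      Metric.closedBall (0 : EuclideanSpace ℝ (Fin n)) 1 := by
    intro x
    have h0 : 0 < max 1 ‖x‖ := lt_max_of_lt_left one_pos
    rw [mem_closedBall, dist_zero_right, norm_smul, norm_inv, Real.norm_of_nonneg h0.le,
      inv_mul_le_iff₀ h0, mul_one]
    exact le_max_right _ _
  refine ⟨fun x => ⟨_, hmem x⟩, ?_, fun x => rfl⟩
  refine Continuous.subtype_mk ?_ _
  have hm : Continuous fun x : EuclideanSpace ℝ (Fin n) => max 1 ‖x‖ := by fun_prop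
  exact (hm.inv₀ fun x => (lt_max_of_lt_left one_pos).ne').smul continuous_id

lemma aux_subset {n : ℕ} {X : Type*} [MetricSpace X]
    [MeasurableSpace X] [BorelSpace X] [ContractibleSpace X]
    (hμ : μH[(n + 1 : ℝ)] (Set.univ : Set X) = 0)
    (f₁ f₂ : ↥(Metric.closedBall (0 : EuclideanSpace ℝ (Fin n)) 1) → X)
    (h₁c : Continuous f₁) (h₁i : Function.Injective f₁)
    (h₂c : Continuous f₂) (h₂i : Function.Injective f₂)
    (hbd : f₁ '' {p | ‖(p : EuclideanSpace ℝ (Fin n))‖ = 1}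
         ⊆ f₂ '' {p | ‖(p : EuclideanSpace ℝ (Fin n))‖ = 1}) :
    range f₁ ⊆ range f₂ := by
  rintro _ ⟨x0, rfl⟩
  by_contra hx0
  have : CompactSpace ↥(Metric.closedBall (0 : EuclideanSpace ℝ (Fin n)) 1) :=
    isCompact_iff_compactSpace.1 (isCompact_closedBall _ _)
  obtain ⟨p, hpc, hp⟩ := aux_proj n
  have hp1 : ∀ x, ‖x‖ ≤ 1 → (p x : EuclideanSpace ℝ (Fin n)) = x := by
    intro x hx; rw [hp, max_eq_left hx]; simp
  have hp2 : ∀ x, 1 ≤ ‖x‖ → ‖(p x : EuclideanSpace ℝ (Fin n))‖ = 1 := by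
    intro x hx
    rw [hp, max_eq_right hx, norm_smul, norm_inv, norm_norm, inv_mul_cancel₀]
    linarith
  have hx0n : ‖(x0 : EuclideanSpace ℝ (Fin n))‖ < 1 := by
    have h1 : ‖(x0 : EuclideanSpace ℝ (Fin n))‖ ≤ 1 := by
      exact mem_closedBall_zero_iff.1 x0.2
    refine lt_of_le_of_ne h1 fun h => hx0 ?_
    obtain ⟨y, -, hy⟩ := hbd ⟨x0, h, rfl⟩
    exact ⟨y, hy⟩
  -- the second disc, reparametrised so that it agrees with the first one outside the unit ball
  obtain ⟨T, hT⟩ : ∃ T : C(EuclideanSpace ℝ (Fin n),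
      ↥(Metric.closedBall (0 : EuclideanSpace ℝ (Fin n)) 1)),
      ∀ x, 1 ≤ ‖x‖ → f₂ (T x) = f₁ (p x) := by
    let S : Set (EuclideanSpace ℝ (Fin n)) := {x | 1 ≤ ‖x‖}
    have hS : IsClosed S := isClosed_le continuous_const continuous_norm
    have he : Topology.IsClosedEmbedding f₂ := h₂c.isClosedEmbedding h₂i
    have hr : ∀ x : S, f₁ (p x) ∈ range f₂ := by
      intro x
      obtain ⟨y, -, hy⟩ := hbd ⟨p x, hp2 x x.2, rfl⟩
      exact ⟨y, hy⟩
    let e := he.isEmbedding.toHomeomorph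
    let σ : C(S, ↥(Metric.closedBall (0 : EuclideanSpace ℝ (Fin n)) 1)) :=
      ⟨fun x => e.symm ⟨f₁ (p x), hr x⟩, by fun_prop⟩
    have : TietzeExtension ↥(Metric.closedBall (0 : EuclideanSpace ℝ (Fin n)) 1) :=
      Metric.instTietzeExtensionClosedBall ℝ _ one_pos
    obtain ⟨T, hT⟩ := ContinuousMap.exists_restrict_eq hS σ
    refine ⟨T, fun x hx => ?_⟩
    have h1 : T x = σ ⟨x, hx⟩ := by rw [← hT]; rfl
    rw [h1]
    have h2 : e (e.symm ⟨f₁ (p x), hr ⟨x, hx⟩⟩) = ⟨f₁ (p x), hr ⟨x, hx⟩⟩ := e.apply_symm_apply _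
    exact congrArg Subtype.val h2
  -- the height function
  have hcl : IsClosed (range f₂) := (isCompact_range h₂c).isClosed
  have hne : (range f₂).Nonempty := ⟨_, x0, rfl⟩
  have hdpos : 0 < infDist (f₁ x0) (range f₂) := (hcl.notMem_iff_infDist_pos hne).1 hx0
  set δ : ℝ := infDist (f₁ x0) (range f₂) / 2 with hδ
  let ht : X → ℝ := fun y => infDist y (range f₂) - δ
  have hht : LipschitzWith 1 ht := by
    refine LipschitzWith.of_dist_le_mul fun x y => ?_
    have := (lipschitz_infDist_pt (range f₂)).dist_le_mul x y
    simpa [ht, Real.dist_eq] using this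
  have hht2 : ∀ y, ht (f₂ y) = -δ := by
    intro y
    have : infDist (f₂ y) (range f₂) = 0 := infDist_zero_of_mem ⟨y, rfl⟩
    simp [ht, this]
  obtain ⟨ρ, hρ, hρ1, hρ2⟩ : ∃ ρ > 0, ‖(x0 : EuclideanSpace ℝ (Fin n))‖ + ρ ≤ 1 ∧
      ∀ x : ↥(Metric.closedBall (0 : EuclideanSpace ℝ (Fin n)) 1),
        ‖(x : EuclideanSpace ℝ (Fin n)) - x0‖ < ρ → 0 < ht (f₁ x) := by
    have hc : Continuous fun x => ht (f₁ x) := hht.continuous.comp h₁c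
    have h0 : 0 < ht (f₁ x0) := by simp only [ht]; linarith
    obtain ⟨r, hr, hr2⟩ := Metric.mem_nhds_iff.1
      ((hc.isOpen_preimage _ isOpen_Ioi).mem_nhds (show x0 ∈ _ ⁻¹' (Ioi 0) from h0))
    refine ⟨min r (1 - ‖(x0 : EuclideanSpace ℝ (Fin n))‖), lt_min hr (by linarith), ?_, ?_⟩
    · linarith [min_le_right r (1 - ‖(x0 : EuclideanSpace ℝ (Fin n))‖)]
    · intro x hx
      refine hr2 ?_
      rw [mem_ball, Subtype.dist_eq, dist_eq_norm]
      exact hx.trans_le (min_le_left _ _)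
  obtain ⟨Ψ, K, hΨ, hΨ2⟩ := aux_lip_vec f₁ h₁c h₁i (fun x => (x : EuclideanSpace ℝ (Fin n)))
    continuous_subtype_val ρ hρ
  let Φ : X → EuclideanSpace ℝ (Fin n) × ℝ := fun y => (Ψ y, ht y)
  have hΦ : LipschitzWith (max K 1) Φ := hΨ.prodMk hht
  -- the contraction
  obtain ⟨c, ⟨H⟩⟩ := id_nullhomotopic X
  -- the map on the double
  let u : EuclideanSpace ℝ (Fin n) × ℝ → X := fun z => if 0 ≤ z.2 then f₁ (p z.1) else f₂ (T z.1)
  have huc : ∀ z : EuclideanSpace ℝ (Fin n) × ℝ, 1 ≤ ‖z‖ → ContinuousAt u z := by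
    intro z hz
    have hac : Continuous fun z : EuclideanSpace ℝ (Fin n) × ℝ => f₁ (p z.1) := by fun_prop
    have hbc : Continuous fun z : EuclideanSpace ℝ (Fin n) × ℝ => f₂ (T z.1) := by fun_prop
    rcases lt_trichotomy z.2 0 with h | h | h
    · refine hbc.continuousAt.congr ?_
      filter_upwards [(isOpen_Iio.preimage continuous_snd).mem_nhds (show z ∈ Prod.snd ⁻¹' Iio 0 from h)]
        with w hw
      simp only [u]
      rw [if_neg (not_le.2 hw)]
    · have hz1 : 1 ≤ ‖z.1‖ := by
        rw [Prod.norm_def, h, norm_zero] at hz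
        simpa [le_max_iff] using hz
      have hz2 : u z = f₁ (p z.1) := by simp [u, h]
      have hz3 : f₂ (T z.1) = f₁ (p z.1) := hT _ hz1
      rw [ContinuousAt, hz2]
      refine Filter.Tendsto.if' hac.continuousAt ?_
      have := hbc.continuousAt (x := z)
      rw [ContinuousAt, hz3] at this
      exact this
    · refine hac.continuousAt.congr ?_
      filter_upwards [(isOpen_Ioi.preimage continuous_snd).mem_nhds (show z ∈ Prod.snd ⁻¹' Ioi 0 from h)]
        with w hw
      simp only [u]
      rw [if_pos (le_of_lt hw)]
  let lam : EuclideanSpace ℝ (Fin n) × ℝ → unitInterval :=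
    fun z => Set.projIcc (0 : ℝ) 1 zero_le_one (2 - ‖z‖)
  have hlam : Continuous lam := continuous_projIcc.comp (by fun_prop)
  let τ : EuclideanSpace ℝ (Fin n) × ℝ → ℝ :=
    fun z => max 0 (min 1 (‖z‖ - 2))
  have hτ : Continuous τ := by fun_prop
  have hτ0 : ∀ z, 0 ≤ τ z := fun z => le_max_left _ _
  have hτ1 : ∀ z, τ z ≤ 1 := fun z => max_le zero_le_one (min_le_left _ _)
  let k : EuclideanSpace ℝ (Fin n) × ℝ → X := fun z => H (lam z, u z)
  have hkc : Continuous k := by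
    rw [continuous_iff_continuousAt]
    intro z
    rcases lt_or_ge ‖z‖ 1 with hz | hz
    · refine (continuousAt_const (y := c)).congr ?_
      filter_upwards [(isOpen_lt continuous_norm continuous_const).mem_nhds hz] with w hw
      have hw' : ‖w‖ < 1 := hw
      have : lam w = 1 := Set.projIcc_of_right_le _ (by linarith)
      simp [k, this]
    · exact H.continuous.continuousAt.comp (hlam.continuousAt.prodMk (huc z hz))
  let F : EuclideanSpace ℝ (Fin n) × ℝ → EuclideanSpace ℝ (Fin n) × ℝ :=
    fun z => (1 - τ z) • Φ (k z) + τ z • z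
  have hFc : Continuous F := by
    have := hΦ.continuous
    fun_prop
  have hF3 : ∀ z, 3 ≤ ‖z‖ → F z = z := by
    intro z hz
    have : τ z = 1 := by
      simp only [τ]
      rw [min_eq_left (by linarith)]; norm_num
    simp [F, this]
  have hF2 : ∀ z, ‖z‖ ≤ 2 → F z = Φ (k z) := by
    intro z hz
    have : τ z = 0 := by
      simp only [τ]
      rw [max_eq_left]
      exact (min_le_right _ _).trans (by linarith)
    simp [F, this]
  have hku : ∀ z, 2 ≤ ‖z‖ → k z = u z := by
    intro z hz
    have : lam z = 0 := Set.projIcc_of_le_left _ (by linarith)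
    simp [k, this]
  set q : EuclideanSpace ℝ (Fin n) × ℝ := (x0, 0) with hq
  have hFq : ∀ z, 2 ≤ ‖z‖ → F z ≠ q := by
    intro z hz hzq
    have e1 : (1 - τ z) • Ψ (u z) + τ z • z.1 = x0 := by
      have := congrArg Prod.fst hzq
      simpa [F, Φ, hku z hz] using this
    have e2 : (1 - τ z) * ht (u z) + τ z * z.2 = 0 := by
      have := congrArg Prod.snd hzq
      simpa [F, Φ, hku z hz] using this
    have t0 := hτ0 z
    have t1 := hτ1 z
    have hδpos : 0 < δ := by positivity
    rcases lt_or_ge z.2 0 with hs | hs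
    · have hu : u z = f₂ (T z.1) := by simp [u, not_le.2 hs]
      rw [hu, hht2] at e2
      rcases eq_or_lt_of_le t0 with h | h
      · rw [← h] at e2; linarith
      · nlinarith [mul_nonneg (sub_nonneg.2 t1) hδpos.le, mul_pos h (neg_pos.2 hs)]
    · have hu : u z = f₁ (p z.1) := by simp [u, hs]
      rw [hu] at e1 e2
      have hd := hΨ2 (p z.1)
      -- the convex combination of the projection and the point
      have hx' : ‖((1 - τ z) • (p z.1 : EuclideanSpace ℝ (Fin n)) + τ z • z.1) - x0‖ < ρ := by
        have h1 : ((1 - τ z) • (p z.1 : EuclideanSpace ℝ (Fin n)) + τ z • z.1) - x0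
            = -((1 - τ z) • (Ψ (f₁ (p z.1)) - (p z.1 : EuclideanSpace ℝ (Fin n)))) := by
          rw [← e1, smul_sub]; abel
        rw [h1, norm_neg, norm_smul, Real.norm_of_nonneg (sub_nonneg.2 t1)]
        have h2 := norm_nonneg (Ψ (f₁ (p z.1)) - (p z.1 : EuclideanSpace ℝ (Fin n)))
        nlinarith
      rcases lt_or_ge ‖z.1‖ 1 with hz1 | hz1
      · have hpz := hp1 z.1 hz1.le
        have h3 : (1 - τ z) • (p z.1 : EuclideanSpace ℝ (Fin n)) + τ z • z.1
            = (p z.1 : EuclideanSpace ℝ (Fin n)) := by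
          rw [hpz, ← add_smul]; simp
        rw [h3] at hx'
        have h4 := hρ2 _ hx'
        have h5 : 2 ≤ z.2 := by
          rw [Prod.norm_def, le_max_iff] at hz
          rcases hz with hz | hz
          · linarith
          · rwa [Real.norm_of_nonneg hs] at hz
        rcases eq_or_lt_of_le t0 with h | h
        · rw [← h] at e2; linarith
        · nlinarith [mul_nonneg (sub_nonneg.2 t1) h4.le]
      · have h3 : (1 - τ z) • (p z.1 : EuclideanSpace ℝ (Fin n)) + τ z • z.1
            = ((1 - τ z) * ‖z.1‖⁻¹ + τ z) • z.1 := by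
          rw [hp, max_eq_right hz1, add_smul, mul_smul]
        have h6 : 1 ≤ ‖((1 - τ z) * ‖z.1‖⁻¹ + τ z) • z.1‖ := by
          have h7 : 0 < ‖z.1‖ := by linarith
          rw [norm_smul, Real.norm_of_nonneg (by
            have := sub_nonneg.2 t1
            positivity), add_mul, mul_assoc, inv_mul_cancel₀ h7.ne']
          nlinarith
        rw [h3] at hx'
        have h8 := norm_sub_norm_le (((1 - τ z) * ‖z.1‖⁻¹ + τ z) • z.1)
          (x0 : EuclideanSpace ℝ (Fin n))
        linarith
  -- pick a missed point
  let Kc : Set (EuclideanSpace ℝ (Fin n) × ℝ) := closedBall 0 3 ∩ {z | 2 ≤ ‖z‖}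
  have hKc : IsCompact Kc :=
    (isCompact_closedBall _ _).inter_right (isClosed_le continuous_const continuous_norm)
  let N : Set (EuclideanSpace ℝ (Fin n) × ℝ) := (F '' Kc)ᶜ ∩ ball 0 3
  have hN : IsOpen N := (hKc.image hFc).isClosed.isOpen_compl.inter isOpen_ball
  have hqN : q ∈ N := by
    refine ⟨?_, ?_⟩
    · rintro ⟨z, hz, hzq⟩
      exact hFq z hz.2 hzq
    · rw [mem_ball, dist_zero_right, hq, Prod.norm_def]
      simp only [norm_zero]
      exact max_lt (by linarith) (by norm_num)
  obtain ⟨q', hq'N, hq'⟩ : ∃ q' ∈ N, q' ∉ range Φ := by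
    by_contra hcon
    push Not at hcon
    have hdim : Module.finrank ℝ (EuclideanSpace ℝ (Fin n) × ℝ) = n + 1 := by simp
    have h0 : μH[(n + 1 : ℝ)] (range Φ) = 0 := by
      have := hΦ.hausdorffMeasure_image_le (d := (n + 1 : ℝ)) (by positivity) univ
      rw [hμ, mul_zero, image_univ] at this
      exact le_antisymm this (zero_le)
    have h1 : μH[(n + 1 : ℝ)] N = 0 := measure_mono_null hcon h0
    have h2 : (Module.finrank ℝ (EuclideanSpace ℝ (Fin n) × ℝ) : ℝ) = n + 1 := by
      rw [hdim]; push_cast; ring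
    rw [← h2] at h1
    exact (hN.measure_pos _ ⟨q, hqN⟩).ne' h1
  obtain ⟨z, hz⟩ := aux_surj F hFc (closedBall 0 3) (isCompact_closedBall _ _)
    (fun z hz => hF3 z (by
      rw [mem_closedBall, dist_zero_right] at hz
      linarith)) q'
  rcases le_or_gt ‖z‖ 2 with h | h
  · exact hq' ⟨k z, by rw [← hF2 z h, hz]⟩
  · rcases le_or_gt ‖z‖ 3 with h3 | h3
    · exact hq'N.1 ⟨z, ⟨by simpa using h3, h.le⟩, hz⟩
    · have := hq'N.2
      rw [← hz, hF3 z h3.le, mem_ball, dist_zero_right] at this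
      linarith

/-- If `X` is a contractible metric space with zero `(n+1)`-dimensional Hausdorff measure,
and `D₁, D₂ ⊂ X` are embedded closed `n`-dimensional balls having the same boundary,
then `D₁ = D₂`. -/
theorem embedded_balls_with_same_boundary_eq {n : ℕ} {X : Type*} [MetricSpace X]
    [MeasurableSpace X] [BorelSpace X] [ContractibleSpace X]
    (hμ : μH[(n + 1 : ℝ)] (Set.univ : Set X) = 0)
    (D₁ D₂ : Set X)
    (f₁ f₂ : ↥(Metric.closedBall (0 : EuclideanSpace ℝ (Fin n)) 1) → X)
    (h₁c : Continuous f₁) (h₁i : Function.Injective f₁) (h₁r : Set.range f₁ = D₁)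
    (h₂c : Continuous f₂) (h₂i : Function.Injective f₂) (h₂r : Set.range f₂ = D₂)
    (hbd : f₁ '' {p | ‖(p : EuclideanSpace ℝ (Fin n))‖ = 1}
         = f₂ '' {p | ‖(p : EuclideanSpace ℝ (Fin n))‖ = 1}) :
    D₁ = D₂ := by
  rw [← h₁r, ← h₂r]
  exact Subset.antisymm (aux_subset hμ f₁ f₂ h₁c h₁i h₂c h₂i hbd.subset)
    (aux_subset hμ f₂ f₁ h₂c h₂i h₁c h₁i hbd.symm.subset)
end

section
/- A length space X is a metric tree if and only if there exists no injective Lipschitz map α:S¹→X. -/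
open Set Metric
open scoped ENNReal NNReal

/-- `X` is a geodesic space if any two points are joined by a curve whose length
equals the distance between them. -/
def IsGeodesicSpace (X : Type*) [PseudoEMetricSpace X] : Prop :=
  ∀ x y : X, ∃ γ : ℝ → X, IsCurveOn γ x y ∧ eVariationOn γ (Set.Icc 0 1) = edist x y

/-- `A` is an arc with endpoints `x` and `y`: a homeomorphic image of `[0,1]`,
parameterized by an injective continuous curve from `x` to `y`. -/
def IsArc {X : Type*} [PseudoEMetricSpace X] (A : Set X) (x y : X) : Prop :=
  ∃ γ : ℝ → X, IsCurveOn γ x y ∧ Set.InjOn γ (Set.Icc 0 1) ∧ γ '' Set.Icc 0 1 = A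

/-- `A` is a rectifiable arc with endpoints `x` and `y`. -/
def IsRectArc {X : Type*} [PseudoEMetricSpace X] (A : Set X) (x y : X) : Prop :=
  ∃ γ : ℝ → X, IsCurveOn γ x y ∧ Set.InjOn γ (Set.Icc 0 1) ∧ γ '' Set.Icc 0 1 = A ∧
    eVariationOn γ (Set.Icc 0 1) ≠ ⊤

/-- A metric tree: a geodesic space in which any two distinct points are joined by a
unique arc. -/
def IsMetricTree (X : Type*) [PseudoEMetricSpace X] : Prop :=
  IsGeodesicSpace X ∧ ∀ x y : X, x ≠ y → ∃! A : Set X, IsArc A x y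

/-- The unit circle `S¹ ⊂ ℝ²` with its induced metric. -/
abbrev Circle' : Type := ↥(Metric.sphere (0 : EuclideanSpace ℝ (Fin 2)) 1)

section Helpers

variable {X : Type*} [MetricSpace X]

/-- `f` is an `L`-Lipschitz path from `x` to `y` inside `S`. -/
def LP (S : Set X) (x y : X) (L : ℝ) (f : ℝ → X) : Prop :=
  (∀ s t, dist (f s) (f t) ≤ L * |s - t|) ∧ f 0 = x ∧ f 1 = y ∧ ∀ t, f t ∈ S

lemma lip_continuous {L : ℝ} {f : ℝ → X} (h : ∀ s t, dist (f s) (f t) ≤ L * |s - t|) :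
    Continuous f := by
  have : LipschitzWith L.toNNReal f := by
    apply LipschitzWith.of_dist_le_mul
    intro s t
    refine (h s t).trans ?_
    rw [Real.dist_eq]
    gcongr
    exact Real.le_coe_toNNReal L
  exact this.continuous

lemma LP.dist_le {S : Set X} {x y : X} {L : ℝ} {f : ℝ → X} (h : LP S x y L f) :
    dist x y ≤ L := by
  have := h.1 0 1
  rw [h.2.1, h.2.2.1] at this
  simpa using this

lemma LP.mono {S T : Set X} {x y : X} {L : ℝ} {f : ℝ → X} (h : LP S x y L f) (hST : S ⊆ T) :
    LP T x y L f := ⟨h.1, h.2.1, h.2.2.1, fun t => hST (h.2.2.2 t)⟩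

lemma lip_glue {C c : ℝ} {f g : ℝ → X} (hf : ∀ s t, dist (f s) (f t) ≤ C * |s - t|)
    (hg : ∀ s t, dist (g s) (g t) ≤ C * |s - t|) (hc : f c = g c) (s t : ℝ) :
    dist ((fun u => if u ≤ c then f u else g u) s) ((fun u => if u ≤ c then f u else g u) t)
      ≤ C * |s - t| := by
  have key : ∀ s t, s ≤ c → c ≤ t → dist (f s) (g t) ≤ C * |s - t| := by
    intro s t hs ht
    have h1 := hf s c
    have h2 := hg c t
    have h3 := dist_triangle (f s) (f c) (g t)
    rw [hc] at h3 h1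
    rw [abs_sub_comm, abs_of_nonneg (by linarith)] at h1 h2 ⊢
    nlinarith
  by_cases h1 : s ≤ c <;> by_cases h2 : t ≤ c <;> simp only [h1, h2, if_true, if_false]
  · exact hf s t
  · exact key s t h1 (by linarith)
  · rw [dist_comm, abs_sub_comm]
    exact key t s h2 (by linarith)
  · exact hg s t

lemma lp_of_on {S : Set X} {x y : X} {L : ℝ} {f : ℝ → X} (hL : 0 ≤ L)
    (h : ∀ s ∈ Icc (0:ℝ) 1, ∀ t ∈ Icc (0:ℝ) 1, dist (f s) (f t) ≤ L * |s - t|)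
    (h0 : f 0 = x) (h1 : f 1 = y) (hS : ∀ t ∈ Icc (0:ℝ) 1, f t ∈ S) :
    ∃ g, LP S x y L g := by
  refine ⟨fun t => f (projIcc (0:ℝ) 1 zero_le_one t), ?_, ?_, ?_, ?_⟩
  · intro s t
    refine (h _ (projIcc _ _ _ _).2 _ (projIcc _ _ _ _).2).trans ?_
    exact mul_le_mul_of_nonneg_left (abs_projIcc_sub_projIcc (zero_le_one' ℝ)) hL
  · simp [h0]
  · simp [h1]
  · intro t
    exact hS _ (projIcc _ _ _ _).2

lemma exists_lp_of_curve {γ : ℝ → X} {x y : X} (hγ : IsCurveOn γ x y)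
    (hfin : eVariationOn γ (Icc 0 1) ≠ ⊤) :
    ∃ f, LP (γ '' Icc 0 1) x y (eVariationOn γ (Icc 0 1)).toReal f := by
  obtain ⟨hc, h0, h1⟩ := hγ
  have hbv : BoundedVariationOn γ (Icc 0 1) := hfin
  have hl := hbv.locallyBoundedVariationOn
  set V := variationOnFromTo γ (Icc 0 1) 0 with hV
  have m0 : (0:ℝ) ∈ Icc (0:ℝ) 1 := by simp
  have m1 : (1:ℝ) ∈ Icc (0:ℝ) 1 := by simp
  have hV0 : V 0 = 0 := variationOnFromTo.self _ _ _
  have hV1 : V 1 = (eVariationOn γ (Icc 0 1)).toReal := by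
    rw [hV, variationOnFromTo.eq_of_le _ _ zero_le_one, inter_self]
  have hsub : ∀ s ∈ Icc (0:ℝ) 1, ∀ t ∈ Icc (0:ℝ) 1, s ≤ t →
      V t - V s = (eVariationOn γ (Icc 0 1 ∩ Icc s t)).toReal := by
    intro s hs t ht hst
    rw [← variationOnFromTo.eq_of_le _ _ hst]
    have := variationOnFromTo.add hl m0 hs ht
    simp only [hV]
    linarith
  have hd' : ∀ s ∈ Icc (0:ℝ) 1, ∀ t ∈ Icc (0:ℝ) 1, s ≤ t → dist (γ s) (γ t) ≤ V t - V s := by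
    intro s hs t ht hst
    rw [hsub s hs t ht hst]
    exact (hl s t hs ht).dist_le ⟨hs, by simp [hst]⟩ ⟨ht, by simp [hst]⟩
  have hd : ∀ s ∈ Icc (0:ℝ) 1, ∀ t ∈ Icc (0:ℝ) 1, dist (γ s) (γ t) ≤ |V s - V t| := by
    intro s hs t ht
    rcases le_total s t with h | h
    · rw [abs_sub_comm]
      exact (hd' s hs t ht h).trans (le_abs_self _)
    · rw [dist_comm]
      exact (hd' t ht s hs h).trans (le_abs_self _)
  have hVc : ContinuousOn V (Icc 0 1) := by
    intro t ht
    have hr := hbv.tendsto_eVariationOn_Icc_zero_right t ((hc t ht).mono inter_subset_left)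
    have hle := hbv.tendsto_eVariationOn_Icc_zero_left (x := t) ((hc t ht).mono inter_subset_left)
    have hr' := (ENNReal.tendsto_toReal ENNReal.zero_ne_top).comp hr
    have hle' := (ENNReal.tendsto_toReal ENNReal.zero_ne_top).comp hle
    have hs := hr'.add hle'
    rw [ContinuousWithinAt, tendsto_iff_dist_tendsto_zero]
    simp only [ENNReal.toReal_zero, add_zero] at hs
    refine squeeze_zero' (Filter.Eventually.of_forall fun _ => dist_nonneg) ?_ hs
    filter_upwards [self_mem_nhdsWithin] with s hs
    simp only [Function.comp]
    rw [Real.dist_eq]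
    rcases le_total s t with h | h
    · rw [abs_sub_comm, hsub s hs t ht h, abs_of_nonneg ENNReal.toReal_nonneg]
      linarith [@ENNReal.toReal_nonneg (eVariationOn γ (Icc 0 1 ∩ Icc t s))]
    · rw [hsub t ht s hs h, abs_of_nonneg ENNReal.toReal_nonneg]
      linarith [@ENNReal.toReal_nonneg (eVariationOn γ (Icc 0 1 ∩ Icc s t))]
  set ℓ := (eVariationOn γ (Icc 0 1)).toReal with hℓ
  have hℓ0 : 0 ≤ ℓ := ENNReal.toReal_nonneg
  have hivt : ∀ u : ℝ, ∃ t ∈ Icc (0:ℝ) 1, u ∈ Icc (0:ℝ) 1 → V t = ℓ * u := by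
    intro u
    by_cases hu : u ∈ Icc (0:ℝ) 1
    · have : ℓ * u ∈ Icc (V 0) (V 1) := by
        rw [hV0, hV1]
        exact ⟨mul_nonneg hℓ0 hu.1, by nlinarith [hu.2]⟩
      obtain ⟨t, ht, h⟩ := intermediate_value_Icc zero_le_one hVc this
      exact ⟨t, ht, fun _ => h⟩
    · exact ⟨0, m0, fun h => absurd h hu⟩
  choose τ hτ hVτ using hivt
  apply lp_of_on (f := fun u => γ (τ u)) hℓ0
  · intro s hs t ht
    refine (hd _ (hτ s) _ (hτ t)).trans ?_
    rw [hVτ s hs, hVτ t ht, ← mul_sub, abs_mul, abs_of_nonneg hℓ0]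
  · rw [← h0]
    have := hd _ (hτ 0) 0 m0
    rw [hVτ 0 m0, hV0] at this
    exact dist_le_zero.1 (by simpa using this)
  · rw [← h1]
    have := hd _ (hτ 1) 1 m1
    rw [hVτ 1 m1, hV1] at this
    exact dist_le_zero.1 (by simpa using this)
  · intro t _
    exact mem_image_of_mem _ (hτ t)

lemma exists_min_lp {S : Set X} (hS : IsCompact S) {x y : X} (hxy : x ≠ y) {L : ℝ} {f : ℝ → X}
    (hf : LP S x y L f) :
    ∃ L' g, LP S x y L' g ∧ InjOn g (Icc 0 1) ∧ ∀ M h, LP S x y M h → L' ≤ M := by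
  set C : Set (ℝ × (ℝ → X)) := {p | LP S x y p.1 p.2 ∧ p.1 ≤ L} with hC
  have hCc : IsCompact C := by
    apply IsCompact.of_isClosed_subset
      (isCompact_Icc (a := (0:ℝ)) (b := L) |>.prod (isCompact_univ_pi (fun _ : ℝ => hS)))
    · have : C = (⋂ s : ℝ, ⋂ t : ℝ, {p : ℝ × (ℝ → X) | dist (p.2 s) (p.2 t) ≤ p.1 * |s - t|}) ∩
          ({p | p.2 0 = x} ∩ ({p | p.2 1 = y} ∩ ((⋂ t : ℝ, {p | p.2 t ∈ S}) ∩ {p | p.1 ≤ L}))) := by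
        ext p
        simp [hC, LP, and_assoc]
      rw [this]
      have hev : ∀ s : ℝ, Continuous fun p : ℝ × (ℝ → X) => p.2 s :=
        fun s => (continuous_apply s).comp continuous_snd
      refine IsClosed.inter (isClosed_iInter fun s => isClosed_iInter fun t => ?_)
        (IsClosed.inter ?_ (IsClosed.inter ?_ (IsClosed.inter (isClosed_iInter fun t => ?_) ?_)))
      · exact isClosed_le ((hev s).dist (hev t)) (continuous_fst.mul continuous_const)
      · exact isClosed_eq (hev 0) continuous_const
      · exact isClosed_eq (hev 1) continuous_const
      · exact hS.isClosed.preimage (hev t)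
      · exact isClosed_le continuous_fst continuous_const
    · rintro ⟨l, g⟩ ⟨h1, h2⟩
      exact ⟨⟨dist_nonneg.trans h1.dist_le, h2⟩, fun t _ => h1.2.2.2 t⟩
  obtain ⟨⟨L', g⟩, ⟨hg, hL'⟩, hmin⟩ := hCc.exists_isMinOn ⟨(L, f), hf, le_rfl⟩
    continuous_fst.continuousOn
  have hmin' : ∀ M h, LP S x y M h → L' ≤ M := by
    intro M h hh
    by_cases hM : M ≤ L
    · exact hmin (a := (M, h)) ⟨hh, hM⟩
    · exact le_trans hL' (by linarith)
  have hLpos : 0 < L' := lt_of_lt_of_le (dist_pos.2 hxy) hg.dist_le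
  have key : ∀ s ∈ Icc (0:ℝ) 1, ∀ t ∈ Icc (0:ℝ) 1, s < t → g s ≠ g t := by
    intro s hs t ht hst hgst
    simp only at hg
    have hδ : 0 < 1 - (t - s) := by
      rcases lt_or_ge (t - s) 1 with h | h
      · linarith
      · have hs0 : s = 0 := by linarith [hs.1, ht.2]
        have ht1 : t = 1 := by linarith [hs.1, ht.2]
        rw [hs0, ht1, hg.2.1, hg.2.2.1] at hgst
        exact absurd hgst hxy
    set k := 1 - (t - s) with hk
    have hlp : LP S x y (L' * k)
        (fun u => if u ≤ s / k then g (u * k) else g (u * k + (t - s))) := by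
      refine ⟨?_, ?_, ?_, ?_⟩
      · apply lip_glue (f := fun u => g (u * k)) (g := fun u => g (u * k + (t - s)))
        · intro a b
          refine (hg.1 _ _).trans (le_of_eq ?_)
          rw [← sub_mul, abs_mul, abs_of_pos hδ]; ring
        · intro a b
          refine (hg.1 _ _).trans (le_of_eq ?_)
          rw [add_sub_add_right_eq_sub, ← sub_mul, abs_mul, abs_of_pos hδ]; ring
        · rw [div_mul_cancel₀ _ hδ.ne', hgst]
          congr 1; ring
      · have : (0:ℝ) ≤ s / k := div_nonneg hs.1 hδ.le
        simp [this, hg.2.1]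
      · by_cases h : (1:ℝ) ≤ s / k
        · have h' := (le_div_iff₀ hδ).1 h
          have ht1 : t = 1 := by linarith [ht.2]
          have : 1 * k = s := by rw [hk, ht1]; ring
          simp only [h, if_true]
          rw [this, hgst, ht1, hg.2.2.1]
        · simp only [h, if_false]
          rw [← hg.2.2.1]
          congr 1
          rw [hk]; ring
      · intro u
        by_cases h : u ≤ s / k
        · simp only [h, if_true]; exact hg.2.2.2 _
        · simp only [h, if_false]; exact hg.2.2.2 _
    have := hmin' _ _ hlp
    nlinarith
  refine ⟨L', g, hg, ?_, hmin'⟩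
  intro s hs t ht hst
  rcases lt_trichotomy s t with h | h | h
  · exact absurd hst (key s hs t ht h)
  · exact h
  · exact absurd hst.symm (key t ht s hs h)

lemma exists_inj_lp {S : Set X} {x y : X} (hxy : x ≠ y) {L : ℝ} {f : ℝ → X}
    (hf : LP S x y L f) :
    ∃ L' ≤ L, ∃ g, LP S x y L' g ∧ InjOn g (Icc 0 1) := by
  have hc : IsCompact (f '' Icc 0 1) := isCompact_Icc.image (lip_continuous hf.1)
  obtain ⟨f', hf'⟩ := lp_of_on (S := f '' Icc 0 1) (x := x) (y := y) (L := L) (f := f)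
    (dist_nonneg.trans hf.dist_le) (fun s _ t _ => hf.1 s t) hf.2.1 hf.2.2.1
    (fun t ht => mem_image_of_mem _ ht)
  obtain ⟨L', g, hg, hinj, hmin⟩ := exists_min_lp hc hxy hf'
  refine ⟨L', hmin _ _ hf', g, hg.mono ?_, hinj⟩
  rintro _ ⟨t, _, rfl⟩
  exact hf.2.2.2 t

lemma LP.trans {S : Set X} {x y z : X} {L M : ℝ} {f g : ℝ → X}
    (hf : LP S x y L f) (hg : LP S y z M g) : ∃ N h, LP S x z N h := by
  refine ⟨2 * max L M, fun u => if u ≤ 1 / 2 then f (2 * u) else g (2 * u - 1), ?_, ?_, ?_, ?_⟩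
  · apply lip_glue (f := fun u => f (2 * u)) (g := fun u => g (2 * u - 1))
    · intro s t
      refine (hf.1 _ _).trans ?_
      rw [← mul_sub, abs_mul, abs_of_pos (by norm_num : (0:ℝ) < 2)]
      nlinarith [le_max_left L M, abs_nonneg (s - t)]
    · intro s t
      refine (hg.1 _ _).trans ?_
      rw [sub_sub_sub_cancel_right, ← mul_sub, abs_mul, abs_of_pos (by norm_num : (0:ℝ) < 2)]
      nlinarith [le_max_right L M, abs_nonneg (s - t)]
    · norm_num [hf.2.2.1, hg.2.1]
  · norm_num [hf.2.1]
  · norm_num [hg.2.2.1]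
  · intro u
    by_cases h : u ≤ 1 / 2
    · simp only [h, if_true]; exact hf.2.2.2 _
    · simp only [h, if_false]; exact hg.2.2.2 _

/-- an arc contained in another one with the same endpoints fills it. -/
lemma arc_fill {x y : X} {f γ : ℝ → X} (hf : ContinuousOn f (Icc 0 1)) (hf0 : f 0 = x)
    (hf1 : f 1 = y)
    (hγ : IsCurveOn γ x y) (hinj : InjOn γ (Icc 0 1)) (hsub : f '' Icc 0 1 ⊆ γ '' Icc 0 1) :
    γ '' Icc 0 1 ⊆ f '' Icc 0 1 := by
  rintro _ ⟨c, hc, rfl⟩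
  have hpre : IsPreconnected (f '' Icc 0 1) := isPreconnected_Icc.image _ hf
  have s1 : Icc 0 c ⊆ Icc (0:ℝ) 1 := Icc_subset_Icc_right hc.2
  have s2 : Icc c 1 ⊆ Icc (0:ℝ) 1 := Icc_subset_Icc_left hc.1
  have hu : IsClosed (γ '' Icc 0 c) := (isCompact_Icc.image_of_continuousOn (hγ.1.mono s1)).isClosed
  have hv : IsClosed (γ '' Icc c 1) := (isCompact_Icc.image_of_continuousOn (hγ.1.mono s2)).isClosed
  obtain ⟨p, hp, ⟨a, ha, hap⟩, ⟨b, hb, hbp⟩⟩ := isPreconnected_closed_iff.1 hpre _ _ hu hv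
    (by
      intro p hp
      obtain ⟨t, ht, rfl⟩ := hsub hp
      rcases le_total t c with h | h
      · exact Or.inl ⟨t, ⟨ht.1, h⟩, rfl⟩
      · exact Or.inr ⟨t, ⟨h, ht.2⟩, rfl⟩)
    ⟨x, ⟨0, by simp, hf0⟩, ⟨0, ⟨le_rfl, hc.1⟩, hγ.2.1⟩⟩
    ⟨y, ⟨1, by simp, hf1⟩, ⟨1, ⟨hc.2, le_rfl⟩, hγ.2.2⟩⟩
  have hab : a = b := hinj (s1 ha) (s2 hb) (hap.trans hbp.symm)
  have hac : a = c := le_antisymm ha.2 (hab ▸ hb.1)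
  rw [← hac, hap]
  exact hp

lemma circle_eq (p : Circle') : p.1 0 ^ 2 + p.1 1 ^ 2 = 1 := by
  have h : ‖p.1‖ = 1 := by simp
  have := EuclideanSpace.norm_sq_eq p.1
  rw [h] at this
  simpa [Fin.sum_univ_two] using this.symm

lemma circle_coord_le (p q : Circle') (i : Fin 2) : |p.1 i - q.1 i| ≤ dist p q := by
  rw [Subtype.dist_eq, dist_eq_norm]
  simpa using PiLp.norm_apply_le (p.1 - q.1) i

lemma circle_ext {p q : Circle'} (h0 : p.1 0 = q.1 0) (h1 : p.1 1 = q.1 1) : p = q := by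
  apply Subtype.ext
  ext i
  fin_cases i
  · exact h0
  · exact h1

/-- Two arcs meeting exactly at their endpoints give an injective Lipschitz circle. -/
lemma circle_of_arcs {F G : ℝ → X} {C : ℝ} (hF : ∀ s t, dist (F s) (F t) ≤ C * |s - t|)
    (hG : ∀ s t, dist (G s) (G t) ≤ C * |s - t|)
    (iF : InjOn F (Icc (-1) 1)) (iG : InjOn G (Icc (-1) 1))
    (e1 : F 1 = G 1) (e2 : F (-1) = G (-1))
    (hdis : ∀ w ∈ Ioo (-1:ℝ) 1, ∀ w' ∈ Icc (-1:ℝ) 1, F w ≠ G w') :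
    ∃ (K : ℝ≥0) (α : Circle' → X), Function.Injective α ∧ LipschitzWith K α := by
  have hC : 0 ≤ C := by
    have := dist_nonneg.trans (hF 0 1)
    simpa using this
  have hmem : ∀ p : Circle', p.1 0 ∈ Icc (-1:ℝ) 1 := by
    intro p
    have := circle_eq p
    constructor <;> nlinarith [sq_nonneg (p.1 1)]
  refine ⟨(3 * C).toNNReal, fun p => if 0 ≤ p.1 1 then F (p.1 0) else G (p.1 0), ?_, ?_⟩
  · have mixed : ∀ p q : Circle', 0 ≤ p.1 1 → ¬ 0 ≤ q.1 1 → F (p.1 0) ≠ G (q.1 0) := by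
      intro p q hp hq h
      have ep := circle_eq p
      have eq' := circle_eq q
      have hm := hmem p
      by_cases hi : p.1 0 ∈ Ioo (-1:ℝ) 1
      · exact hdis _ hi _ (hmem q) h
      · have hq0 : 0 < q.1 1 ^ 2 := by
          have : q.1 1 ≠ 0 := fun h => hq h.ge
          positivity
        have : p.1 0 = 1 ∨ p.1 0 = -1 := by
          by_contra hcon
          push Not at hcon
          exact hi ⟨lt_of_le_of_ne hm.1 hcon.2.symm, lt_of_le_of_ne hm.2 hcon.1⟩
        rcases this with h1 | h1
        · rw [h1, e1] at h
          have := iG (by simp) (hmem q) h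
          rw [← this] at eq'
          linarith
        · rw [h1, e2] at h
          have := iG (by simp) (hmem q) h
          rw [← this] at eq'
          linarith
    intro p q h
    have ep := circle_eq p
    have eq' := circle_eq q
    by_cases h1 : 0 ≤ p.1 1 <;> by_cases h2 : 0 ≤ q.1 1 <;>
      simp only [h1, h2, if_true, if_false] at h
    · have h0 := iF (hmem p) (hmem q) h
      refine circle_ext h0 ?_
      rw [← h0] at eq'
      nlinarith
    · exact absurd h (mixed p q h1 h2)
    · exact absurd h.symm (mixed q p h2 h1)
    · have h0 := iG (hmem p) (hmem q) h
      refine circle_ext h0 ?_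
      rw [← h0] at eq'
      nlinarith
  · have mixed : ∀ p q : Circle', 0 ≤ p.1 1 → ¬ 0 ≤ q.1 1 →
        dist (F (p.1 0)) (G (q.1 0)) ≤ 3 * C * dist p q := by
      intro p q hp hq
      have ep := circle_eq p
      have hm := hmem p
      have c0 := circle_coord_le p q 0
      have c1 := circle_coord_le p q 1
      rw [abs_of_pos (by linarith)] at c1
      obtain ⟨e, he, hep⟩ : ∃ e, F e = G e ∧ |p.1 0 - e| ≤ p.1 1 := by
        have hp1 : p.1 1 ≤ 1 := by nlinarith [sq_nonneg (p.1 0)]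
        rcases le_total 0 (p.1 0) with h | h
        · refine ⟨1, e1, ?_⟩
          rw [abs_sub_comm, abs_of_nonneg (by linarith [hm.2])]
          nlinarith [hm.2]
        · refine ⟨-1, e2, ?_⟩
          rw [abs_of_nonneg (by linarith [hm.1])]
          nlinarith [hm.1]
      have t1 := hF (p.1 0) e
      have t2 := hG e (q.1 0)
      have t3 := dist_triangle (F (p.1 0)) (F e) (G (q.1 0))
      rw [he] at t3 t1
      have t4 := abs_sub_le e (p.1 0) (q.1 0)
      rw [abs_sub_comm e (p.1 0)] at t4
      have hd : |p.1 0 - e| ≤ dist p q := by linarith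
      have hd2 : |e - q.1 0| ≤ 2 * dist p q := by linarith
      have := mul_le_mul_of_nonneg_left hd hC
      have := mul_le_mul_of_nonneg_left hd2 hC
      linarith
    have same : ∀ p q : Circle', C * |p.1 0 - q.1 0| ≤ 3 * C * dist p q := by
      intro p q
      have := mul_le_mul_of_nonneg_left (circle_coord_le p q 0) hC
      have : 0 ≤ C * dist p q := mul_nonneg hC dist_nonneg
      linarith
    apply LipschitzWith.of_dist_le_mul
    intro p q
    rw [Real.coe_toNNReal _ (by positivity)]
    by_cases h1 : 0 ≤ p.1 1 <;> by_cases h2 : 0 ≤ q.1 1 <;>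
      simp only [h1, h2, if_true, if_false]
    · exact (hF _ _).trans (same p q)
    · exact mixed p q h1 h2
    · rw [dist_comm, dist_comm p]
      exact mixed q p h2 h1
    · exact (hG _ _).trans (same p q)

lemma lip_affine {L A B M : ℝ} {f : ℝ → X} (hf : ∀ s t, dist (f s) (f t) ≤ L * |s - t|)
    (hL : 0 ≤ L) (hAB : |B - A| ≤ 1) (hM : L ≤ M) (s t : ℝ) :
    dist (f (A + (B - A) * ((s + 1) / 2))) (f (A + (B - A) * ((t + 1) / 2))) ≤ M * |s - t| := by
  refine (hf _ _).trans ?_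
  have : A + (B - A) * ((s + 1) / 2) - (A + (B - A) * ((t + 1) / 2)) = (B - A) * (s - t) * (1/2) := by
    ring
  rw [this, abs_mul, abs_mul, abs_of_pos (by norm_num : (0:ℝ) < 1/2)]
  have h1 : |B - A| * |s - t| * (1/2) ≤ |s - t| := by nlinarith [abs_nonneg (s - t)]
  calc _ ≤ L * |s - t| := by gcongr
    _ ≤ _ := by gcongr

lemma affine_mem {A B w : ℝ} (hA : A ∈ Icc (0:ℝ) 1) (hB : B ∈ Icc (0:ℝ) 1)
    (hw : w ∈ Icc (-1:ℝ) 1) : A + (B - A) * ((w + 1) / 2) ∈ Icc (0:ℝ) 1 := by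
  obtain ⟨a1, a2⟩ := hA
  obtain ⟨b1, b2⟩ := hB
  obtain ⟨w1, w2⟩ := hw
  constructor <;> nlinarith [mul_nonneg a1 (sub_nonneg.2 w2),
    mul_nonneg b1 (by linarith : 0 ≤ w + 1), mul_nonneg (sub_nonneg.2 a2) (sub_nonneg.2 w2),
    mul_nonneg (sub_nonneg.2 b2) (by linarith : 0 ≤ w + 1)]

lemma affine_inj {A B : ℝ} {f : ℝ → X} (hA : A ∈ Icc (0:ℝ) 1) (hB : B ∈ Icc (0:ℝ) 1)
    (hAB : A ≠ B) (hf : InjOn f (Icc 0 1)) :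
    InjOn (fun w => f (A + (B - A) * ((w + 1) / 2))) (Icc (-1) 1) := by
  intro s hs t ht h
  have := hf (affine_mem hA hB hs) (affine_mem hA hB ht) h
  have h2 : (B - A) * (s - t) = 0 := by linarith
  rcases mul_eq_zero.1 h2 with h3 | h3
  · exact absurd (by linarith) hAB
  · linarith

lemma image_subset_of_no_circle
    (hno : ¬ ∃ (K : ℝ≥0) (α : Circle' → X), Function.Injective α ∧ LipschitzWith K α)
    {S T : Set X} {x y : X} {L M : ℝ} {f g : ℝ → X} (hf : LP S x y L f) (hg : LP T x y M g)
    (fi : InjOn f (Icc 0 1)) (gi : InjOn g (Icc 0 1)) : f '' Icc 0 1 ⊆ g '' Icc 0 1 := by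
  rintro _ ⟨c, hc, rfl⟩
  by_contra hcon
  have fc := lip_continuous hf.1
  have gc := lip_continuous hg.1
  have hclosed : IsClosed (f ⁻¹' (g '' Icc 0 1)) :=
    (isCompact_Icc.image gc).isClosed.preimage fc
  set Z := f ⁻¹' (g '' Icc 0 1) with hZ
  have h0 : (0:ℝ) ∈ Z := ⟨0, by simp, by rw [hf.2.1, hg.2.1]⟩
  have h1 : (1:ℝ) ∈ Z := ⟨1, by simp, by rw [hf.2.2.1, hg.2.2.1]⟩
  obtain ⟨a, ha⟩ := (isCompact_Icc.inter_left hclosed : IsCompact (Z ∩ Icc 0 c)).exists_isGreatest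
    ⟨0, h0, by simp [hc.1]⟩
  obtain ⟨b, hb⟩ := (isCompact_Icc.inter_left hclosed : IsCompact (Z ∩ Icc c 1)).exists_isLeast
    ⟨1, h1, by simp [hc.2]⟩
  have hac : a < c := lt_of_le_of_ne ha.1.2.2 (by rintro rfl; exact hcon ha.1.1)
  have hcb : c < b := lt_of_le_of_ne hb.1.2.1 (by rintro rfl; exact hcon hb.1.1)
  have hZab : ∀ t ∈ Ioo a b, t ∉ Z := by
    intro t ht htZ
    rcases le_total t c with h | h
    · have := ha.2 ⟨htZ, (ha.1.2.1.trans ht.1.le), h⟩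
      linarith [ht.1]
    · have := hb.2 ⟨htZ, h, (ht.2.le.trans hb.1.2.2)⟩
      linarith [ht.2]
  have ha01 : a ∈ Icc (0:ℝ) 1 := ⟨ha.1.2.1, by linarith [hc.2]⟩
  have hb01 : b ∈ Icc (0:ℝ) 1 := ⟨by linarith [hc.1], hb.1.2.2⟩
  obtain ⟨u, hu, hua⟩ := ha.1.1
  obtain ⟨v, hv, hvb⟩ := hb.1.1
  have hab : a ≠ b := by linarith
  have huv : u ≠ v := by
    rintro rfl
    exact hab (fi ha01 hb01 (hua.symm.trans hvb))
  have hL : 0 ≤ L := dist_nonneg.trans hf.dist_le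
  have hM : 0 ≤ M := dist_nonneg.trans hg.dist_le
  have habs : ∀ {p q : ℝ}, p ∈ Icc (0:ℝ) 1 → q ∈ Icc (0:ℝ) 1 → |q - p| ≤ 1 := by
    intro p q hp hq
    rw [abs_le]
    constructor <;> linarith [hp.1, hp.2, hq.1, hq.2]
  apply hno
  refine circle_of_arcs (F := fun w => f (a + (b - a) * ((w + 1) / 2)))
    (G := fun w => g (u + (v - u) * ((w + 1) / 2))) (C := max L M)
    (lip_affine hf.1 hL (habs ha01 hb01) (le_max_left _ _))
    (lip_affine hg.1 hM (habs hu hv) (le_max_right _ _))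
    (affine_inj ha01 hb01 hab fi) (affine_inj hu hv huv gi) ?_ ?_ ?_
  · norm_num [hua, hvb]
  · norm_num [hua, hvb]
  · intro w hw w' hw' h
    refine hZab (a + (b - a) * ((w + 1) / 2)) ?_ ⟨_, affine_mem hu hv hw', h.symm⟩
    have : 0 < b - a := by linarith
    constructor <;> nlinarith [hw.1, hw.2]

lemma exists_geodesic (hl : IsLengthSpace X)
    (hno : ¬ ∃ (K : ℝ≥0) (α : Circle' → X), Function.Injective α ∧ LipschitzWith K α)
    {x y : X} (hxy : x ≠ y) : ∃ f, LP univ x y (dist x y) f ∧ InjOn f (Icc 0 1) := by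
  have h : ∀ ε > 0, ∃ L ≤ dist x y + ε, ∃ g, LP univ x y L g ∧ InjOn g (Icc 0 1) := by
    intro ε hε
    have hlt : sInf (curveLengths x y) < ENNReal.ofReal (dist x y + ε) := by
      rw [← hl x y, edist_dist]
      exact (ENNReal.ofReal_lt_ofReal_iff (by positivity)).2 (by linarith)
    obtain ⟨ℓ, ⟨γ, hγ, hvar⟩, hℓ⟩ := sInf_lt_iff.1 hlt
    have hfin : eVariationOn γ (Icc 0 1) ≠ ⊤ := by
      rw [hvar]; exact ne_top_of_lt hℓ
    obtain ⟨f, hf⟩ := exists_lp_of_curve hγ hfin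
    obtain ⟨L', hL', g, hg, gi⟩ := exists_inj_lp hxy hf
    refine ⟨L', hL'.trans ?_, g, hg.mono (subset_univ _), gi⟩
    rw [hvar]
    exact ENNReal.toReal_le_of_le_ofReal (by positivity) hℓ.le
  obtain ⟨L0, -, g0, hg0, gi0⟩ := h 1 one_pos
  have hc : IsCompact (g0 '' Icc 0 1) := isCompact_Icc.image (lip_continuous hg0.1)
  have hA : ∀ L g, LP univ x y L g → InjOn g (Icc 0 1) → ∃ f, LP (g0 '' Icc 0 1) x y L f := by
    intro L g hg gi
    exact lp_of_on (dist_nonneg.trans hg.dist_le) (fun s _ t _ => hg.1 s t) hg.2.1 hg.2.2.1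
      (fun t ht => image_subset_of_no_circle hno hg hg0 gi gi0 (mem_image_of_mem _ ht))
  obtain ⟨f0, hf0⟩ := hA _ _ hg0 gi0
  obtain ⟨L', g, hg, gi, hmin⟩ := exists_min_lp hc hxy hf0
  have hle : L' ≤ dist x y := by
    apply le_of_forall_pos_le_add
    intro ε hε
    obtain ⟨L, hL, g, hg, gi⟩ := h ε hε
    obtain ⟨f, hf⟩ := hA _ _ hg gi
    exact (hmin _ _ hf).trans hL
  have heq : L' = dist x y := le_antisymm hle hg.dist_le
  subst heq
  exact ⟨g, hg.mono (subset_univ _), gi⟩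

lemma geodesic_length {x y : X} {f : ℝ → X} (hf : LP univ x y (dist x y) f) :
    eVariationOn f (Icc 0 1) = edist x y := by
  apply le_antisymm
  · have hlip : LipschitzOnWith (nndist x y) f univ := by
      apply LipschitzOnWith.of_dist_le_mul
      intro s _ t _
      exact hf.1 s t
    have := hlip.comp_eVariationOn_le (g := id) (s := Icc (0:ℝ) 1) (fun _ _ => mem_univ _)
    rw [eVariationOn_id_Icc] at this
    rw [edist_nndist]
    simpa only [Function.comp_id, sub_zero, ENNReal.ofReal_one, mul_one] using this
  · have := eVariationOn.edist_le f (s := Icc (0:ℝ) 1) (x := 0) (y := 1) (by simp) (by simp)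
    rwa [hf.2.1, hf.2.2.1] at this

lemma geodesic_subset_arc (hl : IsLengthSpace X)
    (hno : ¬ ∃ (K : ℝ≥0) (α : Circle' → X), Function.Injective α ∧ LipschitzWith K α)
    {x y : X} (hxy : x ≠ y) {f : ℝ → X} (hf : LP univ x y (dist x y) f)
    (fi : InjOn f (Icc 0 1)) {γ : ℝ → X} (hγ : IsCurveOn γ x y) :
    f '' Icc 0 1 ⊆ γ '' Icc 0 1 := by
  have hcl : IsClosed (γ '' Icc 0 1) := (isCompact_Icc.image_of_continuousOn hγ.1).isClosed
  have hcon : IsPreconnected (γ '' Icc 0 1) := isPreconnected_Icc.image _ hγ.1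
  intro p hp
  rw [← hcl.closure_eq, Metric.mem_closure_iff]
  intro ε hε
  set A := γ '' Icc 0 1 with hA
  have hx : x ∈ A := ⟨0, by simp, hγ.2.1⟩
  have hy : y ∈ A := ⟨1, by simp, hγ.2.2⟩
  have hR : ∃ L g, LP {z | ∃ a ∈ A, dist z a < ε} x y L g := by
    refine hcon.induction₂ (fun p q => ∃ L g, LP {z | ∃ a ∈ A, dist z a < ε} p q L g)
      ?_ ?_ ?_ hx hy
    · intro p hp
      filter_upwards [mem_nhdsWithin_of_mem_nhds (Metric.ball_mem_nhds p hε)] with q hq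
      by_cases hpq : p = q
      · subst hpq
        exact ⟨0, fun _ => p, by simp, rfl, rfl, fun _ => ⟨p, hp, by simpa using hε⟩⟩
      · obtain ⟨g, hg, -⟩ := exists_geodesic hl hno hpq
        obtain ⟨g', hg'⟩ := lp_of_on (S := {z | ∃ a ∈ A, dist z a < ε}) dist_nonneg
          (fun s _ t _ => hg.1 s t) hg.2.1 hg.2.2.1 (by
            intro t ht
            refine ⟨p, hp, ?_⟩
            have h1 := hg.1 t 0
            rw [hg.2.1, sub_zero, abs_of_nonneg ht.1] at h1
            have h2 : dist p q < ε := by rw [dist_comm]; exact hq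
            have h3 : dist p q * t ≤ dist p q := mul_le_of_le_one_right dist_nonneg ht.2
            linarith)
        exact ⟨_, g', hg'⟩
    · rintro p q r - - - ⟨L, g, hg⟩ ⟨M, k, hk⟩
      exact hg.trans hk
    · rintro p q - - ⟨L, g, hg⟩
      refine ⟨L, fun t => g (1 - t), ?_, by simp [hg.2.2.1], by simp [hg.2.1],
        fun t => hg.2.2.2 _⟩
      intro s t
      refine (hg.1 _ _).trans (le_of_eq ?_)
      rw [sub_sub_sub_cancel_left, abs_sub_comm]
  obtain ⟨L, g, hg⟩ := hR
  obtain ⟨L', -, k, hk, ki⟩ := exists_inj_lp hxy hg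
  obtain ⟨t, -, rfl⟩ := image_subset_of_no_circle hno hf hk fi ki hp
  exact hk.2.2.2 t

/-- the point of the circle with angle `a`. -/
noncomputable def circPt (a : ℝ) : Circle' :=
  ⟨!₂[Real.cos a, Real.sin a], by
    simp [EuclideanSpace.norm_eq, Fin.sum_univ_two]⟩

lemma circPt_continuous : Continuous circPt := by
  unfold circPt
  refine Continuous.subtype_mk ?_ _
  refine (PiLp.continuous_toLp 2 _).comp ?_
  refine continuous_pi fun i => ?_
  fin_cases i
  · exact Real.continuous_cos
  · exact Real.continuous_sin

lemma circPt_zero_eq (a : ℝ) : (circPt a).1 0 = Real.cos a := rfl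

lemma circPt_one_eq (a : ℝ) : (circPt a).1 1 = Real.sin a := rfl

lemma circPt_arc {α : Circle' → X} (hα : Continuous α) (hi : Function.Injective α) (c : ℝ)
    (hc : c = 1 ∨ c = -1) :
    IsArc ((fun t => α (circPt (c * (Real.pi * t)))) '' Icc 0 1) (α (circPt 0))
      (α (circPt Real.pi)) := by
  refine ⟨_, ⟨?_, ?_, ?_⟩, ?_, rfl⟩
  · refine (hα.comp (circPt_continuous.comp ?_)).continuousOn
    fun_prop
  · simp
  · rcases hc with rfl | rfl
    · simp
    · simp only [mul_one]
      congr 1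
      apply circle_ext
      · simp [circPt_zero_eq]
      · simp [circPt_one_eq]
  · intro s hs t ht h
    have h' := congrArg (fun p : Circle' => p.1 0) (hi h)
    simp only [circPt_zero_eq] at h'
    have h2 : Real.cos (Real.pi * s) = Real.cos (Real.pi * t) := by
      rcases hc with rfl | rfl <;> simpa using h'
    have hpi := Real.pi_pos
    have m : ∀ u ∈ Icc (0:ℝ) 1, Real.pi * u ∈ Icc 0 Real.pi := by
      intro u hu
      exact ⟨mul_nonneg hpi.le hu.1, mul_le_of_le_one_right hpi.le hu.2⟩
    exact mul_left_cancel₀ hpi.ne' (Real.injOn_cos (m s hs) (m t ht) h2)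

end Helpers

/-- A length space is a metric tree if and only if there is no one-to-one Lipschitz
map `α : S¹ → X`. -/
theorem metricTree_iff_no_injective_lipschitz_circle {X : Type*} [MetricSpace X]
    (hl : IsLengthSpace X) :
    IsMetricTree X ↔
      ¬ ∃ (K : ℝ≥0) (α : Circle' → X), Function.Injective α ∧ LipschitzWith K α := by
  constructor
  · rintro ⟨-, huniq⟩ ⟨K, α, hi, hlip⟩
    have hne : α (circPt 0) ≠ α (circPt Real.pi) := by
      intro h
      have h' := congrArg (fun p : Circle' => p.1 0) (hi h)
      simp only [circPt_zero_eq] at h'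
      norm_num at h'
    have h1 := circPt_arc hlip.continuous hi 1 (Or.inl rfl)
    have h2 := circPt_arc hlip.continuous hi (-1) (Or.inr rfl)
    have heq := (huniq _ _ hne).unique h1 h2
    have hm : α (circPt (1 * (Real.pi * (1 / 2)))) ∈
        ((fun t => α (circPt (1 * (Real.pi * t)))) '' Icc 0 1) :=
      ⟨1 / 2, by norm_num, rfl⟩
    rw [heq] at hm
    obtain ⟨t, ht, h⟩ := hm
    have h' := congrArg (fun p : Circle' => p.1 1) (hi h)
    simp only [circPt_one_eq] at h'
    have e : 1 * (Real.pi * (1 / 2)) = Real.pi / 2 := by ring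
    rw [e, Real.sin_pi_div_two, neg_one_mul, Real.sin_neg] at h'
    have := Real.sin_nonneg_of_nonneg_of_le_pi (mul_nonneg Real.pi_pos.le ht.1)
      (mul_le_of_le_one_right Real.pi_pos.le ht.2)
    linarith
  · intro hno
    refine ⟨?_, ?_⟩
    · intro x y
      by_cases hxy : x = y
      · subst hxy
        refine ⟨fun _ => x, ⟨continuousOn_const, rfl, rfl⟩, ?_⟩
        rw [edist_self]
        apply eVariationOn.constant_on
        rintro _ ⟨_, _, rfl⟩ _ ⟨_, _, rfl⟩
        rfl
      · obtain ⟨f, hf, -⟩ := exists_geodesic hl hno hxy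
        exact ⟨f, ⟨(lip_continuous hf.1).continuousOn, hf.2.1, hf.2.2.1⟩, geodesic_length hf⟩
    · intro x y hxy
      obtain ⟨f, hf, fi⟩ := exists_geodesic hl hno hxy
      have hc := (lip_continuous hf.1).continuousOn (s := Icc (0:ℝ) 1)
      refine ⟨f '' Icc 0 1, ⟨f, ⟨hc, hf.2.1, hf.2.2.1⟩, fi, rfl⟩, ?_⟩
      rintro _ ⟨γ, hγ, γi, rfl⟩
      have hsub := geodesic_subset_arc hl hno hxy hf fi hγ
      exact Subset.antisymm (arc_fill hc hf.2.1 hf.2.2.1 hγ γi hsub) hsub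
end

section
/- Let Ω⊂ℝⁿ be open and f:Ω→ℝᵐ, g:Ω→ℝᵏ locally Lipschitz. If there is a constant L>0 such that ℓ(g∘γ)≤L·ℓ(f∘γ) for every rectifiable curve γ:[a,b]→Ω, then for almost every x∈Ω one has |Dg(x)v|≤L|Df(x)v| for all unit vectors v∈Sⁿ⁻¹; in particular rank Dg(x) ≤ rank Df(x) for almost every x. -/
open Set Metric MeasureTheory
open scoped ENNReal NNReal

/-- `f` is locally Lipschitz on the open set `Ω`. -/
def LocLipOn {E X : Type*} [NormedAddCommGroup E] [NormedSpace ℝ E] [PseudoMetricSpace X]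
    (f : E → X) (Ω : Set E) : Prop :=
  ∀ x ∈ Ω, ∃ r > 0, Metric.ball x r ⊆ Ω ∧ ∃ K : ℝ≥0, LipschitzOnWith K f (Metric.ball x r)

/-- The rank of the derivative of `f` at `x`. -/
noncomputable def derivRank {E F : Type*} [NormedAddCommGroup E] [NormedSpace ℝ E]
    [NormedAddCommGroup F] [NormedSpace ℝ F] (f : E → F) (x : E) : ℕ :=
  Module.finrank ℝ (LinearMap.range ((fderiv ℝ f x) : E →ₗ[ℝ] F))

section helpers
variable {E : Type*} [NormedAddCommGroup E] [InnerProductSpace ℝ E] [FiniteDimensional ℝ E]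
variable {Ep : Type*} [NormedAddCommGroup Ep] [NormedSpace ℝ Ep]

lemma aux_locInt {F : ℝ → E} {K : ℝ≥0} (hF : LipschitzWith K F) :
    LocallyIntegrable (fun t => ‖deriv F t‖) volume := by
  borelize E
  have hm : Measurable (fun t => ‖deriv F t‖) := (measurable_deriv F).norm
  refine (MeasureTheory.memLp_top_of_bound (C := (K:ℝ)) hm.aestronglyMeasurable
    (Filter.Eventually.of_forall fun t => ?_)).locallyIntegrable le_top
  simpa using norm_deriv_le_of_lipschitz hF

lemma aux_intInt {F : ℝ → E} {K : ℝ≥0} (hF : LipschitzWith K F) (a b : ℝ) :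
    IntervalIntegrable (fun t => ‖deriv F t‖) volume a b :=
  intervalIntegrable_iff.mpr <|
    ((aux_locInt hF).integrableOn_isCompact isCompact_uIcc).mono_set uIoc_subset_uIcc

lemma aux_norm_sub {F : ℝ → E} {K : ℝ≥0} (hF : LipschitzWith K F) {a b : ℝ} (hab : a ≤ b) :
    ‖F b - F a‖ ≤ ∫ t in a..b, ‖deriv F t‖ := by
  set u := F b - F a with hu
  let φ : ℝ → ℝ := fun t => innerSL ℝ u (F t)
  have hφ : LipschitzWith (‖innerSL ℝ u‖₊ * K) φ := (innerSL ℝ u).lipschitz.comp hF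
  have h1 := (hφ.lipschitzOnWith (s := uIcc a b)).absolutelyContinuousOnInterval.integral_deriv_eq_sub
  have h2 : φ b - φ a = ‖u‖ * ‖u‖ := by
    simp only [φ, ← map_sub, ← hu]
    exact real_inner_self_eq_norm_mul_norm u
  have h3 : ∫ t in a..b, deriv φ t ≤ ∫ t in a..b, ‖u‖ * ‖deriv F t‖ := by
    apply intervalIntegral.integral_mono_ae hab
    · exact (hφ.lipschitzOnWith (s := uIcc a b)).absolutelyContinuousOnInterval.intervalIntegrable_deriv
    · exact (aux_intInt hF a b).const_mul _
    · filter_upwards [hF.ae_differentiableAt (μ := volume)] with t ht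
      have : HasDerivAt φ (innerSL ℝ u (deriv F t)) t :=
        (innerSL ℝ u).hasFDerivAt.comp_hasDerivAt t ht.hasDerivAt
      rw [this.deriv]
      exact real_inner_le_norm _ _
  rw [h1, h2, intervalIntegral.integral_const_mul] at h3
  rcases eq_or_lt_of_le (norm_nonneg u) with h | h
  · rw [← h]
    exact intervalIntegral.integral_nonneg hab fun _ _ => norm_nonneg _
  · exact le_of_mul_le_mul_left h3 h

lemma aux_evar {F : ℝ → E} {K : ℝ≥0} (hF : LipschitzWith K F) {a b : ℝ} (hab : a ≤ b) :
    eVariationOn F (Icc a b) ≤ ENNReal.ofReal (∫ t in a..b, ‖deriv F t‖) := by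
  let V : ℝ → ℝ := fun x => ∫ t in (0:ℝ)..x, ‖deriv F t‖
  have hint (x y : ℝ) : IntervalIntegrable (fun t => ‖deriv F t‖) volume x y :=
    aux_intInt hF x y
  have hV (x y : ℝ) : V y - V x = ∫ t in x..y, ‖deriv F t‖ :=
    intervalIntegral.integral_interval_sub_left (hint _ _) (hint _ _)
  have hle {x y : ℝ} (h : x ≤ y) : ‖F y - F x‖ ≤ V y - V x := by
    rw [hV]; exact aux_norm_sub hF h
  have hmono : Monotone V := fun x y h => by
    have := (norm_nonneg _).trans (hle h)
    linarith
  have h1 : eVariationOn F (Icc a b) ≤ eVariationOn V (Icc a b) := by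
    apply iSup_mono
    intro p
    apply Finset.sum_le_sum
    intro i _
    have := p.2.2.1 (Nat.le_succ i)
    rw [edist_dist, edist_dist]
    apply ENNReal.ofReal_le_ofReal
    rw [dist_eq_norm, Real.dist_eq]
    exact (hle this).trans (le_abs_self _)
  refine h1.trans ?_
  rw [← hV]
  have := (hmono.monotoneOn (Icc a b)).eVariationOn_eq (left_mem_Icc.2 hab) (right_mem_Icc.2 hab)
  rw [inter_self] at this
  exact this.le

lemma aux_1d {F : ℝ → E} {G : ℝ → Ep} {K : ℝ≥0} (hF : LipschitzWith K F)
    {U : Set ℝ} (hU : IsOpen U) {L : ℝ} (hL : 0 < L)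
    (h : ∀ a b, a ≤ b → Icc a b ⊆ U →
      edist (G a) (G b) ≤ ENNReal.ofReal L * eVariationOn F (Icc a b)) :
    ∀ᵐ t, t ∈ U → DifferentiableAt ℝ G t → ‖deriv G t‖ ≤ L * ‖deriv F t‖ := by
  filter_upwards [LocallyIntegrable.ae_hasDerivAt_integral (aux_locInt hF)] with t ht htU hG
  have h1 := ((ht t).tendsto_slope_zero_right).const_mul L
  have h2 := (hG.hasDerivAt.tendsto_slope_zero_right).norm
  refine le_of_tendsto_of_tendsto h2 h1 ?_
  obtain ⟨r, hr, hball⟩ := Metric.isOpen_iff.1 hU t htU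
  filter_upwards [Ioo_mem_nhdsGT hr] with s hs
  have h3 := h t (t + s) (by linarith [hs.1]) (by
    intro x hx
    apply hball
    rw [Metric.mem_ball, Real.dist_eq, abs_lt]
    constructor <;> linarith [hx.1, hx.2, hs.1, hs.2])
  have h4 := h3.trans (mul_le_mul_right (aux_evar hF (by linarith [hs.1] : t ≤ t + s)) _)
  rw [← ENNReal.ofReal_mul hL.le, edist_dist, ENNReal.ofReal_le_ofReal_iff, dist_comm, dist_eq_norm] at h4
  · have : 0 < s⁻¹ := inv_pos.2 hs.1
    simp only [norm_smul, intervalIntegral.integral_same, sub_zero, smul_eq_mul, Real.norm_eq_abs, abs_of_pos this]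
    nlinarith
  · exact mul_nonneg hL.le (intervalIntegral.integral_nonneg (by linarith [hs.1]) fun _ _ => norm_nonneg _)
end helpers

lemma aux_global {n m k : ℕ}
    (Ω : Set (EuclideanSpace ℝ (Fin n))) (hΩ : IsOpen Ω)
    (f : EuclideanSpace ℝ (Fin n) → EuclideanSpace ℝ (Fin m))
    (g : EuclideanSpace ℝ (Fin n) → EuclideanSpace ℝ (Fin k)) {K Kp : ℝ≥0}
    (hf : LipschitzWith K f) (hg : LipschitzWith Kp g) (L : ℝ) (hL : 0 < L)
    (hcurve : ∀ γ : ℝ → EuclideanSpace ℝ (Fin n), ContinuousOn γ (Set.Icc 0 1) →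
      (∀ t ∈ Set.Icc (0:ℝ) 1, γ t ∈ Ω) → eVariationOn γ (Set.Icc 0 1) ≠ ⊤ →
      eVariationOn (g ∘ γ) (Set.Icc 0 1) ≤
        ENNReal.ofReal L * eVariationOn (f ∘ γ) (Set.Icc 0 1)) :
    ∀ᵐ x ∂(volume : Measure (EuclideanSpace ℝ (Fin n))), x ∈ Ω →
      ∀ v : EuclideanSpace ℝ (Fin n), ‖fderiv ℝ g x v‖ ≤ L * ‖fderiv ℝ f x v‖ := by
  have key : ∀ v : EuclideanSpace ℝ (Fin n), ∀ᵐ x ∂(volume : Measure (EuclideanSpace ℝ (Fin n))),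
      x ∈ {x | x ∈ Ω → DifferentiableAt ℝ f x → DifferentiableAt ℝ g x →
        ‖fderiv ℝ g x v‖ ≤ L * ‖fderiv ℝ f x v‖} := by
    intro v
    let A : ℝ →L[ℝ] EuclideanSpace ℝ (Fin n) := ContinuousLinearMap.smulRight (1 : ℝ →L[ℝ] ℝ) v
    have hmeas : MeasurableSet {x | x ∈ Ω → DifferentiableAt ℝ f x → DifferentiableAt ℝ g x →
        ‖fderiv ℝ g x v‖ ≤ L * ‖fderiv ℝ f x v‖} := by
      have m1 := measurableSet_of_differentiableAt ℝ f
      have m2 := measurableSet_of_differentiableAt ℝ g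
      have m3 := measurableSet_le (measurable_fderiv_apply_const ℝ g v).norm
        ((measurable_fderiv_apply_const ℝ f v).norm.const_mul L)
      exact hΩ.measurableSet.imp (m1.imp (m2.imp m3))
    refine ae_mem_of_ae_add_linearMap_mem A.toLinearMap volume volume hmeas fun p => ?_
    let c : ℝ → EuclideanSpace ℝ (Fin n) := fun t => p + t • v
    have hcd (t : ℝ) : HasDerivAt c v t := by
      have := ((hasDerivAt_id t).smul_const v).const_add p
      rw [one_smul] at this
      exact this
    have hc : Continuous c := by fun_prop
    have hcL : LipschitzWith ‖A‖₊ c := by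
      have := (LipschitzWith.const p).add A.lipschitz
      rw [zero_add] at this
      exact this
    have := aux_1d (F := f ∘ c) (G := g ∘ c) (hf.comp hcL) (hΩ.preimage hc) hL (by
      intro a b hab hsub
      let φ : ℝ → ℝ := fun s => a + s * (b - a)
      have hφm : Monotone φ := fun x y h => by
        have : 0 ≤ b - a := by linarith
        simp only [φ]; nlinarith
      have himg : φ '' Icc 0 1 ⊆ Icc a b := by
        rintro _ ⟨s, hs, rfl⟩
        have h0 := hφm hs.1
        have h1 := hφm hs.2
        simp only [φ] at h0 h1 ⊢
        constructor <;> linarith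
      have hφL : LipschitzWith (Real.toNNReal (b - a)) φ := by
        refine LipschitzWith.of_dist_le_mul fun x y => ?_
        rw [Real.coe_toNNReal _ (by linarith), Real.dist_eq, Real.dist_eq,
          show φ x - φ y = (b - a) * (x - y) by simp only [φ]; ring, abs_mul,
          abs_of_nonneg (by linarith : 0 ≤ b - a)]
      have := hcurve (c ∘ φ) (hc.comp hφL.continuous).continuousOn
        (fun t ht => hsub (himg ⟨t, ht, rfl⟩)) (by
          have := ((hcL.comp hφL).lipschitzOnWith (s := uIcc 0 1)).absolutelyContinuousOnInterval.boundedVariationOn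
          simpa [BoundedVariationOn] using this)
      have h2 : eVariationOn (f ∘ c ∘ φ) (Icc 0 1) ≤ eVariationOn (f ∘ c) (Icc a b) := by
        have := eVariationOn.comp_eq_of_monotoneOn (f ∘ c) φ (hφm.monotoneOn (Icc 0 1))
        rw [← Function.comp_assoc, this]
        exact eVariationOn.mono _ himg
      have h3 : edist ((g ∘ c) a) ((g ∘ c) b) ≤ eVariationOn (g ∘ c ∘ φ) (Icc 0 1) := by
        have := eVariationOn.edist_le (g ∘ c ∘ φ) (s := Icc 0 1) (x := 0) (y := 1) (by simp) (by simp)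
        simpa [φ] using this
      exact h3.trans (this.trans (mul_le_mul_right h2 _)))
    filter_upwards [this] with t ht
    intro h1 h2 h3
    have e : p + A.toLinearMap t = c t := by simp [A, c]
    rw [e] at h1 h2 h3 ⊢
    have hfd : HasDerivAt (f ∘ c) (fderiv ℝ f (c t) v) t := h2.hasFDerivAt.comp_hasDerivAt t (hcd t)
    have hgd : HasDerivAt (g ∘ c) (fderiv ℝ g (c t) v) t := h3.hasFDerivAt.comp_hasDerivAt t (hcd t)
    have := ht h1 hgd.differentiableAt
    rwa [hfd.deriv, hgd.deriv] at this
  obtain ⟨D, hDc, hDd⟩ := TopologicalSpace.exists_countable_dense (EuclideanSpace ℝ (Fin n))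
  filter_upwards [(ae_ball_iff hDc).2 fun v _ => key v, hf.ae_differentiableAt (μ := volume),
    hg.ae_differentiableAt (μ := volume)] with x hx h1 h2 hxΩ v
  have hcl : IsClosed {v | ‖fderiv ℝ g x v‖ ≤ L * ‖fderiv ℝ f x v‖} :=
    isClosed_le (by fun_prop) (by fun_prop)
  exact hcl.closure_subset_iff.2 (fun w hw => hx w hw hxΩ h1 h2) (hDd v)

/-- If `f, g` are locally Lipschitz on an open set `Ω ⊆ ℝⁿ` and
`ℓ(g∘γ) ≤ L·ℓ(f∘γ)` for every rectifiable curve `γ` in `Ω`, then for a.e. `x ∈ Ω`,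
`|Dg(x)v| ≤ L|Df(x)v|` for all unit vectors `v`, and hence
`rank Dg(x) ≤ rank Df(x)` a.e. in `Ω`. -/
theorem ae_deriv_bound_of_curve_length_bound {n m k : ℕ}
    (Ω : Set (EuclideanSpace ℝ (Fin n))) (hΩ : IsOpen Ω)
    (f : EuclideanSpace ℝ (Fin n) → EuclideanSpace ℝ (Fin m))
    (g : EuclideanSpace ℝ (Fin n) → EuclideanSpace ℝ (Fin k))
    (hf : LocLipOn f Ω) (hg : LocLipOn g Ω) (L : ℝ) (hL : 0 < L)
    (hcurve : ∀ γ : ℝ → EuclideanSpace ℝ (Fin n), ContinuousOn γ (Set.Icc 0 1) →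
      (∀ t ∈ Set.Icc (0:ℝ) 1, γ t ∈ Ω) → eVariationOn γ (Set.Icc 0 1) ≠ ⊤ →
      eVariationOn (g ∘ γ) (Set.Icc 0 1) ≤
        ENNReal.ofReal L * eVariationOn (f ∘ γ) (Set.Icc 0 1)) :
    ∀ᵐ x ∂(volume : Measure (EuclideanSpace ℝ (Fin n))), x ∈ Ω →
      (∀ v : EuclideanSpace ℝ (Fin n), ‖v‖ = 1 →
          ‖fderiv ℝ g x v‖ ≤ L * ‖fderiv ℝ f x v‖) ∧
        derivRank g x ≤ derivRank f x := by
  have main : ∀ᵐ x ∂(volume : Measure (EuclideanSpace ℝ (Fin n))), x ∈ Ω →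
      ∀ v : EuclideanSpace ℝ (Fin n), ‖fderiv ℝ g x v‖ ≤ L * ‖fderiv ℝ f x v‖ := by
    rw [ae_iff]
    refine measure_null_of_locally_null _ fun x hx => ?_
    have hxΩ : x ∈ Ω := by
      by_contra h
      exact hx fun hp => absurd hp h
    obtain ⟨r1, hr1, hb1, K1, hK1⟩ := hf x hxΩ
    obtain ⟨r2, hr2, hb2, K2, hK2⟩ := hg x hxΩ
    set B := ball x (min r1 r2) with hB
    have hB1 : B ⊆ ball x r1 := ball_subset_ball (min_le_left _ _)
    have hB2 : B ⊆ ball x r2 := ball_subset_ball (min_le_right _ _)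
    obtain ⟨fp, hfp, hffp⟩ := (hK1.mono hB1).extend_finite_dimension
    obtain ⟨gp, hgp, hggp⟩ := (hK2.mono hB2).extend_finite_dimension
    have hBo : IsOpen B := isOpen_ball
    have := aux_global B hBo fp gp hfp hgp L hL (by
      intro γ hγ hγB hγv
      have := hcurve γ hγ (fun t ht => hb1 (hB1 (hγB t ht))) hγv
      have e1 : EqOn (g ∘ γ) (gp ∘ γ) (Icc 0 1) := fun t ht => hggp (hγB t ht)
      have e2 : EqOn (f ∘ γ) (fp ∘ γ) (Icc 0 1) := fun t ht => hffp (hγB t ht)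
      rwa [eVariationOn.congr e1, eVariationOn.congr e2] at this)
    rw [ae_iff] at this
    refine ⟨_ ∩ B, inter_mem_nhdsWithin _ (hBo.mem_nhds (mem_ball_self (lt_min hr1 hr2))),
      measure_mono_null ?_ this⟩
    rintro y ⟨hy, hyB⟩ hcon
    apply hy
    intro _ v
    have := hcon hyB v
    rwa [← (hffp.eventuallyEq_of_mem (hBo.mem_nhds hyB)).fderiv_eq,
      ← (hggp.eventuallyEq_of_mem (hBo.mem_nhds hyB)).fderiv_eq] at this
  filter_upwards [main] with x hx hxΩ
  refine ⟨fun v _ => hx hxΩ v, ?_⟩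
  have hker : LinearMap.ker (fderiv ℝ f x).toLinearMap ≤ LinearMap.ker (fderiv ℝ g x).toLinearMap := by
    intro v hv
    have h0 : fderiv ℝ f x v = 0 := hv
    have := hx hxΩ v
    rw [h0, norm_zero, mul_zero] at this
    exact norm_le_zero_iff.1 this
  have h1 := LinearMap.finrank_range_add_finrank_ker (fderiv ℝ f x).toLinearMap
  have h2 := LinearMap.finrank_range_add_finrank_ker (fderiv ℝ g x).toLinearMap
  have h3 := Submodule.finrank_mono hker
  unfold derivRank
  omega
end

section
/- Let Ω⊂ℝⁿ and U⊂ℝᵐ be open, g:Ω→U and f:U→ℝᵏ Lipschitz. If rank Df(y)≤r for almost every y∈U, then rank D(f∘g)(x)≤r for almost every x∈Ω. -/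
open Set Metric MeasureTheory
open scoped NNReal

lemma lip_null {d : ℕ} {K : ℝ≥0} {f : EuclideanSpace ℝ (Fin d) → EuclideanSpace ℝ (Fin d)}
    (hf : LipschitzWith K f) {s : Set (EuclideanSpace ℝ (Fin d))} (hs : volume s = 0) :
    volume (f '' s) = 0 := by
  let E := EuclideanSpace ℝ (Fin d)
  have hfr : Module.finrank ℝ E = d := by simp [E]
  let H : Measure E := Measure.hausdorffMeasure (d : ℝ)
  have : H.IsAddHaarMeasure := by
    have := isAddHaarMeasure_hausdorffMeasure (E := E)
    rw [hfr] at this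
    exact this
  have h1 : H = H.addHaarScalarFactor volume • (volume : Measure E) :=
    Measure.isAddLeftInvariant_eq_smul _ _
  have h2 : (volume : Measure E) = (volume : Measure E).addHaarScalarFactor H • H :=
    Measure.isAddLeftInvariant_eq_smul _ _
  have h3 : H s = 0 := by rw [h1]; simp [hs]
  have h4 : H (f '' s) = 0 := by
    have := hf.hausdorffMeasure_image_le (d := (d:ℝ)) (by positivity) s
    change H (f '' s) ≤ _ * H s at this
    rw [h3, mul_zero] at this
    exact le_antisymm this bot_le
  rw [h2]; simp [h4]

lemma det_interp {d : ℕ} (ε : ℝ) (hε : 0 < ε) : ∃ (t c : Fin (d+1) → ℝ),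
    (∀ i, 0 ≤ t i ∧ t i < ε) ∧ (∑ i, c i = 1) ∧
    ∀ M : EuclideanSpace ℝ (Fin d) →L[ℝ] EuclideanSpace ℝ (Fin d),
      (1 + M).det = ∑ i, c i * (1 + t i • M).det := by
  let t : Fin (d+1) → ℝ := fun i => ε * (i : ℝ) / (d + 1)
  have ht : Set.InjOn t (Finset.univ : Finset (Fin (d+1))) := by
    intro i _ j _ h
    have hd : ((d:ℝ)+1) ≠ 0 := by positivity
    simp only [t] at h
    field_simp at h
    exact Fin.ext (by exact_mod_cast h)
  refine ⟨t, fun i => (Lagrange.basis Finset.univ t i).eval 1, ?_, ?_, ?_⟩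
  · intro i
    refine ⟨by positivity, ?_⟩
    simp only [t]
    rw [div_lt_iff₀ (by positivity)]
    have : (i:ℝ) < d + 1 := by exact_mod_cast i.2
    gcongr
  · have := congrArg (Polynomial.eval 1) (Lagrange.sum_basis ht ⟨0, by simp⟩)
    simpa [Polynomial.eval_finsetSum] using this
  · intro M
    let b := (EuclideanSpace.basisFun (Fin d) ℝ).toBasis
    let A := LinearMap.toMatrix b b (M : EuclideanSpace ℝ (Fin d) →ₗ[ℝ] EuclideanSpace ℝ (Fin d))
    let p : Polynomial ℝ := ((Polynomial.X : Polynomial ℝ) • A.map Polynomial.C + (1 : Matrix (Fin d) (Fin d) ℝ).map Polynomial.C).det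
    have hp : ∀ s : ℝ, p.eval s = (1 + s • M).det := by
      intro s
      simp only [p]
      rw [← Polynomial.coe_evalRingHom, RingHom.map_det]
      have h1 : (1 + s • M).det = (LinearMap.toMatrix b b ((1 + s • M :
          EuclideanSpace ℝ (Fin d) →L[ℝ] EuclideanSpace ℝ (Fin d)) :
          EuclideanSpace ℝ (Fin d) →ₗ[ℝ] EuclideanSpace ℝ (Fin d))).det := by
        rw [LinearMap.det_toMatrix]
      rw [h1]
      congr 1
      have h2 : LinearMap.toMatrix b b ((1 + s • M :
          EuclideanSpace ℝ (Fin d) →L[ℝ] EuclideanSpace ℝ (Fin d)) :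
          EuclideanSpace ℝ (Fin d) →ₗ[ℝ] EuclideanSpace ℝ (Fin d)) = 1 + s • A := by
        have : ((1 + s • M :
          EuclideanSpace ℝ (Fin d) →L[ℝ] EuclideanSpace ℝ (Fin d)) :
          EuclideanSpace ℝ (Fin d) →ₗ[ℝ] EuclideanSpace ℝ (Fin d)) = LinearMap.id + s • (M : EuclideanSpace ℝ (Fin d) →ₗ[ℝ] EuclideanSpace ℝ (Fin d)) := rfl
        rw [this, map_add, map_smul, LinearMap.toMatrix_id]
      rw [h2]
      ext i j
      by_cases hij : i = j
      · subst hij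
        simp [add_comm]
        exact mul_comm _ _
      · simp [hij]
        exact mul_comm _ _
    have hdeg : p.degree < (Finset.univ : Finset (Fin (d+1))).card := by
      have := Polynomial.natDegree_det_X_add_C_le A (1 : Matrix (Fin d) (Fin d) ℝ)
      refine lt_of_le_of_lt Polynomial.degree_le_natDegree ?_
      simp only [Fintype.card_fin, Finset.card_univ] at this ⊢
      exact_mod_cast Nat.lt_succ_of_le this
    have h1 := congrArg (Polynomial.eval 1) (Lagrange.eq_interpolate ht hdeg)
    rw [hp 1, one_smul, Lagrange.interpolate_apply, Polynomial.eval_finsetSum] at h1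
    rw [h1]
    refine Finset.sum_congr rfl fun i _ => ?_
    rw [Polynomial.eval_mul, Polynomial.eval_C, hp, mul_comm]

lemma det_pos {d : ℕ} (M : EuclideanSpace ℝ (Fin d) →L[ℝ] EuclideanSpace ℝ (Fin d))
    (hM : ‖M‖ < 1) : 0 < (1 + M).det := by
  have hne : ∀ s ∈ Icc (0:ℝ) 1, (1 + s • M).det ≠ 0 := by
    intro s hs
    have h1 : ‖-(s • M)‖ < 1 := by
      rw [norm_neg, norm_smul, Real.norm_eq_abs, abs_of_nonneg hs.1]
      nlinarith [norm_nonneg M, hs.1, hs.2]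
    have h2 := isUnit_one_sub_of_norm_lt_one h1
    rw [sub_neg_eq_add] at h2
    obtain ⟨w, hw⟩ := h2
    have h3 : (1 + s • M).det * (↑w⁻¹ : EuclideanSpace ℝ (Fin d) →L[ℝ] EuclideanSpace ℝ (Fin d)).det = 1 := by
      rw [← hw]
      have : (↑w : EuclideanSpace ℝ (Fin d) →L[ℝ] EuclideanSpace ℝ (Fin d)) * ↑w⁻¹ = 1 := by simp
      have h := congrArg ContinuousLinearMap.det this
      simp only [ContinuousLinearMap.det] at h ⊢
      rw [← LinearMap.det_comp]
      rw [show (1 : EuclideanSpace ℝ (Fin d) →L[ℝ] EuclideanSpace ℝ (Fin d)).toLinearMap = LinearMap.id from rfl, LinearMap.det_id] at h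
      exact h
    exact left_ne_zero_of_mul_eq_one h3
  by_contra hcon
  push Not at hcon
  have hc : ContinuousOn (fun s : ℝ => (1 + s • M).det) (Icc 0 1) := by
    apply Continuous.continuousOn
    exact ContinuousLinearMap.continuous_det.comp (by fun_prop)
  have h0 : (1 + (0:ℝ) • M).det = 1 := by
    have : 1 + (0:ℝ) • M = 1 := by ext; simp
    rw [this]; exact LinearMap.det_id
  have := intermediate_value_Icc' (zero_le_one) hc
  obtain ⟨s, hs, hs'⟩ := this (show (0:ℝ) ∈ _ by
    simp only [h0, one_smul]; exact ⟨hcon, zero_le_one⟩)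
  exact hne s hs hs'

lemma area_small {d : ℕ} {K : ℝ≥0} (hK : K < 1)
    {u : EuclideanSpace ℝ (Fin d) → EuclideanSpace ℝ (Fin d)}
    (hu : LipschitzWith K u) (h0 : ∀ x, x ∉ ball (0 : EuclideanSpace ℝ (Fin d)) 1 → u x = 0) :
    ∫ x in ball (0 : EuclideanSpace ℝ (Fin d)) 1, (1 + fderiv ℝ u x).det
      = volume.real (ball (0 : EuclideanSpace ℝ (Fin d)) 1) := by
  let E := EuclideanSpace ℝ (Fin d)
  let B : Set E := ball 0 1
  let ψ : E → E := fun x => x + u x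
  have happ : ApproximatesLinearOn ψ (ContinuousLinearEquiv.refl ℝ E : E →L[ℝ] E) univ K := by
    rw [ApproximatesLinearOn.approximatesLinearOn_iff_lipschitzOnWith]
    have : ψ - ⇑(ContinuousLinearEquiv.refl ℝ E : E →L[ℝ] E) = u := by
      ext1 x; simp [ψ]
    rw [this]
    exact hu.lipschitzOnWith
  have hc : Subsingleton E ∨ K < ‖((ContinuousLinearEquiv.refl ℝ E).symm : E →L[ℝ] E)‖₊⁻¹ := by
    rcases subsingleton_or_nontrivial E with h | h
    · exact Or.inl h
    · right
      have : ‖((ContinuousLinearEquiv.refl ℝ E).symm : E →L[ℝ] E)‖₊ = 1 := by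
        have : ((ContinuousLinearEquiv.refl ℝ E).symm : E →L[ℝ] E) = ContinuousLinearMap.id ℝ E := by
          ext; simp
        rw [this]
        ext
        simp
      rw [this]; simpa using hK
  have hsurj : Function.Surjective ψ := happ.surjective hc
  have hinj : Function.Injective ψ := injOn_univ.1 (happ.injOn hc)
  have hcompl : ψ '' Bᶜ = Bᶜ := by
    have : ∀ x ∈ Bᶜ, ψ x = x := by
      intro x hx
      simp [ψ, h0 x hx]
    rw [image_congr this]; simp
  have himg : ψ '' B = B := by
    have := image_compl_eq (s := B) ⟨hinj, hsurj⟩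
    rw [hcompl] at this
    exact (compl_injective this).symm
  let S : Set E := {x | DifferentiableAt ℝ u x}
  have hS : MeasurableSet S := measurableSet_of_differentiableAt ℝ u
  have hSn : volume Sᶜ = 0 := hu.ae_differentiableAt
  have hψ : LipschitzWith (1 + K) ψ := LipschitzWith.id.add hu
  have hder : ∀ x ∈ S, HasFDerivAt ψ (1 + fderiv ℝ u x) x := fun x hx =>
    (hasFDerivAt_id x).add hx.hasFDerivAt
  have hBS : volume (ψ '' (B ∩ S)) = volume B := by
    apply le_antisymm
    · exact measure_mono ((image_mono inter_subset_left).trans himg.subset)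
    · calc volume B = volume (ψ '' B) := by rw [himg]
        _ ≤ volume (ψ '' (B ∩ S) ∪ ψ '' Sᶜ) := by
          apply measure_mono
          rw [← image_union]
          apply image_mono
          intro x hx
          by_cases h : x ∈ S
          · exact Or.inl ⟨hx, h⟩
          · exact Or.inr h
        _ ≤ volume (ψ '' (B ∩ S)) + volume (ψ '' Sᶜ) := measure_union_le _ _
        _ = _ := by rw [lip_null hψ hSn, add_zero]
  have harea := integral_image_eq_integral_abs_det_fderiv_smul volume
    (measurableSet_ball.inter hS) (fun x (hx : x ∈ B ∩ S) => (hder x hx.2).hasFDerivWithinAt)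
    hinj.injOn (fun _ => (1:ℝ))
  simp only [smul_eq_mul, mul_one, integral_const, MeasurableSet.univ, measureReal_restrict_apply, univ_inter] at harea
  have hr : volume.real (ψ '' (B ∩ S)) = volume.real B := by
    simp only [Measure.real, hBS]
  rw [← hr]
  have hcong : ∫ x in B, (1 + fderiv ℝ u x).det = ∫ x in B ∩ S, |(1 + fderiv ℝ u x).det| := by
    have : (B ∩ S : Set E) =ᵐ[volume] B := by
      have h : ∀ᵐ x ∂(volume : Measure E), x ∈ S := hu.ae_differentiableAt
      filter_upwards [h] with x hx
      apply propext
      exact ⟨fun h => h.1, fun h => ⟨h, hx⟩⟩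
    rw [setIntegral_congr_set this]
    apply integral_congr_ae
    filter_upwards with x
    rw [abs_of_pos]
    apply det_pos
    refine lt_of_le_of_lt (norm_fderiv_le_of_lipschitz ℝ hu) (by exact_mod_cast hK)
  rw [← harea] at hcong
  exact hcong

lemma det_bdd {d : ℕ} (R : ℝ) : ∃ C : ℝ, 0 ≤ C ∧ ∀ M : EuclideanSpace ℝ (Fin d) →L[ℝ] EuclideanSpace ℝ (Fin d),
    ‖M‖ ≤ R → |M.det| ≤ C := by
  have hc : IsCompact (closedBall (0 : EuclideanSpace ℝ (Fin d) →L[ℝ] EuclideanSpace ℝ (Fin d)) R) :=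
    isCompact_closedBall _ _
  obtain ⟨C, hC⟩ := hc.exists_bound_of_continuousOn
    (f := fun M => M.det) ContinuousLinearMap.continuous_det.continuousOn
  refine ⟨max C 0, le_max_right _ _, fun M hM => ?_⟩
  exact (hC M (by simpa using hM)).trans (le_max_left _ _)

lemma meas_det {d : ℕ} (u : EuclideanSpace ℝ (Fin d) → EuclideanSpace ℝ (Fin d)) (t : ℝ) :
    Measurable (fun x => (1 + t • fderiv ℝ u x).det) := by
  have : Continuous (fun M : EuclideanSpace ℝ (Fin d) →L[ℝ] EuclideanSpace ℝ (Fin d) => (1 + t • M).det) :=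
    ContinuousLinearMap.continuous_det.comp (by fun_prop)
  exact this.measurable.comp (measurable_fderiv ℝ u)

lemma int_det {d : ℕ} {K : ℝ≥0}
    {u : EuclideanSpace ℝ (Fin d) → EuclideanSpace ℝ (Fin d)}
    (hu : LipschitzWith K u) (t : ℝ) :
    IntegrableOn (fun x => (1 + t • fderiv ℝ u x).det) (ball 0 1) := by
  obtain ⟨C, -, hC⟩ := det_bdd (d := d) (1 + |t| * K)
  refine Measure.integrableOn_of_bounded (M := C) measure_ball_lt_top.ne
    (meas_det u t).aestronglyMeasurable ?_
  filter_upwards with x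
  apply hC
  refine (norm_add_le _ _).trans (add_le_add ContinuousLinearMap.norm_id_le ?_)
  rw [norm_smul]
  exact mul_le_mul_of_nonneg_left (norm_fderiv_le_of_lipschitz ℝ hu) (abs_nonneg _)

lemma area_any {d : ℕ} {K : ℝ≥0}
    {u : EuclideanSpace ℝ (Fin d) → EuclideanSpace ℝ (Fin d)}
    (hu : LipschitzWith K u) (h0 : ∀ x, x ∉ ball (0 : EuclideanSpace ℝ (Fin d)) 1 → u x = 0) :
    ∫ x in ball (0 : EuclideanSpace ℝ (Fin d)) 1, (1 + fderiv ℝ u x).det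
      = volume.real (ball (0 : EuclideanSpace ℝ (Fin d)) 1) := by
  obtain ⟨t, c, ht, hc, hdet⟩ := det_interp (d := d) (1 / (K + 1 : ℝ)) (by positivity)
  have hfun : (fun x => (1 + fderiv ℝ u x).det) =
      fun x => ∑ i, c i * (1 + t i • fderiv ℝ u x).det := funext fun x => hdet _
  rw [hfun, integral_finsetSum _ (fun i _ => (int_det hu (t i)).const_mul (c i))]
  have : ∀ i, ∫ x in ball (0 : EuclideanSpace ℝ (Fin d)) 1, c i * (1 + t i • fderiv ℝ u x).det
      = c i * volume.real (ball (0 : EuclideanSpace ℝ (Fin d)) 1) := by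
    intro i
    rw [integral_const_mul]
    congr 1
    have h1 : LipschitzWith (‖t i‖₊ * K) (fun x => t i • u x) := by
      simpa [Function.comp_def] using (lipschitzWith_smul (t i)).comp hu
    have hlt : ‖t i‖₊ * K < 1 := by
      rw [← NNReal.coe_lt_coe]
      push_cast
      rw [Real.norm_eq_abs, abs_of_nonneg (ht i).1]
      have := (ht i).2
      rw [lt_div_iff₀ (by positivity)] at this
      nlinarith [(ht i).1]
    rw [← area_small hlt h1 (fun x hx => by simp [h0 x hx])]
    have h2 : ∀ x, fderiv ℝ (fun x => t i • u x) x = t i • fderiv ℝ u x := by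
      intro x
      exact congrFun (fderiv_const_smul_field (t i)) x
    simp_rw [h2]
  simp_rw [this]
  rw [← Finset.sum_mul, hc, one_mul]

lemma key {d : ℕ} (K : ℝ≥0) : ∃ ε : ℝ, 0 < ε ∧
    ∀ φ : EuclideanSpace ℝ (Fin d) → EuclideanSpace ℝ (Fin d), LipschitzWith K φ →
      (∀ x ∈ ball (0 : EuclideanSpace ℝ (Fin d)) 1, ‖φ x - x‖ ≤ ε) →
      (∀ᵐ x, x ∈ ball (0 : EuclideanSpace ℝ (Fin d)) 1 → (fderiv ℝ φ x).det = 0) → False := by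
  obtain ⟨C, hC0, hC⟩ := det_bdd (d := d) (1 + (K + 1 + 1))
  have hδ : ∃ δ : ℝ, 0 < δ ∧ δ < 1 ∧ C * (1 - (1 - δ) ^ d) < 1 := by
    have hcont : Continuous (fun δ : ℝ => C * (1 - (1 - δ) ^ d)) := by fun_prop
    have h1 : ∀ᶠ δ in nhdsWithin (0:ℝ) (Ioi 0), C * (1 - (1 - δ) ^ d) < 1 := by
      apply Filter.Eventually.filter_mono nhdsWithin_le_nhds
      apply hcont.continuousAt.eventually_lt continuousAt_const
      simp
    have h2 : ∀ᶠ δ in nhdsWithin (0:ℝ) (Ioi 0), δ ∈ Ioo (0:ℝ) 1 :=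
      Ioo_mem_nhdsGT zero_lt_one
    obtain ⟨δ, ha, hb⟩ := (h1.and h2).exists
    exact ⟨δ, hb.1, hb.2, ha⟩
  obtain ⟨δ, hδ0, hδ1, hδC⟩ := hδ
  refine ⟨δ, hδ0, fun φ hφ hclose hdet => ?_⟩
  let E := EuclideanSpace ℝ (Fin d)
  let η : E → ℝ := fun x => max 0 (min 1 ((1 - ‖x‖) / δ))
  have hη0 : ∀ x, 0 ≤ η x := fun x => le_max_left _ _
  have hη1 : ∀ x, η x ≤ 1 := fun x => max_le zero_le_one (min_le_left _ _)
  have hηL : ∀ x y, |η x - η y| ≤ ‖x - y‖ / δ := by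
    intro x y
    have h1 : |η x - η y| ≤ |min 1 ((1 - ‖x‖) / δ) - min 1 ((1 - ‖y‖) / δ)| := by
      simpa [η] using abs_max_sub_max_le_max 0 (min 1 ((1 - ‖x‖) / δ)) 0 (min 1 ((1 - ‖y‖) / δ))
    have h2 : |min 1 ((1 - ‖x‖) / δ) - min 1 ((1 - ‖y‖) / δ)| ≤ |(1 - ‖x‖) / δ - (1 - ‖y‖) / δ| := by
      simpa using abs_min_sub_min_le_max 1 ((1 - ‖x‖) / δ) 1 ((1 - ‖y‖) / δ)
    refine (h1.trans h2).trans ?_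
    rw [← sub_div, abs_div, abs_of_pos hδ0]
    gcongr
    rw [show 1 - ‖x‖ - (1 - ‖y‖) = ‖y‖ - ‖x‖ by ring, norm_sub_rev]
    exact abs_norm_sub_norm_le y x
  have hηout : ∀ x, x ∉ ball (0:E) 1 → η x = 0 := by
    intro x hx
    have : 1 ≤ ‖x‖ := by simpa using hx
    apply max_eq_left
    apply (min_le_right _ _).trans
    exact div_nonpos_of_nonpos_of_nonneg (by linarith) hδ0.le
  have hηin : ∀ x ∈ ball (0:E) (1 - δ), η x = 1 := by
    intro x hx
    have : ‖x‖ < 1 - δ := by simpa using hx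
    have : 1 ≤ (1 - ‖x‖) / δ := by rw [le_div_iff₀ hδ0]; linarith
    simp [η, min_eq_left this]
  let u : E → E := fun x => η x • (φ x - x)
  have hw : ∀ x y, ‖(φ x - x) - (φ y - y)‖ ≤ (K + 1) * ‖x - y‖ := by
    intro x y
    have h1 := hφ.norm_sub_le x y
    calc ‖(φ x - x) - (φ y - y)‖ = ‖(φ x - φ y) - (x - y)‖ := by congr 1; abel
      _ ≤ ‖φ x - φ y‖ + ‖x - y‖ := norm_sub_le _ _
      _ ≤ _ := by linarith
  have hu1 : ∀ x y, y ∈ ball (0:E) 1 → ‖u x - u y‖ ≤ (K + 1 + 1) * ‖x - y‖ := by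
    intro x y hy
    have : u x - u y = η x • ((φ x - x) - (φ y - y)) + (η x - η y) • (φ y - y) := by
      simp only [u, smul_sub, sub_smul]; abel
    rw [this]
    refine (norm_add_le _ _).trans ?_
    rw [norm_smul, norm_smul, Real.norm_eq_abs, Real.norm_eq_abs, abs_of_nonneg (hη0 x)]
    have a1 : η x * ‖(φ x - x) - (φ y - y)‖ ≤ 1 * ((K + 1) * ‖x - y‖) :=
      mul_le_mul (hη1 x) (hw x y) (norm_nonneg _) zero_le_one
    have a2 : |η x - η y| * ‖φ y - y‖ ≤ (‖x - y‖ / δ) * δ :=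
      mul_le_mul (hηL x y) (hclose y hy) (norm_nonneg _) (by positivity)
    rw [div_mul_cancel₀ _ hδ0.ne'] at a2
    linarith
  have hu0 : ∀ x, x ∉ ball (0:E) 1 → u x = 0 := fun x hx => by simp [u, hηout x hx]
  have hu : LipschitzWith (K + 1 + 1) u := by
    apply LipschitzWith.of_dist_le_mul
    intro x y
    rw [dist_eq_norm, dist_eq_norm]
    push_cast
    by_cases hy : y ∈ ball (0:E) 1
    · exact hu1 x y hy
    by_cases hx : x ∈ ball (0:E) 1
    · rw [norm_sub_rev, norm_sub_rev x]; exact hu1 y x hx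
    · rw [hu0 x hx, hu0 y hy, sub_zero, norm_zero]; positivity
  have harea := area_any hu hu0
  have hsub : ball (0:E) (1 - δ) ⊆ ball 0 1 := ball_subset_ball (by linarith)
  have hint : IntegrableOn (fun x => (1 + fderiv ℝ u x).det) (ball (0:E) 1) := by
    have := int_det hu 1
    simpa only [one_smul] using this
  have hzero : ∫ x in ball (0:E) (1 - δ), (1 + fderiv ℝ u x).det = 0 := by
    apply setIntegral_eq_zero_of_ae_eq_zero
    filter_upwards [hdet, hφ.ae_differentiableAt] with x hx hxd hxb
    have hev : u =ᶠ[nhds x] fun x => φ x - x := by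
      filter_upwards [isOpen_ball.mem_nhds hxb] with y hy
      simp [u, hηin y hy]
    rw [hev.fderiv_eq, fderiv_fun_sub hxd differentiableAt_fun_id]
    have : (1 : E →L[ℝ] E) + (fderiv ℝ φ x - fderiv ℝ (fun x : E => x) x) = fderiv ℝ φ x := by
      rw [fderiv_fun_id]
      ext1 z; simp
    rw [this]
    exact hx (hsub hxb)
  have hdiff := integral_inter_add_sdiff (μ := volume) (s := ball (0:E) 1) (t := ball (0:E) (1-δ)) measurableSet_ball hint
  rw [inter_eq_self_of_subset_right hsub, hzero, zero_add, harea] at hdiff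
  have hb : ‖∫ x in ball (0:E) 1 \ ball (0:E) (1-δ), (1 + fderiv ℝ u x).det‖ ≤
      C * volume.real (ball (0:E) 1 \ ball (0:E) (1-δ)) := by
    apply norm_setIntegral_le_of_norm_le_const
    · exact (measure_mono sdiff_subset).trans_lt measure_ball_lt_top
    · intro x _
      apply hC
      refine (norm_add_le _ _).trans (add_le_add ContinuousLinearMap.norm_id_le ?_)
      exact_mod_cast norm_fderiv_le_of_lipschitz ℝ hu
  rw [hdiff, measureReal_sdiff hsub measurableSet_ball] at hb
  have hvol : volume.real (ball (0:E) (1 - δ)) = (1 - δ) ^ d * volume.real (ball (0:E) 1) := by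
    have hp : 0 < 1 - δ := by linarith
    simp only [Measure.real]
    rw [Measure.addHaar_ball_of_pos volume (0:E) hp, ENNReal.toReal_mul, ENNReal.toReal_ofReal (by positivity)]
    simp [E]
  have hpos : 0 < volume.real (ball (0:E) 1) :=
    ENNReal.toReal_pos (measure_ball_pos volume _ one_pos).ne' measure_ball_lt_top.ne
  rw [hvol, Real.norm_eq_abs, abs_of_pos hpos] at hb
  nlinarith

lemma lin_alg {n k r : ℕ} (L : EuclideanSpace ℝ (Fin n) →L[ℝ] EuclideanSpace ℝ (Fin k))
    (hL : r < Module.finrank ℝ (LinearMap.range (L : EuclideanSpace ℝ (Fin n) →ₗ[ℝ] EuclideanSpace ℝ (Fin k)))) :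
    ∃ (A : EuclideanSpace ℝ (Fin (r+1)) →L[ℝ] EuclideanSpace ℝ (Fin n))
      (P : EuclideanSpace ℝ (Fin k) →L[ℝ] EuclideanSpace ℝ (Fin (r+1))), ∀ t, P (L (A t)) = t := by
  let R := LinearMap.range (L : EuclideanSpace ℝ (Fin n) →ₗ[ℝ] EuclideanSpace ℝ (Fin k))
  let b := Module.finBasis ℝ R
  let w : Fin (r+1) → R := fun i => b (Fin.castLE hL i)
  have hw : LinearIndependent ℝ w := b.linearIndependent.comp _ (Fin.castLE_injective hL)
  choose a ha using fun i => (w i).2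
  have hw' : LinearIndependent ℝ (fun i => (w i : EuclideanSpace ℝ (Fin k))) :=
    hw.map' R.subtype (Submodule.ker_subtype _)
  let e := (EuclideanSpace.basisFun (Fin (r+1)) ℝ).toBasis
  let A : EuclideanSpace ℝ (Fin (r+1)) →ₗ[ℝ] EuclideanSpace ℝ (Fin n) := e.constr ℝ a
  let LA := (L : EuclideanSpace ℝ (Fin n) →ₗ[ℝ] EuclideanSpace ℝ (Fin k)) ∘ₗ A
  have hLA : LA = e.constr ℝ (fun i => (w i : EuclideanSpace ℝ (Fin k))) := by
    apply e.ext
    intro i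
    simp only [LA, A, LinearMap.comp_apply, Module.Basis.constr_basis]
    exact ha i
  have hker : LinearMap.ker LA = ⊥ := by
    rw [hLA]
    exact LinearMap.ker_eq_bot.2 ((e.injective_constr_of_linearIndependent hw'))
  obtain ⟨P, hP⟩ := LA.exists_leftInverse_of_injective hker
  refine ⟨LinearMap.toContinuousLinearMap A, LinearMap.toContinuousLinearMap P, fun t => ?_⟩
  exact LinearMap.congr_fun hP t

lemma det_zero_of_factor {d m k r : ℕ} (hd : r < d)
    (Q : EuclideanSpace ℝ (Fin k) →L[ℝ] EuclideanSpace ℝ (Fin d))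
    (f' : EuclideanSpace ℝ (Fin m) →L[ℝ] EuclideanSpace ℝ (Fin k))
    (G' : EuclideanSpace ℝ (Fin d) →L[ℝ] EuclideanSpace ℝ (Fin m))
    (hf' : Module.finrank ℝ (LinearMap.range
      (f' : EuclideanSpace ℝ (Fin m) →ₗ[ℝ] EuclideanSpace ℝ (Fin k))) ≤ r) :
    (Q.comp (f'.comp G')).det = 0 := by
  by_contra hne
  let T := ((Q.comp (f'.comp G') : EuclideanSpace ℝ (Fin d) →L[ℝ] EuclideanSpace ℝ (Fin d)) :
    EuclideanSpace ℝ (Fin d) →ₗ[ℝ] EuclideanSpace ℝ (Fin d))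
  have hT : LinearMap.det T ≠ 0 := hne
  have hsurj : LinearMap.range T = ⊤ := by
    rw [LinearMap.range_eq_top]
    exact (LinearMap.equivOfDetNeZero T hT).surjective
  have hle : LinearMap.range T ≤ (LinearMap.range
      (f' : EuclideanSpace ℝ (Fin m) →ₗ[ℝ] EuclideanSpace ℝ (Fin k))).map
      (Q : EuclideanSpace ℝ (Fin k) →ₗ[ℝ] EuclideanSpace ℝ (Fin d)) := by
    rintro _ ⟨t, rfl⟩
    exact ⟨f' (G' t), ⟨G' t, rfl⟩, rfl⟩
  have h1 := Submodule.finrank_mono hle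
  have h2 := Submodule.finrank_map_le
    (Q : EuclideanSpace ℝ (Fin k) →ₗ[ℝ] EuclideanSpace ℝ (Fin d)) (LinearMap.range
      (f' : EuclideanSpace ℝ (Fin m) →ₗ[ℝ] EuclideanSpace ℝ (Fin k)))
  rw [hsurj, finrank_top, finrank_euclideanSpace_fin] at h1
  omega

lemma fubini_shift {d m : ℕ} {G : EuclideanSpace ℝ (Fin d) → EuclideanSpace ℝ (Fin m)}
    (hG : Continuous G) {p : EuclideanSpace ℝ (Fin m) → Prop} (hp : ∀ᵐ y, p y) :
    ∀ᵐ v : EuclideanSpace ℝ (Fin m), ∀ᵐ t : EuclideanSpace ℝ (Fin d), p (G t + v) := by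
  let N : Set (EuclideanSpace ℝ (Fin m)) := toMeasurable volume {y | ¬ p y}
  have hN : MeasurableSet N := measurableSet_toMeasurable _ _
  have hN0 : volume N = 0 := by rw [measure_toMeasurable]; exact hp
  have hmeas : MeasurableSet {x : EuclideanSpace ℝ (Fin d) × EuclideanSpace ℝ (Fin m) |
      G x.1 + x.2 ∉ N} := by
    have : Continuous (fun x : EuclideanSpace ℝ (Fin d) × EuclideanSpace ℝ (Fin m) =>
      G x.1 + x.2) := by fun_prop
    exact this.measurable hN.compl
  have h1 : ∀ᵐ t : EuclideanSpace ℝ (Fin d), ∀ᵐ v : EuclideanSpace ℝ (Fin m), G t + v ∉ N := by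
    filter_upwards with t
    have : volume ((fun v => G t + v) ⁻¹' N) = 0 := by
      rw [measure_preimage_add]; exact hN0
    rw [ae_iff]
    simpa [Set.preimage] using this
  have h2 := (Measure.ae_ae_comm (p := fun t v => G t + v ∉ N) hmeas).1 h1
  filter_upwards [h2] with v hv
  filter_upwards [hv] with t ht
  by_contra hcon
  exact ht (subset_toMeasurable _ _ hcon)

lemma core {n m k r : ℕ} (U : Set (EuclideanSpace ℝ (Fin m))) (hU : IsOpen U)
    (g : EuclideanSpace ℝ (Fin n) → EuclideanSpace ℝ (Fin m))
    (f : EuclideanSpace ℝ (Fin m) → EuclideanSpace ℝ (Fin k))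
    (Kg Kf : ℝ≥0) (hg : LipschitzWith Kg g) (hf : LipschitzWith Kf f)
    (hrank : ∀ᵐ y ∂(volume : Measure (EuclideanSpace ℝ (Fin m))), y ∈ U →
      derivRank f y ≤ r) (x₀ : EuclideanSpace ℝ (Fin n)) (hx₀ : g x₀ ∈ U) :
    derivRank (f ∘ g) x₀ ≤ r := by
  by_cases hdiff : DifferentiableAt ℝ (f ∘ g) x₀
  swap
  · simp only [derivRank]
    rw [fderiv_zero_of_not_differentiableAt hdiff]
    have : ((0 : EuclideanSpace ℝ (Fin n) →L[ℝ] EuclideanSpace ℝ (Fin k)) :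
      EuclideanSpace ℝ (Fin n) →ₗ[ℝ] EuclideanSpace ℝ (Fin k)) = 0 := rfl
    rw [this, LinearMap.range_zero, finrank_bot]
    exact Nat.zero_le _
  by_contra hcon
  push Not at hcon
  obtain ⟨A, P, hAP⟩ := lin_alg _ hcon
  set L := fderiv ℝ (f ∘ g) x₀ with hLdef
  let D := EuclideanSpace ℝ (Fin (r+1))
  obtain ⟨ε, hε, hkey⟩ := key (d := r+1) (‖P‖₊ * Kf * Kg * ‖A‖₊)
  obtain ⟨σ, hσ, hσU⟩ := Metric.isOpen_iff.1 hU _ hx₀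
  let ε' := ε / (2 * (‖P‖ + 1) * (‖A‖ + 1))
  have hε' : 0 < ε' := by positivity
  have hlin := (hasFDerivAt_iff_isLittleO.1 hdiff.hasFDerivAt).def hε'
  obtain ⟨τ, hτ, hτL⟩ := Metric.eventually_nhds_iff.1 hlin
  -- choose the scale
  obtain ⟨ρ, hρ, hρτ, hρσ⟩ : ∃ ρ : ℝ, 0 < ρ ∧ ρ * ‖A‖ < τ ∧ Kg * (ρ * ‖A‖) < σ / 2 := by
    have h1 : ∀ᶠ ρ in nhdsWithin (0:ℝ) (Ioi 0), ρ * ‖A‖ < τ := by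
      apply Filter.Eventually.filter_mono nhdsWithin_le_nhds
      apply ContinuousAt.eventually_lt (by fun_prop) continuousAt_const
      simpa
    have h2 : ∀ᶠ ρ in nhdsWithin (0:ℝ) (Ioi 0), Kg * (ρ * ‖A‖) < σ / 2 := by
      apply Filter.Eventually.filter_mono nhdsWithin_le_nhds
      apply ContinuousAt.eventually_lt (by fun_prop) continuousAt_const
      simpa
    obtain ⟨ρ, ⟨ha, hb⟩, hc⟩ := ((h1.and h2).and self_mem_nhdsWithin).exists
    exact ⟨ρ, hc, ha, hb⟩
  let G : D → EuclideanSpace ℝ (Fin m) := fun t => g (x₀ + ρ • A t)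
  have hGL : ∀ t s, ‖G t - G s‖ ≤ Kg * (ρ * (‖A‖ * ‖t - s‖)) := by
    intro t s
    refine (hg.norm_sub_le _ _).trans ?_
    gcongr
    rw [add_sub_add_left_eq_sub, ← smul_sub, ← map_sub, norm_smul, Real.norm_eq_abs, abs_of_pos hρ]
    gcongr
    exact A.le_opNorm _
  have hGlip : LipschitzWith (Kg * (ρ.toNNReal * ‖A‖₊)) G := by
    apply LipschitzWith.of_dist_le_mul
    intro t s
    rw [dist_eq_norm, dist_eq_norm]
    refine (hGL t s).trans (le_of_eq ?_)
    push_cast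
    rw [Real.coe_toNNReal ρ hρ.le]
    ring
  have hp : ∀ᵐ y : EuclideanSpace ℝ (Fin m), y ∈ U → DifferentiableAt ℝ f y ∧ derivRank f y ≤ r := by
    filter_upwards [hrank, hf.ae_differentiableAt] with y h1 h2 h3
    exact ⟨h2, h1 h3⟩
  have hshift := fubini_shift hGlip.continuous hp
  -- choose the shift
  let β := min (σ / 2) (ρ * ε / (2 * (‖P‖ + 1) * (Kf + 1)))
  have hβ : 0 < β := by
    have : 0 < ρ * ε / (2 * (‖P‖ + 1) * (Kf + 1)) := by positivity
    exact lt_min (by positivity) this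
  obtain ⟨v, hv, hvβ⟩ := (Measure.dense_of_ae hshift).exists_mem_open isOpen_ball
    ⟨(0 : EuclideanSpace ℝ (Fin m)), mem_ball_self hβ⟩
  have hvn : ‖v‖ < β := by simpa using hvβ
  have hGU : ∀ t ∈ ball (0 : D) 1, G t + v ∈ U := by
    intro t ht
    apply hσU
    have ht' : ‖t‖ < 1 := by simpa using ht
    have h1 := hGL t 0
    have hG0 : G 0 = g x₀ := by simp [G]
    rw [hG0, sub_zero] at h1
    have h2 : Kg * (ρ * (‖A‖ * ‖t‖)) ≤ Kg * (ρ * ‖A‖) := by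
      gcongr
      exact mul_le_of_le_one_right (norm_nonneg _) ht'.le
    have h3 : ‖v‖ < σ / 2 := hvn.trans_le (min_le_left _ _)
    rw [mem_ball, dist_eq_norm]
    calc ‖G t + v - g x₀‖ = ‖(G t - g x₀) + v‖ := by congr 1; abel
      _ ≤ ‖G t - g x₀‖ + ‖v‖ := norm_add_le _ _
      _ < σ := by linarith
  let φ : D → D := fun t => ρ⁻¹ • P (f (G t + v) - f (g x₀))
  apply hkey φ
  · apply LipschitzWith.of_dist_le_mul
    intro t s
    rw [dist_eq_norm, dist_eq_norm]
    have h0 : φ t - φ s = ρ⁻¹ • P (f (G t + v) - f (G s + v)) := by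
      simp only [φ, ← smul_sub, ← map_sub, sub_sub_sub_cancel_right]
    rw [h0, norm_smul, Real.norm_eq_abs, abs_of_pos (inv_pos.2 hρ)]
    have h1 : ‖f (G t + v) - f (G s + v)‖ ≤ Kf * (Kg * (ρ * (‖A‖ * ‖t - s‖))) := by
      refine (hf.norm_sub_le _ _).trans ?_
      rw [add_sub_add_right_eq_sub]
      gcongr
      exact hGL t s
    calc ρ⁻¹ * ‖P (f (G t + v) - f (G s + v))‖
        ≤ ρ⁻¹ * (‖P‖ * (Kf * (Kg * (ρ * (‖A‖ * ‖t - s‖))))) := by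
          gcongr
          exact (P.le_opNorm _).trans (by gcongr)
      _ = _ := by
          push_cast
          field_simp
  · intro t ht
    have ht' : ‖t‖ < 1 := by simpa using ht
    have hAt : ‖ρ • A t‖ ≤ ρ * ‖A‖ := by
      rw [norm_smul, Real.norm_eq_abs, abs_of_pos hρ]
      gcongr
      exact (A.le_opNorm t).trans (mul_le_of_le_one_right (norm_nonneg _) ht'.le)
    have h1 : ‖f (G t) - f (g x₀) - L (ρ • A t)‖ ≤ ε' * (ρ * ‖A‖) := by
      have := hτL (y := x₀ + ρ • A t) (by
        rw [dist_eq_norm, add_sub_cancel_left]; exact hAt.trans_lt hρτ)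
      simp only [Function.comp, add_sub_cancel_left] at this
      refine this.trans ?_
      gcongr
    have h2 : ‖f (G t + v) - f (G t)‖ ≤ Kf * ‖v‖ := by
      have := hf.norm_sub_le (G t + v) (G t)
      rwa [add_sub_cancel_left] at this
    have h3 : φ t - t = ρ⁻¹ • P ((f (G t + v) - f (G t)) + (f (G t) - f (g x₀) - L (ρ • A t))) := by
      have e1 : (f (G t + v) - f (G t)) + (f (G t) - f (g x₀) - L (ρ • A t)) =
        (f (G t + v) - f (g x₀)) - L (ρ • A t) := by abel
      rw [e1, map_sub P, smul_sub, map_smul, map_smul, hAP, smul_smul, inv_mul_cancel₀ hρ.ne', one_smul]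
    rw [h3, norm_smul, Real.norm_eq_abs, abs_of_pos (inv_pos.2 hρ)]
    have h4 : Kf * ‖v‖ ≤ ρ * ε / (2 * (‖P‖ + 1)) := by
      have : ‖v‖ ≤ ρ * ε / (2 * (‖P‖ + 1) * (Kf + 1)) := hvn.le.trans (min_le_right _ _)
      rw [le_div_iff₀ (by positivity)] at this ⊢
      have h0 : 0 ≤ ‖v‖ * (2 * (‖P‖ + 1)) := by positivity
      nlinarith
    have h5 : ε' * (ρ * ‖A‖) ≤ ρ * ε / (2 * (‖P‖ + 1)) := by
      have : ε' * (‖A‖ + 1) = ε / (2 * (‖P‖ + 1)) := by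
        simp only [ε']; field_simp
      calc ε' * (ρ * ‖A‖) ≤ ε' * (ρ * (‖A‖ + 1)) := by gcongr; linarith
        _ = ρ * (ε' * (‖A‖ + 1)) := by ring
        _ = _ := by rw [this]; ring
    have h6 : ‖(f (G t + v) - f (G t)) + (f (G t) - f (g x₀) - L (ρ • A t))‖ ≤ ρ * ε / (‖P‖ + 1) := by
      refine (norm_add_le _ _).trans ((add_le_add (h2.trans h4) (h1.trans h5)).trans (le_of_eq ?_))
      field_simp; ring
    calc ρ⁻¹ * ‖P ((f (G t + v) - f (G t)) + (f (G t) - f (g x₀) - L (ρ • A t)))‖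
        ≤ ρ⁻¹ * ((‖P‖ + 1) * (ρ * ε / (‖P‖ + 1))) := by
          gcongr
          refine (P.le_opNorm _).trans ?_
          gcongr
          linarith
      _ = ε := by
          have : ‖P‖ + 1 ≠ 0 := by positivity
          field_simp
  · filter_upwards [hv, hGlip.ae_differentiableAt] with t ht htd htb
    obtain ⟨hfd, hfr⟩ := ht (hGU t htb)
    have hd : HasFDerivAt φ ((ρ⁻¹ • P).comp ((fderiv ℝ f (G t + v)).comp (fderiv ℝ G t))) t := by
      have a1 : HasFDerivAt (fun t => G t + v) (fderiv ℝ G t) t := htd.hasFDerivAt.add_const v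
      have a2 := (hfd.hasFDerivAt.comp t a1).sub_const (f (g x₀))
      exact ((ρ⁻¹ • P).hasFDerivAt.comp t a2)
    rw [hd.fderiv]
    exact det_zero_of_factor (Nat.lt_succ_self r) _ _ _ hfr

/-- If `g : Ω → U` and `f : U → ℝᵏ` are Lipschitz and `rank Df ≤ r` a.e. in `U`, then
`rank D(f∘g) ≤ r` a.e. in `Ω`. -/
theorem ae_rank_comp_le {n m k r : ℕ}
    (Ω : Set (EuclideanSpace ℝ (Fin n))) (U : Set (EuclideanSpace ℝ (Fin m)))
    (hΩ : IsOpen Ω) (hU : IsOpen U)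
    (g : EuclideanSpace ℝ (Fin n) → EuclideanSpace ℝ (Fin m))
    (f : EuclideanSpace ℝ (Fin m) → EuclideanSpace ℝ (Fin k))
    (Kg Kf : ℝ≥0) (hg : LipschitzOnWith Kg g Ω) (hgU : ∀ x ∈ Ω, g x ∈ U)
    (hf : LipschitzOnWith Kf f U)
    (hrank : ∀ᵐ y ∂(volume : Measure (EuclideanSpace ℝ (Fin m))), y ∈ U →
      derivRank f y ≤ r) :
    ∀ᵐ x ∂(volume : Measure (EuclideanSpace ℝ (Fin n))), x ∈ Ω →
      derivRank (f ∘ g) x ≤ r := by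
  obtain ⟨g', hg', hgg⟩ := hg.extend_finite_dimension
  obtain ⟨f', hf', hff⟩ := hf.extend_finite_dimension
  have hrank' : ∀ᵐ y ∂(volume : Measure (EuclideanSpace ℝ (Fin m))), y ∈ U →
      derivRank f' y ≤ r := by
    filter_upwards [hrank] with y hy hyU
    have hev : f' =ᶠ[nhds y] f := by
      filter_upwards [hU.mem_nhds hyU] with z hz using (hff hz).symm
    have := hy hyU
    simp only [derivRank] at this ⊢
    rwa [hev.fderiv_eq]
  filter_upwards with x hx
  have := core U hU g' f' _ _ hg' hf' hrank' x (by rw [← hgg hx]; exact hgU x hx)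
  have hev : f ∘ g =ᶠ[nhds x] f' ∘ g' := by
    filter_upwards [hΩ.mem_nhds hx] with z hz
    simp only [Function.comp]
    rw [← hgg hz, hff (hgU z hz)]
  simp only [derivRank] at this ⊢
  rwa [hev.fderiv_eq]
end
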